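/- Let T be a contraction on a complex Hilbert space H. Then for every x ∈ H, the averages along the primes (1/n)∑_{j=1}^n T^{p_j} x converge in norm; moreover the limit equals lim_{N→∞} (1/N)∑_{j=1}^{π(N)} (log p_j) T^{p_j} x = lim_{N→∞} (1/N)∑_{k=1}^N Λ(k) T^k x, and this limit is 0 whenever x is a flight vector of T. -/

import Mathlib

namespace PNT
open Filter MeasureTheory Topology Set

/-- Fejer-type kernel. -/
noncomputable def K (l w : ℝ) : ℝ := if w = 0 then l else 2 * (1 - Real.cos (l * w)) / (l * w ^ 2)

lemma K_nonneg {l : ℝ} (hl : 0 < l) (w : ℝ) : 0 ≤ K l w := by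
  unfold K
  split_ifs with h
  · exact hl.le
  · have := Real.cos_le_one (l * w)
    apply div_nonneg <;> nlinarith [sq_nonneg w]

lemma K_le_tail {l : ℝ} (hl : 0 < l) {w : ℝ} (hw : w ≠ 0) : K l w ≤ 4 / (l * w ^ 2) := by
  unfold K
  rw [if_neg hw]
  have := Real.neg_one_le_cos (l * w)
  have : 0 < w ^ 2 := by positivity
  gcongr
  linarith

lemma K_le_l {l : ℝ} (hl : 0 < l) (w : ℝ) : K l w ≤ l := by
  unfold K
  split_ifs with h
  · exact le_rfl
  · have h2 : 0 < w ^ 2 := by positivity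
    rw [div_le_iff₀ (by positivity)]
    have := Real.one_sub_sq_div_two_le_cos (x := l * w)
    nlinarith

lemma K_ge {l : ℝ} (hl : 0 < l) {w : ℝ} (hw : |w| ≤ 1 / l) : (2 / 5) * l ≤ K l w := by
  unfold K
  split_ifs with h
  · linarith
  · have h2 : 0 < w ^ 2 := by positivity
    rw [le_div_iff₀ (by positivity)]
    have h3 : |l * w| ≤ 1 := by
      rw [abs_mul, abs_of_pos hl]
      rw [le_div_iff₀ hl] at hw; linarith
    have hpi := Real.pi_gt_three
    have := Real.cos_le_one_sub_mul_cos_sq (x := l * w) (by linarith)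
    have h4 : 2 / Real.pi ^ 2 ≥ 1 / 5 := by
      rw [ge_iff_le, div_le_div_iff₀ (by norm_num) (by positivity)]
      nlinarith [Real.pi_lt_d2]
    nlinarith [mul_le_mul_of_nonneg_right h4 (sq_nonneg (l*w))]

lemma K_le_cauchy {l : ℝ} (hl : 0 < l) (w : ℝ) : K l w ≤ (l + 4 / l) * (1 + w ^ 2)⁻¹ := by
  have h1 : 0 < 1 + w ^ 2 := by positivity
  rw [← div_eq_mul_inv, le_div_iff₀ h1]
  by_cases h : w = 0
  · subst h; simp [K]; positivity
  · have h2 : 0 < w ^ 2 := by positivity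
    have := K_le_l hl w
    have h3 := K_le_tail hl h
    have h4 : K l w * w ^ 2 ≤ 4 / l := by
      calc _ ≤ 4 / (l * w ^ 2) * w ^ 2 := by gcongr
        _ = _ := by field_simp
    nlinarith

lemma K_measurable (l : ℝ) : Measurable (K l) := by
  unfold K
  apply Measurable.ite (measurableSet_eq) <;> fun_prop

lemma K_fourier {l : ℝ} (hl : 0 < l) (w : ℝ) :
    ∫ t in (-l)..l, ((1 - |t| / l : ℝ) : ℂ) * Complex.exp (Complex.I * t * w) = (K l w : ℂ) := by
  have hl' : (l:ℂ) ≠ 0 := by exact_mod_cast hl.ne'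
  have hc : Continuous fun t : ℝ => ((1 - |t| / l : ℝ) : ℂ) * Complex.exp (Complex.I * t * w) := by
    fun_prop
  rw [← intervalIntegral.integral_add_adjacent_intervals (hc.intervalIntegrable _ 0)
    (hc.intervalIntegrable 0 _)]
  have e1 : ∫ t in (-l)..0, ((1 - |t| / l : ℝ) : ℂ) * Complex.exp (Complex.I * t * w)
      = ∫ t in (-l)..0, (1 + (t:ℂ) / l) * Complex.exp (Complex.I * t * w) := by
    apply intervalIntegral.integral_congr
    intro t ht
    rw [uIcc_of_le (by linarith)] at ht
    simp only []
    rw [abs_of_nonpos ht.2]; push_cast; ring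
  have e2 : ∫ t in (0)..l, ((1 - |t| / l : ℝ) : ℂ) * Complex.exp (Complex.I * t * w)
      = ∫ t in (0)..l, (1 - (t:ℂ) / l) * Complex.exp (Complex.I * t * w) := by
    apply intervalIntegral.integral_congr
    intro t ht
    rw [uIcc_of_le (by linarith)] at ht
    simp only []
    rw [abs_of_nonneg ht.1]; push_cast; ring
  rw [e1, e2]
  by_cases h : w = 0
  · subst h
    simp only [K, if_true, Complex.ofReal_zero, mul_zero, Complex.exp_zero, mul_one]
    have d1 : ∀ t ∈ uIcc (-l) 0, HasDerivAt (fun t : ℝ => (t:ℂ) + (t:ℂ)^2 / (2 * l)) (1 + (t:ℂ) / l) t := by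
      intro t _
      have h1 : HasDerivAt (fun t : ℝ => (t:ℂ)) 1 t := Complex.ofRealCLM.hasDerivAt
      convert! h1.add ((h1.pow 2).div_const (2 * (l:ℂ))) using 1
      field_simp; simp; try ring
    have d2 : ∀ t ∈ uIcc 0 l, HasDerivAt (fun t : ℝ => (t:ℂ) - (t:ℂ)^2 / (2 * l)) (1 - (t:ℂ) / l) t := by
      intro t _
      have h1 : HasDerivAt (fun t : ℝ => (t:ℂ)) 1 t := Complex.ofRealCLM.hasDerivAt
      convert! h1.sub ((h1.pow 2).div_const (2 * (l:ℂ))) using 1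
      field_simp; simp; try ring
    rw [intervalIntegral.integral_eq_sub_of_hasDerivAt d1 (Continuous.intervalIntegrable (by fun_prop) _ _),
      intervalIntegral.integral_eq_sub_of_hasDerivAt d2 (Continuous.intervalIntegrable (by fun_prop) _ _)]
    push_cast; field_simp; ring
  · have hw' : (w:ℂ) ≠ 0 := by exact_mod_cast h
    have hI := Complex.I_ne_zero
    have hE : ∀ t : ℝ, HasDerivAt (fun t : ℝ => Complex.exp (Complex.I * t * w))
        (Complex.exp (Complex.I * t * w) * (Complex.I * w)) t := by
      intro t
      have h1 : HasDerivAt (fun t : ℝ => (t:ℂ)) 1 t := Complex.ofRealCLM.hasDerivAt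
      have h2 := ((h1.const_mul Complex.I).mul_const (w:ℂ)).cexp
      simpa using h2
    have d1 : ∀ t ∈ uIcc (-l) 0, HasDerivAt (fun t : ℝ => (1 + (t:ℂ) / l) * Complex.exp (Complex.I * t * w) * (1/ (Complex.I * w)) - Complex.exp (Complex.I * t * w) * (1/ (l * (Complex.I * w)^2))) ((1 + (t:ℂ) / l) * Complex.exp (Complex.I * t * w)) t := by
      intro t _
      have h1 : HasDerivAt (fun t : ℝ => (t:ℂ)) 1 t := Complex.ofRealCLM.hasDerivAt
      convert! ((((h1.div_const (l:ℂ)).const_add 1).mul (hE t)).mul_const (1/ (Complex.I * w))).sub ((hE t).mul_const (1/ (l * (Complex.I * w)^2))) using 1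
      field_simp; ring
    have d2 : ∀ t ∈ uIcc 0 l, HasDerivAt (fun t : ℝ => (1 - (t:ℂ) / l) * Complex.exp (Complex.I * t * w) * (1/ (Complex.I * w)) + Complex.exp (Complex.I * t * w) * (1/ (l * (Complex.I * w)^2))) ((1 - (t:ℂ) / l) * Complex.exp (Complex.I * t * w)) t := by
      intro t _
      have h1 : HasDerivAt (fun t : ℝ => (t:ℂ)) 1 t := Complex.ofRealCLM.hasDerivAt
      convert! ((((h1.div_const (l:ℂ)).const_sub 1).mul (hE t)).mul_const (1/ (Complex.I * w))).add ((hE t).mul_const (1/ (l * (Complex.I * w)^2))) using 1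
      field_simp; ring
    rw [intervalIntegral.integral_eq_sub_of_hasDerivAt d1 (Continuous.intervalIntegrable (by fun_prop) _ _),
      intervalIntegral.integral_eq_sub_of_hasDerivAt d2 (Continuous.intervalIntegrable (by fun_prop) _ _)]
    simp only [K, if_neg h]
    push_cast
    rw [Complex.cos]
    have x1 : Complex.exp (Complex.I * (-l) * w) = Complex.exp (-((l:ℂ) * w) * Complex.I) := by
      congr 1; ring
    have x2 : Complex.exp (Complex.I * (l) * w) = Complex.exp (((l:ℂ) * w) * Complex.I) := by
      congr 1; ring
    rw [x1, x2]
    simp only [mul_zero, zero_mul, Complex.exp_zero]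
    field_simp
    rw [Complex.I_sq]
    ring

/-- lower bound lemma -/
lemma lower_bound {D : ℝ → ℝ} (hD : Measurable D) {C δ c l v : ℝ} (hl : 0 < l) (hc : 0 < c)
    (hC : ∀ u, |D u| ≤ C) (hδ : 0 ≤ δ) (hlc : 1 / l ≤ c) (hv : c < v)
    (hDv : ∀ u, |u - v| ≤ c → δ ≤ D u) :
    (4 / 5) * δ - C * (4 / l * (1 + 1 / c ^ 2)) * Real.pi ≤ ∫ u in Ioi 0, D u * K l (v - u) := by
  have hC0 : 0 ≤ C := (abs_nonneg _).trans (hC 0)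
  set E := C * (4 / l * (1 + 1 / c ^ 2)) with hE
  have hE0 : 0 ≤ E := by positivity
  have hint2 : Integrable (fun u : ℝ => E * (1 + (v - u) ^ 2)⁻¹) :=
    ((integrable_inv_one_add_sq.comp_sub_left v)).const_mul E
  have hint1 : IntegrableOn (fun u : ℝ => (Icc (v - 1/l) (v + 1/l)).indicator (fun _ => δ * (2 / 5 * l)) u) (Ioi 0) := by
    apply Integrable.integrableOn
    exact (integrable_indicator_iff measurableSet_Icc).2 (integrableOn_const (by simp))
  have hint3 : IntegrableOn (fun u => D u * K l (v - u)) (Ioi 0) := by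
    apply Integrable.integrableOn
    have hi : Integrable (fun u : ℝ => C * ((l + 4 / l) * (1 + (v - u) ^ 2)⁻¹)) :=
      ((integrable_inv_one_add_sq.comp_sub_left v).const_mul _).const_mul C
    refine hi.mono' ?_ ?_
    · have := (K_measurable l)
      exact (hD.mul (this.comp (measurable_const.sub measurable_id))).aestronglyMeasurable
    · refine Eventually.of_forall fun u => ?_
      rw [Real.norm_eq_abs, abs_mul, abs_of_nonneg (K_nonneg hl _)]
      exact mul_le_mul (hC u) (K_le_cauchy hl _) (K_nonneg hl _) hC0
  have key : ∫ u in Ioi 0, ((Icc (v - 1/l) (v + 1/l)).indicator (fun _ => δ * (2 / 5 * l)) u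
      - E * (1 + (v - u) ^ 2)⁻¹) ≤ ∫ u in Ioi 0, D u * K l (v - u) := by
    refine setIntegral_mono (hint1.sub hint2.integrableOn) hint3 ?_
    intro u
    simp only [indicator, mem_Icc]
    have p1 : 0 < (1 + (v - u) ^ 2)⁻¹ := by positivity
    have hK := K_nonneg hl (v - u)
    by_cases h : |u - v| ≤ c
    · have hDu := hDv u h
      split_ifs with h2
      · have h3 : |v - u| ≤ 1 / l := by rw [abs_le]; constructor <;> linarith [h2.1, h2.2]
        have := K_ge hl h3
        have : δ * (2 / 5 * l) ≤ D u * K l (v - u) := mul_le_mul hDu this (by positivity) (hδ.trans hDu)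
        nlinarith
      · have : 0 ≤ D u * K l (v - u) := mul_nonneg (hδ.trans hDu) hK
        nlinarith
    · have h2 : ¬ (v - 1 / l ≤ u ∧ u ≤ v + 1 / l) := by
        rintro ⟨a, b⟩
        exact h (by rw [abs_le]; constructor <;> linarith)
      rw [if_neg h2]
      push Not at h
      have hne : v - u ≠ 0 := by
        intro h0; have : u - v = 0 := by linarith
        rw [this] at h; simp at h; linarith
      have hsq : c ^ 2 ≤ (v - u) ^ 2 := by
        rw [← sq_abs (v - u), abs_sub_comm]; gcongr
      have hsq' : 0 < (v - u) ^ 2 := by positivity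
      have t1 : K l (v - u) ≤ (4 / l * (1 + 1 / c ^ 2)) * (1 + (v - u) ^ 2)⁻¹ := by
        refine (K_le_tail hl hne).trans ?_
        rw [← div_eq_mul_inv, le_div_iff₀ (by positivity), div_mul_eq_mul_div, div_le_iff₀ (by positivity)]
        have : (4 / l * (1 + 1 / c ^ 2)) * (l * (v - u) ^ 2) = 4 * ((v - u)^2 + (v-u)^2 / c^2) := by
          field_simp
        rw [this]
        have : 1 ≤ (v - u) ^ 2 / c ^ 2 := by rw [le_div_iff₀ (by positivity)]; linarith
        linarith
      have t2 : -(C * K l (v - u)) ≤ D u * K l (v - u) := by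
        have := (abs_le.1 (hC u)).1
        nlinarith
      have t3 : C * K l (v - u) ≤ E * (1 + (v - u) ^ 2)⁻¹ := by
        rw [hE, mul_assoc]
        exact mul_le_mul_of_nonneg_left t1 hC0
      linarith
  refine le_trans ?_ key
  rw [integral_sub hint1 hint2.integrableOn]
  have i1 : ∫ u in Ioi 0, (Icc (v - 1/l) (v + 1/l)).indicator (fun _ => δ * (2 / 5 * l)) u = (4/5) * δ := by
    rw [setIntegral_indicator measurableSet_Icc, inter_eq_right.2]
    · simp [Real.volume_real_Icc]
      rw [max_eq_left (by positivity)]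
      field_simp; ring
    · intro u hu
      have := hu.1
      simp only [mem_Ioi]; linarith
  have i2 : ∫ u in Ioi 0, E * (1 + (v - u) ^ 2)⁻¹ ≤ E * Real.pi := by
    calc _ ≤ ∫ u, E * (1 + (v - u) ^ 2)⁻¹ := by
          refine setIntegral_le_integral hint2 (Eventually.of_forall fun u => ?_)
          show 0 ≤ E * (1 + (v - u) ^ 2)⁻¹
          positivity
      _ = _ := by
          rw [integral_const_mul, integral_sub_left_eq_self (fun u : ℝ => (1 + u ^ 2)⁻¹), integral_univ_inv_one_add_sq]
  rw [i1]
  linarith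

end PNT

namespace PNT
open Filter MeasureTheory Topology Set

lemma WI_fubini {D : ℝ → ℝ} (hD : Measurable D) {C : ℝ} (hC : ∀ u, |D u| ≤ C) {l ε : ℝ} (hl : 0 < l) (hε : 0 < ε) (v : ℝ)
    {g : ℝ → ℂ} (hg : ∀ t : ℝ, ∫ u in Ioi (0:ℝ), (D u : ℂ) * Complex.exp (-(ε + Complex.I * t) * u) = g t) :
    ∫ t in (-l)..l, ((1 - |t| / l : ℝ) : ℂ) * Complex.exp (Complex.I * t * v) * g t
     = ∫ u in Ioi (0:ℝ), ((D u * Real.exp (-ε * u) * K l (v - u) : ℝ) : ℂ) := by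
  have hC0 : 0 ≤ C := (abs_nonneg _).trans (hC 0)
  have hpt : ∀ u : ℝ, ((D u * Real.exp (-ε * u) * K l (v - u) : ℝ) : ℂ)
      = ∫ t in (-l)..l, ((1 - |t| / l : ℝ) : ℂ) * Complex.exp (Complex.I * t * v) * ((D u : ℂ) * Complex.exp (-(ε + Complex.I * t) * u)) := by
    intro u
    push_cast
    rw [← K_fourier hl, ← intervalIntegral.integral_const_mul]
    apply intervalIntegral.integral_congr
    intro t _
    simp only
    push_cast
    rw [mul_comm (D u : ℂ) (Complex.exp _)]
    have : Complex.exp (-(ε + Complex.I * t) * u) = Complex.exp (-ε * u) * Complex.exp (-(Complex.I * t * u)) := by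
      rw [← Complex.exp_add]; congr 1; ring
    rw [this]
    have : Complex.exp (Complex.I * t * (v - u)) = Complex.exp (Complex.I * t * v) * Complex.exp (-(Complex.I * t * u)) := by
      rw [← Complex.exp_add]; congr 1; ring
    rw [this]; ring
  simp_rw [hpt, ← hg]
  simp_rw [intervalIntegral.integral_of_le (show -l ≤ l by linarith), ← integral_const_mul]
  rw [integral_integral_swap]
  have hi : Integrable (fun p : ℝ × ℝ => (1:ℝ) * (C * Real.exp (-ε * p.2)))
      ((volume.restrict (Ioc (-l) l)).prod (volume.restrict (Ioi 0))) := by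
    have h1 : Integrable (fun _ : ℝ => (1:ℝ)) (volume.restrict (Ioc (-l) l)) := integrable_const _
    have h2 : Integrable (fun u : ℝ => C * Real.exp (-ε * u)) (volume.restrict (Ioi 0)) := by
      have := exp_neg_integrableOn_Ioi 0 hε
      exact Integrable.const_mul this C
    exact h1.mul_prod h2
  refine hi.mono' ?_ ?_
  · apply Measurable.aestronglyMeasurable
    unfold Function.uncurry
    have hD' : Measurable fun a : ℝ × ℝ => D a.2 := hD.comp measurable_snd
    fun_prop
  · rw [Measure.prod_restrict]
    refine (ae_restrict_iff' (measurableSet_Ioc.prod measurableSet_Ioi)).2 (Eventually.of_forall ?_)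
    rintro ⟨t, u⟩ ⟨ht, hu⟩
    simp only [Function.uncurry, norm_mul, Complex.norm_real, Real.norm_eq_abs, Complex.norm_exp]
    simp only [mem_Ioc, mem_Ioi] at ht hu
    have habs : |t| ≤ l := abs_le.2 ⟨ht.1.le, ht.2⟩
    have : |1 - |t| / l| ≤ 1 := by
      have h1 : |t| / l ≤ 1 := by rw [div_le_one hl]; exact habs
      have h2 : 0 ≤ |t| / l := by positivity
      rw [abs_le]; constructor <;> linarith
    have e1 : (Complex.I * t * v).re = 0 := by simp
    have e2 : (-(ε + Complex.I * t) * u).re = -ε * u := by simp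
    rw [e1, e2, Real.exp_zero, mul_one]
    have := hC u
    gcongr

theorem WI_conv {D : ℝ → ℝ} (hD : Measurable D) {C : ℝ} (hC : ∀ u, |D u| ≤ C) {G : ℂ → ℂ}
    (hG : ContinuousOn G {s | 0 ≤ s.re})
    (hGD : ∀ ε : ℝ, 0 < ε → ∀ t : ℝ,
      ∫ u in Ioi (0:ℝ), (D u : ℂ) * Complex.exp (-(ε + Complex.I * t) * u) = G (ε + Complex.I * t))
    {l : ℝ} (hl : 0 < l) :
    Tendsto (fun v => ∫ u in Ioi (0:ℝ), D u * K l (v - u)) atTop (𝓝 0) := by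
  have hC0 : 0 ≤ C := (abs_nonneg _).trans (hC 0)
  have hcont0 : Continuous fun p : ℝ => G (Complex.I * p) := by
    rw [← continuousOn_univ]
    refine hG.comp (by fun_prop) ?_
    intro p _; simp
  have heq : ∀ v : ℝ, ((∫ u in Ioi (0:ℝ), D u * K l (v - u) : ℝ) : ℂ)
      = ∫ t in (-l)..l, ((1 - |t| / l : ℝ) : ℂ) * Complex.exp (Complex.I * t * v) * G (Complex.I * t) := by
    intro v
    let e : ℕ → ℝ := fun n => 1 / ((n:ℝ) + 1)
    have he0 : ∀ n, 0 < e n := fun n => by positivity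
    have he : Tendsto e atTop (𝓝 0) := tendsto_one_div_add_atTop_nhds_zero_nat
    have t1 : Tendsto (fun n => ∫ t in (-l)..l, ((1 - |t| / l : ℝ) : ℂ) * Complex.exp (Complex.I * t * v) * G (e n + Complex.I * t)) atTop
      (𝓝 (∫ t in (-l)..l, ((1 - |t| / l : ℝ) : ℂ) * Complex.exp (Complex.I * t * v) * G (Complex.I * t))) := by
      have hcpt : IsCompact ((fun p : ℝ × ℝ => ((p.1:ℂ) + Complex.I * p.2)) '' (Icc 0 1 ×ˢ Icc (-l) l)) :=
        (isCompact_Icc.prod isCompact_Icc).image (by fun_prop)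
      obtain ⟨B, hB⟩ := hcpt.exists_bound_of_continuousOn (hG.mono (by
        rintro _ ⟨p, hp, rfl⟩
        simpa using hp.1.1))
      apply intervalIntegral.tendsto_integral_filter_of_dominated_convergence (fun _ => B)
      · refine Eventually.of_forall fun n => ?_
        have : Continuous fun t : ℝ => G (e n + Complex.I * t) := by
          rw [← continuousOn_univ]
          refine hG.comp (by fun_prop) ?_
          intro p _; simpa using (he0 n).le
        apply Continuous.aestronglyMeasurable
        exact Continuous.mul (by fun_prop) this
      · refine Eventually.of_forall fun n => Eventually.of_forall fun t ht => ?_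
        rw [uIoc_of_le (by linarith)] at ht
        simp only [norm_mul, Complex.norm_real, Real.norm_eq_abs, Complex.norm_exp]
        have habs : |t| ≤ l := abs_le.2 ⟨ht.1.le, ht.2⟩
        have h1 : |1 - |t| / l| ≤ 1 := by
          have h1 : |t| / l ≤ 1 := by rw [div_le_one hl]; exact habs
          have h2 : 0 ≤ |t| / l := by positivity
          rw [abs_le]; constructor <;> linarith
        have e1 : (Complex.I * t * v).re = 0 := by simp
        rw [e1, Real.exp_zero, mul_one]
        have h2 : ‖G (e n + Complex.I * t)‖ ≤ B := by
          apply hB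
          refine ⟨(e n, t), ⟨⟨(he0 n).le, ?_⟩, ⟨ht.1.le, ht.2⟩⟩, rfl⟩
          simp only [e]
          rw [div_le_one (by positivity)]
          linarith [(n.cast_nonneg : (0:ℝ) ≤ n)]
        calc _ ≤ 1 * B := by gcongr
          _ = B := one_mul _
      · simp
      · refine Eventually.of_forall fun t _ => ?_
        refine Tendsto.const_mul _ ?_
        have hc := hG (Complex.I * t) (by simp)
        refine hc.tendsto.comp ?_
        refine tendsto_nhdsWithin_iff.2 ⟨?_, Eventually.of_forall fun n => by simpa using (he0 n).le⟩
        have : Tendsto (fun n => ((e n : ℝ) : ℂ)) atTop (𝓝 ((0:ℝ):ℂ)) :=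
          (Complex.continuous_ofReal.tendsto 0).comp he
        simpa using this.add_const (Complex.I * t)
    have t2 : Tendsto (fun n => ∫ u in Ioi (0:ℝ), ((D u * Real.exp (-(e n) * u) * K l (v - u) : ℝ) : ℂ)) atTop
        (𝓝 (∫ u in Ioi (0:ℝ), ((D u * K l (v - u) : ℝ):ℂ))) := by
      apply tendsto_integral_of_dominated_convergence (fun u => C * ((l + 4 / l) * (1 + (v - u) ^ 2)⁻¹))
      · intro n
        have := (K_measurable l).comp (measurable_const.sub measurable_id : Measurable fun u : ℝ => v - u)
        apply Measurable.aestronglyMeasurable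
        apply Complex.measurable_ofReal.comp
        exact (hD.mul (by fun_prop)).mul this
      · exact (((integrable_inv_one_add_sq.comp_sub_left v).const_mul _).const_mul C).integrableOn
      · intro n
        refine (ae_restrict_iff' measurableSet_Ioi).2 (Eventually.of_forall fun u hu => ?_)
        rw [Complex.norm_real, Real.norm_eq_abs, abs_mul, abs_mul, abs_of_nonneg (K_nonneg hl _), abs_of_pos (Real.exp_pos _)]
        have h1 : Real.exp (-(e n) * u) ≤ 1 := by
          rw [Real.exp_le_one_iff]
          have := he0 n
          have : 0 < u := hu
          nlinarith [mul_pos (he0 n) this]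
        have h2 := hC u
        have h3 := K_le_cauchy hl (v - u)
        have h4 := K_nonneg hl (v - u)
        calc |D u| * Real.exp (-e n * u) * K l (v - u) ≤ C * 1 * ((l + 4 / l) * (1 + (v - u) ^ 2)⁻¹) := by gcongr
          _ = _ := by ring
      · refine Eventually.of_forall fun u => ?_
        refine (Complex.continuous_ofReal.tendsto _).comp ?_
        have : Tendsto (fun n => Real.exp (-(e n) * u)) atTop (𝓝 1) := by
          have : Tendsto (fun n => -(e n) * u) atTop (𝓝 0) := by simpa using (he.neg.mul_const u)
          simpa [Function.comp_def] using (Real.continuous_exp.tendsto 0).comp this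
        simpa using (this.const_mul (D u)).mul_const (K l (v - u))
    have t3 := tendsto_nhds_unique (t2.congr fun n => (WI_fubini hD hC hl (he0 n) v (hGD _ (he0 n))).symm) t1
    rw [← t3]
    exact integral_ofReal.symm
  have hRL : Tendsto (fun v : ℝ => ∫ t in (-l)..l, ((1 - |t| / l : ℝ) : ℂ) * Complex.exp (Complex.I * t * v) * G (Complex.I * t)) atTop (𝓝 0) := by
    have h0 := Real.tendsto_integral_exp_smul_cocompact ((Ioc (-l) l).indicator fun t : ℝ => ((1 - |t| / l : ℝ) : ℂ) * G (Complex.I * t))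
    have h1 : Tendsto (fun v : ℝ => -v / (2 * Real.pi)) atTop (cocompact ℝ) := by
      refine Tendsto.mono_right ?_ atBot_le_cocompact
      exact (tendsto_neg_atTop_atBot).atBot_div_const (by positivity)
    refine (h0.comp h1).congr fun v => ?_
    simp only [Function.comp]
    rw [intervalIntegral.integral_of_le (by linarith), ← integral_indicator measurableSet_Ioc]
    congr 1; ext t
    by_cases ht : t ∈ Ioc (-l) l
    · rw [indicator_of_mem ht, indicator_of_mem ht, Circle.smul_def, Real.fourierChar_apply, smul_eq_mul]
      have : Complex.exp (↑(2 * Real.pi * -(t * (-v / (2 * Real.pi)))) * Complex.I) = Complex.exp (Complex.I * t * v) := by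
        congr 1
        have : (2 * Real.pi * -(t * (-v / (2 * Real.pi)))) = t * v := by field_simp
        rw [this]; push_cast; ring
      rw [this]; ring
    · rw [indicator_of_notMem ht, indicator_of_notMem ht, smul_zero]
  have : Tendsto (fun v : ℝ => ((∫ u in Ioi (0:ℝ), D u * K l (v - u) : ℝ) : ℂ)) atTop (𝓝 ((0:ℝ):ℂ)) := by
    simpa [heq] using hRL
  have h2 := (Complex.continuous_re.tendsto _).comp this
  simpa [Function.comp_def] using h2

/-- Wiener-Ikehara, final step. -/
theorem WI_final {B : ℝ → ℝ} (hB : Measurable B) {A C : ℝ} (hA : 0 ≤ A) (hB0 : ∀ u, 0 ≤ B u) (hBC : ∀ u, B u ≤ C)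
    (hmono : ∀ u c, 0 ≤ u → 0 ≤ c → Real.exp (-c) * B u ≤ B (u + c))
    {G : ℂ → ℂ} (hG : ContinuousOn G {s | 0 ≤ s.re})
    (hGD : ∀ ε : ℝ, 0 < ε → ∀ t : ℝ,
      ∫ u in Ioi (0:ℝ), ((B u - A : ℝ) : ℂ) * Complex.exp (-(ε + Complex.I * t) * u) = G (ε + Complex.I * t)) :
    Tendsto B atTop (𝓝 A) := by
  have hC0 : 0 ≤ C := (hB0 0).trans (hBC 0)
  have hDm : Measurable fun u => B u - A := hB.sub_const A
  have hDC : ∀ u, |B u - A| ≤ C + A := by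
    intro u; rw [abs_le]; constructor <;> linarith [hB0 u, hBC u]
  have hDC' : ∀ u, |-(B u - A)| ≤ C + A := by
    intro u; rw [abs_neg]; exact hDC u
  have hconv := fun l (hl : 0 < l) => WI_conv hDm hDC hG hGD (l := l) hl
  rw [Metric.tendsto_atTop]
  intro δ hδ
  -- choose c
  obtain ⟨c, hc, hc1, hc2⟩ : ∃ c > 0, A + δ / 2 ≤ Real.exp (-(2 * c)) * (A + δ) ∧ Real.exp (2 * c) * (A - δ) ≤ A - δ / 2 := by
    have h1 : Tendsto (fun c : ℝ => Real.exp (-(2 * c)) * (A + δ)) (𝓝[>] 0) (𝓝 (A + δ)) := by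
      have : Continuous fun c : ℝ => Real.exp (-(2 * c)) * (A + δ) := by fun_prop
      simpa using (this.tendsto 0).mono_left nhdsWithin_le_nhds
    have h2 : Tendsto (fun c : ℝ => Real.exp (2 * c) * (A - δ)) (𝓝[>] 0) (𝓝 (A - δ)) := by
      have : Continuous fun c : ℝ => Real.exp ((2 * c)) * (A - δ) := by fun_prop
      simpa using (this.tendsto 0).mono_left nhdsWithin_le_nhds
    have e1 := h1.eventually (lt_mem_nhds (show A + δ / 2 < A + δ by linarith))
    have e2 := h2.eventually (gt_mem_nhds (show A - δ < A - δ / 2 by linarith))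
    obtain ⟨c, ⟨h1, h2⟩, h3⟩ := ((e1.and e2).and self_mem_nhdsWithin).exists
    exact ⟨c, h3, h1.le, h2.le⟩
  -- choose l
  set W := (C + A) * (4 * (1 + 1 / c ^ 2)) * Real.pi with hW
  have hW0 : 0 ≤ W := by positivity
  set l := 1 / c + W * (8 / δ) + 1 with hldef
  have hl : 0 < l := by positivity
  have hlc : 1 / l ≤ c := by
    rw [div_le_iff₀ hl, ← div_le_iff₀' hc, hldef]
    have : 0 ≤ W * (8 / δ) := by positivity
    linarith
  have hWl : (C + A) * (4 / l * (1 + 1 / c ^ 2)) * Real.pi ≤ δ / 8 := by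
    have : (C + A) * (4 / l * (1 + 1 / c ^ 2)) * Real.pi = W / l := by rw [hW]; field_simp
    rw [this, div_le_iff₀ hl]
    have : W = δ / 8 * (W * (8 / δ)) := by field_simp
    calc W = δ / 8 * (W * (8 / δ)) := this
      _ ≤ _ := by
        gcongr
        have : 0 < 1 / c := by positivity
        linarith
  have hev := (hconv l hl)
  rw [Metric.tendsto_atTop] at hev
  obtain ⟨V, hV⟩ := hev (δ / 8) (by positivity)
  refine ⟨|V| + 4 * c + 1, fun v0 hv0 => ?_⟩
  have hVV := le_abs_self V
  have hV0 := abs_nonneg V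
  rw [Real.dist_eq, abs_lt]
  constructor
  · by_contra hcon
    push Not at hcon
    have := lower_bound hDm.neg (C := C + A) (δ := δ / 2) (c := c) (l := l) (v := v0 - c) hl hc hDC' (by positivity) hlc (by linarith) (by
      intro u hu
      rw [abs_le] at hu
      have h1 := hmono u (v0 - u) (by linarith) (by linarith)
      rw [add_sub_cancel] at h1
      have h2 : Real.exp (-(2*c)) * B u ≤ B v0 := by
        refine le_trans ?_ h1
        have := hB0 u
        gcongr
        linarith
      have h3 : B u ≤ Real.exp (2 * c) * B v0 := by
        rw [Real.exp_neg] at h2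
        rwa [inv_mul_le_iff₀ (Real.exp_pos _)] at h2
      have h4 : Real.exp (2 * c) * B v0 ≤ Real.exp (2 * c) * (A - δ) := by gcongr; linarith
      show δ / 2 ≤ -(B u - A)
      linarith)
    have h5 := hV (v0 - c) (by linarith)
    rw [Real.dist_eq, sub_zero, abs_lt] at h5
    have h6 : ∫ u in Ioi 0, (-fun u => B u - A) u * K l (v0 - c - u) = - ∫ u in Ioi 0, (B u - A) * K l (v0 - c - u) := by
      rw [← integral_neg]; congr 1; ext u; simp; ring
    rw [h6] at this
    linarith
  · by_contra hcon
    push Not at hcon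
    have := lower_bound hDm (C := C + A) (δ := δ / 2) (c := c) (l := l) (v := v0 + c) hl hc hDC (by positivity) hlc (by linarith) (by
      intro u hu
      rw [abs_le] at hu
      have h1 := hmono v0 (u - v0) (by linarith) (by linarith)
      rw [add_sub_cancel] at h1
      have h2 : Real.exp (-(2*c)) * (A + δ) ≤ B u := by
        refine le_trans ?_ h1
        have := hB0 v0
        gcongr
        · linarith
        · linarith
      show δ / 2 ≤ B u - A
      linarith)
    have h5 := hV (v0 + c) (by linarith)
    rw [Real.dist_eq, sub_zero, abs_lt] at h5
    linarith

end PNT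

namespace PNT
open Filter MeasureTheory Topology Set
open ArithmeticFunction

lemma sumIcc_le_psi {f : ℕ → ℝ} (hf : ∀ n, f n ≤ vonMangoldt n) (x : ℝ) :
    ∑ k ∈ Finset.Icc 1 ⌊x⌋₊, f k ≤ Chebyshev.psi x := by
  rw [Chebyshev.psi]
  exact Finset.sum_le_sum fun k _ => hf k

theorem PNT_AP {q : ℕ} [NeZero q] {a : ZMod q} (ha : IsUnit a) :
    Tendsto (fun N : ℕ => (∑ k ∈ Finset.Icc 1 N, vonMangoldt.residueClass a k) / N) atTop (𝓝 ((q.totient : ℝ)⁻¹)) := by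
  set f := vonMangoldt.residueClass a with hf
  have hf0 : ∀ n, 0 ≤ f n := fun n => vonMangoldt.residueClass_nonneg a n
  have hf1 : ∀ n, f n ≤ vonMangoldt n := fun n => vonMangoldt.residueClass_le a n
  set S : ℝ → ℝ := fun t => ∑ k ∈ Finset.Icc 1 ⌊t⌋₊, f k with hS
  have hSmono : Monotone S := by
    intro x y hxy
    exact Finset.sum_le_sum_of_subset_of_nonneg (Finset.Icc_subset_Icc le_rfl (Nat.floor_mono hxy)) fun k _ _ => hf0 k
  have hS0 : ∀ t, 0 ≤ S t := fun t => Finset.sum_nonneg fun k _ => hf0 k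
  set C := Real.log 4 + 4
  have hSC : ∀ t, 0 ≤ t → S t ≤ C * t := fun t ht =>
    (sumIcc_le_psi hf1 t).trans (Chebyshev.psi_le_const_mul_self ht)
  have hC0 : 0 ≤ C := by have := Real.log_nonneg (show (1:ℝ) ≤ 4 by norm_num); positivity
  set B : ℝ → ℝ := fun u => S (Real.exp u) * Real.exp (-u) with hB
  set A : ℝ := (q.totient : ℝ)⁻¹ with hA
  have hBC : ∀ u, B u ≤ C := by
    intro u
    have := hSC _ (Real.exp_pos u).le
    calc B u ≤ (C * Real.exp u) * Real.exp (-u) := mul_le_mul_of_nonneg_right this (Real.exp_pos _).le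
      _ = C := by rw [mul_assoc, ← Real.exp_add]; simp
  have hBm : Measurable B := (hSmono.measurable.comp Real.measurable_exp).mul (by fun_prop)
  have hB0 : ∀ u, 0 ≤ B u := fun u => mul_nonneg (hS0 _) (Real.exp_pos _).le
  let G : ℂ → ℂ := fun s => (vonMangoldt.LFunctionResidueClassAux a (1 + s) - A) / (1 + s)
  have hG : ContinuousOn G {s | 0 ≤ s.re} := by
    apply ContinuousOn.div
    · apply ContinuousOn.sub _ continuousOn_const
      refine (vonMangoldt.continuousOn_LFunctionResidueClassAux a).comp (by fun_prop) ?_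
      intro s hs
      simpa using hs
    · fun_prop
    · intro s hs h
      have := congrArg Complex.re h
      simp at this hs
      linarith
  have key := WI_final hBm (A := A) (by positivity) hB0 hBC ?_ hG ?_
  · have h1 := key.comp (Real.tendsto_log_atTop.comp tendsto_natCast_atTop_atTop)
    refine h1.congr' ?_
    filter_upwards [eventually_gt_atTop 0] with N hN
    have hN' : (0:ℝ) < N := by exact_mod_cast hN
    simp only [Function.comp, hB, hS]
    rw [Real.exp_log hN', Nat.floor_natCast, Real.exp_neg, Real.exp_log hN', div_eq_mul_inv]
  · intro u c hu hc
    simp only [hB]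
    have : S (Real.exp u) ≤ S (Real.exp (u + c)) := hSmono (Real.exp_le_exp.2 (by linarith))
    calc _ = S (Real.exp u) * Real.exp (-(u + c)) := by rw [neg_add, Real.exp_add]; ring
      _ ≤ _ := by gcongr
  · intro ε hε t
    set s : ℂ := ε + Complex.I * t with hs
    have hsre : s.re = ε := by simp [hs]
    have hs0 : s ≠ 0 := by intro h; rw [h] at hsre; simp at hsre; linarith
    have hs1 : 1 + s ≠ 0 := by
      intro h
      have := congrArg Complex.re h
      simp [hsre] at this; linarith
    have hexp : IntegrableOn (fun u : ℝ => Complex.exp (-s * u)) (Ioi 0) := by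
      exact integrableOn_exp_mul_complex_Ioi (by simp [hsre, hε]) 0
    have hAint : ∫ u in Ioi (0:ℝ), Complex.exp (-s * u) = 1 / s := by
      rw [integral_exp_mul_complex_Ioi (by simp [hsre, hε]) 0]
      simp
    have hBint : IntegrableOn (fun u : ℝ => (B u : ℂ) * Complex.exp (-s * u)) (Ioi 0) := by
      refine hexp.bdd_mul (c := C) ?_ ?_
      · exact (Complex.measurable_ofReal.comp hBm).aestronglyMeasurable
      · refine Eventually.of_forall fun u => ?_
        rw [Complex.norm_real, Real.norm_eq_abs, abs_of_nonneg (hB0 u)]; exact hBC u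
    have hL := LSeries_eq_mul_integral_of_nonneg f (r := 1) zero_le_one (s := 1 + s) (by simp [hsre, hε]) ?_ hf0
    · have hI : ∫ u in Ioi (0:ℝ), (B u : ℂ) * Complex.exp (-s * u)
          = ∫ t in Set.Ioi (1 : ℝ), (∑ k ∈ Finset.Icc 1 ⌊t⌋₊, (f k : ℂ)) * t ^ (-((1 + s) + 1)) := by
        have := integral_comp_exp_Ioi (fun t : ℝ => (∑ k ∈ Finset.Icc 1 ⌊t⌋₊, (f k : ℂ)) * (t:ℂ) ^ (-((1 + s) + 1))) 0
        rw [Real.exp_zero] at this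
        rw [← this]
        congr 1; ext u
        simp only [hB, hS]
        rw [Complex.ofReal_exp, Complex.cpow_def_of_ne_zero (Complex.exp_ne_zero _), ← Complex.ofReal_exp, ← Complex.ofReal_log (Real.exp_pos u).le, Real.log_exp]
        rw [Complex.real_smul]
        push_cast
        have : Complex.exp (u * -(1 + s + 1)) = Complex.exp (-u) * Complex.exp (-u) * Complex.exp (-s * u) := by
          rw [← Complex.exp_add, ← Complex.exp_add]; ring_nf
        rw [this]
        have h2 : Complex.exp u * Complex.exp (-u) = 1 := by rw [← Complex.exp_add]; simp
        linear_combination (-(∑ k ∈ Finset.Icc 1 ⌊Real.exp u⌋₊, (f k : ℂ)) * Complex.exp (-u) * Complex.exp (-s * u)) * h2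
      have hAux := vonMangoldt.eqOn_LFunctionResidueClassAux ha (show (1 + s) ∈ {s : ℂ | 1 < s.re} by simp [hsre, hε])
      simp only [add_sub_cancel_left] at hAux
      have : ∫ u in Ioi (0:ℝ), ((B u - A : ℝ) : ℂ) * Complex.exp (-s * u)
         = (∫ u in Ioi (0:ℝ), (B u : ℂ) * Complex.exp (-s * u)) - A * (1 / s) := by
        rw [← hAint, ← integral_const_mul, ← integral_sub hBint (hexp.const_mul _)]
        congr 1; ext u; push_cast; ring
      rw [this, hI]
      simp only [G]
      rw [hAux, hL, hA]
      push_cast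
      field_simp
      ring
    · refine Asymptotics.IsBigO.of_bound C (Eventually.of_forall fun n => ?_)
      have := hSC n n.cast_nonneg
      simp only [hS, Nat.floor_natCast] at this
      rw [Real.norm_eq_abs, abs_of_nonneg (Finset.sum_nonneg fun k _ => hf0 k), Real.rpow_one, Real.norm_natCast]
      exact this

theorem PNT_psi : Tendsto (fun N : ℕ => (∑ k ∈ Finset.Icc 1 N, vonMangoldt k) / N) atTop (𝓝 1) := by
  have h := PNT_AP (q := 1) (a := 1) isUnit_one
  simp only [Nat.totient_one, Nat.cast_one, inv_one] at h
  refine h.congr fun N => ?_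
  congr 1
  refine Finset.sum_congr rfl fun k _ => ?_
  rw [vonMangoldt.residueClass, Set.indicator_of_mem]
  exact Subsingleton.elim _ _

lemma sum_residue {q : ℕ} [NeZero q] (k : ℕ) (g : ZMod q → ℂ) :
    ((vonMangoldt k : ℝ) : ℂ) * g k = ∑ a : ZMod q, (vonMangoldt.residueClass a k : ℂ) * g a := by
  rw [Finset.sum_eq_single (k : ZMod q)]
  · rw [vonMangoldt.residueClass, Set.indicator_of_mem]; rfl
  · intro b _ hb
    rw [vonMangoldt.residueClass, Set.indicator_of_notMem (fun h => hb (by exact h.symm))]; simp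
  · simp

lemma sum_residue_real {q : ℕ} [NeZero q] (k : ℕ) :
    vonMangoldt k = ∑ a : ZMod q, vonMangoldt.residueClass a k := by
  have := sum_residue (q := q) k (fun _ => 1)
  simp only [mul_one] at this
  exact_mod_cast this

theorem PNT_AP_nonunit {q : ℕ} [NeZero q] {a : ZMod q} (ha : ¬ IsUnit a) :
    Tendsto (fun N : ℕ => (∑ k ∈ Finset.Icc 1 N, vonMangoldt.residueClass a k) / N) atTop (𝓝 0) := by
  classical
  have h1 : Tendsto (fun N : ℕ => ∑ b ∈ Finset.univ.filter (fun b : ZMod q => IsUnit b), (∑ k ∈ Finset.Icc 1 N, vonMangoldt.residueClass b k) / N) atTop (𝓝 1) := by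
    have := tendsto_finsetSum (Finset.univ.filter (fun b : ZMod q => IsUnit b)) (fun b hb => PNT_AP (q := q) (a := b) (by simpa using hb))
    refine this.trans ?_
    rw [Finset.sum_const, nsmul_eq_mul]
    have hc : (Finset.univ.filter (fun b : ZMod q => IsUnit b)).card = q.totient := by
      rw [← ZMod.card_units_eq_totient q]
      rw [← Fintype.card_subtype]
      exact Fintype.card_congr ⟨fun b => b.2.unit, fun u => ⟨u, u.isUnit⟩, fun b => by simp, fun u => by ext; simp⟩
    rw [hc, mul_inv_cancel₀]
    exact_mod_cast (Nat.totient_pos.2 (NeZero.pos q)).ne'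
  have h2 := PNT_psi.sub h1
  rw [sub_self] at h2
  refine squeeze_zero (fun N => div_nonneg (Finset.sum_nonneg fun k _ => vonMangoldt.residueClass_nonneg a k) N.cast_nonneg) (fun N => ?_) h2
  have e1 : (∑ k ∈ Finset.Icc 1 N, vonMangoldt k) / (N:ℝ) = ∑ b : ZMod q, (∑ k ∈ Finset.Icc 1 N, vonMangoldt.residueClass b k) / N := by
    rw [← Finset.sum_div, Finset.sum_comm]
    congr 1
    exact Finset.sum_congr rfl fun k _ => sum_residue_real k
  rw [e1, ← Finset.sum_filter_add_sum_filter_not Finset.univ (fun b : ZMod q => IsUnit b), add_sub_cancel_left]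
  exact Finset.single_le_sum (f := fun b : ZMod q => (∑ k ∈ Finset.Icc 1 N, vonMangoldt.residueClass b k) / (N:ℝ))
    (fun b _ => div_nonneg (Finset.sum_nonneg fun k _ => vonMangoldt.residueClass_nonneg b k) N.cast_nonneg) (by simpa using ha)

theorem root_conv {q : ℕ} (hq : q ≠ 0) {w : ℂ} (hw : w ^ q = 1) :
    ∃ L : ℂ, Tendsto (fun N : ℕ => (N:ℂ)⁻¹ * ∑ k ∈ Finset.Icc 1 N, ((vonMangoldt k : ℝ) : ℂ) * w ^ k) atTop (𝓝 L) := by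
  classical
  have : NeZero q := ⟨hq⟩
  let l : ZMod q → ℝ := fun a => if IsUnit a then (q.totient : ℝ)⁻¹ else 0
  have hl : ∀ a : ZMod q, Tendsto (fun N : ℕ => (∑ k ∈ Finset.Icc 1 N, vonMangoldt.residueClass a k) / N) atTop (𝓝 (l a)) := by
    intro a
    by_cases ha : IsUnit a
    · simpa [l, ha] using PNT_AP ha
    · simpa [l, ha] using PNT_AP_nonunit ha
  refine ⟨∑ a : ZMod q, (l a : ℂ) * w ^ a.val, ?_⟩
  have := tendsto_finsetSum Finset.univ (fun (a : ZMod q) _ => (((Complex.continuous_ofReal.tendsto _).comp (hl a)).mul_const (w ^ a.val)))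
  refine this.congr fun N => ?_
  have h1 : ∀ k : ℕ, w ^ k = w ^ ((k : ZMod q)).val := by
    intro k
    rw [ZMod.val_natCast]
    conv_lhs => rw [← Nat.mod_add_div k q, pow_add, pow_mul, hw, one_pow, mul_one]
  have h2 : ∀ k : ℕ, ((vonMangoldt k : ℝ) : ℂ) * w ^ k = ∑ a : ZMod q, (vonMangoldt.residueClass a k : ℂ) * w ^ a.val := by
    intro k
    rw [h1 k, sum_residue k (fun a => w ^ a.val)]
  simp only [h2]
  rw [Finset.sum_comm, Finset.mul_sum]
  refine Finset.sum_congr rfl fun a _ => ?_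
  simp only [Function.comp]
  rw [← Finset.sum_mul]
  push_cast
  ring

end PNT

namespace PNT
open Filter Topology

noncomputable def ee (x : ℝ) : ℂ := Complex.exp (Complex.I * ((2 * Real.pi * x : ℝ) : ℂ))

lemma ee_add (x y : ℝ) : ee (x + y) = ee x * ee y := by
  rw [ee, ee, ee, ← Complex.exp_add]; congr 1; push_cast; ring

lemma norm_ee (x : ℝ) : ‖ee x‖ = 1 := by
  rw [ee, mul_comm]; exact Complex.norm_exp_ofReal_mul_I _

lemma ee_zero : ee 0 = 1 := by simp [ee]

lemma ee_nat_mul (n : ℕ) (x : ℝ) : ee (n * x) = ee x ^ n := by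
  rw [ee, ee, ← Complex.exp_nat_mul]; congr 1; push_cast; ring

lemma ee_int (n : ℤ) : ee n = 1 := by
  rw [ee]
  have : Complex.I * ((2 * Real.pi * (n:ℝ) : ℝ) : ℂ) = n * (2 * Real.pi * Complex.I) := by push_cast; ring
  rw [this, Complex.exp_int_mul_two_pi_mul_I]

lemma ee_neg (x : ℝ) : ee (-x) = (starRingEnd ℂ) (ee x) := by
  rw [ee, ee, ← Complex.exp_conj]; congr 1; rw [map_mul, Complex.conj_I, Complex.conj_ofReal]; push_cast; ring

noncomputable def nd (x : ℝ) : ℝ := |x - round x|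

lemma nd_nonneg (x : ℝ) : 0 ≤ nd x := abs_nonneg _

lemma nd_le (x : ℝ) (z : ℤ) : nd x ≤ |x - z| := round_le x z

lemma nd_le_half (x : ℝ) : nd x ≤ 1 / 2 := abs_sub_round x

lemma nd_add_le (x y : ℝ) : nd (x + y) ≤ nd x + |y| := by
  have := nd_le (x + y) (round x)
  have h2 : x + y - round x = (x - round x) + y := by ring
  rw [h2] at this
  exact this.trans (abs_add_le _ _)

lemma nd_neg (x : ℝ) : nd (-x) = nd x := by
  apply le_antisymm
  · have := nd_le (-x) (-(round x))
    rw [show -x - ((-(round x) : ℤ) : ℝ) = -(x - round x) by push_cast; ring, abs_neg] at this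
    exact this
  · have := nd_le x (-(round (-x)))
    rw [show x - ((-(round (-x)) : ℤ) : ℝ) = -(-x - round (-x)) by push_cast; ring, abs_neg] at this
    exact this

lemma four_nd_le (x : ℝ) : 4 * nd x ≤ ‖ee x - 1‖ := by
  have h1 : ee x = ee (x - round x) := by
    have : x = (x - round x) + (round x : ℤ) := by ring
    conv_lhs => rw [this, ee_add, ee_int, mul_one]
  rw [h1, ee, Complex.norm_exp_I_mul_ofReal_sub_one, Real.norm_eq_abs, abs_mul, abs_two]
  have h2 := nd_le_half x
  unfold nd at *
  set r := x - round x
  have h3 := Real.mul_abs_le_abs_sin (x := 2 * Real.pi * r / 2) (by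
    rw [show 2 * Real.pi * r / 2 = Real.pi * r by ring, abs_mul, abs_of_pos Real.pi_pos]
    nlinarith [Real.pi_pos])
  rw [show 2 * Real.pi * r / 2 = Real.pi * r by ring, abs_mul, abs_of_pos Real.pi_pos] at h3
  rw [show 2 * Real.pi * r / 2 = Real.pi * r by ring]
  have : 2 / Real.pi * (Real.pi * |r|) = 2 * |r| := by field_simp
  linarith

lemma nd_pos_of_irrational {x : ℝ} (hx : Irrational x) : 0 < nd x := by
  rw [nd, abs_pos, sub_ne_zero]
  exact hx.ne_int _

/-- geometric sums -/
lemma norm_geom_le {x : ℝ} (hx : 0 < nd x) (u v : ℕ) : ‖∑ m ∈ Finset.Ioc u v, ee (m * x)‖ ≤ 1 / (2 * nd x) := by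
  have h4 := four_nd_le x
  have hne : ee x ≠ 1 := by
    intro h; rw [h] at h4; simp at h4; linarith
  rcases le_or_gt u v with huv | huv
  · have h1 : ∑ m ∈ Finset.Ioc u v, ee (m * x) = ∑ m ∈ Finset.Ico (u+1) (v+1), ee x ^ m := by
      have : Finset.Ioc u v = Finset.Ico (u+1) (v+1) := by ext a; simp only [Finset.mem_Ioc, Finset.mem_Ico]; omega
      rw [this]; exact Finset.sum_congr rfl fun m _ => ee_nat_mul m x
    rw [h1, geom_sum_Ico hne (by omega), norm_div]
    have h2 : ‖ee x ^ (v+1) - ee x ^ (u+1)‖ ≤ 2 := by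
      calc _ ≤ ‖ee x ^ (v+1)‖ + ‖ee x ^ (u+1)‖ := norm_sub_le _ _
        _ = 2 := by rw [norm_pow, norm_pow, norm_ee]; norm_num
    rw [div_le_div_iff₀ (by linarith) (by linarith)]
    nlinarith
  · rw [Finset.Ioc_eq_empty (by omega), Finset.sum_empty, norm_zero]; positivity

lemma abel_aux {w : ℕ → ℝ} (hw : Monotone w) {z : ℕ → ℂ} {B : ℝ} {v : ℕ}
    (hB : ∀ u, ‖∑ m ∈ Finset.Ioc u v, z m‖ ≤ B) (k : ℕ) :
    ∀ u, u + k = v → ‖∑ m ∈ Finset.Ioc u v, ((w m - w u : ℝ) : ℂ) * z m‖ ≤ (w v - w u) * B := by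
  induction k with
  | zero => intro u hu; simp at hu; subst hu; simp
  | succ k ih =>
    intro u hu
    have h1 := ih (u+1) (by omega)
    have h2 : ∑ m ∈ Finset.Ioc u v, ((w m - w u : ℝ) : ℂ) * z m
        = ∑ m ∈ Finset.Ioc (u+1) v, ((w m - w (u+1) : ℝ) : ℂ) * z m + ((w (u+1) - w u : ℝ) : ℂ) * ∑ m ∈ Finset.Ioc u v, z m := by
      have h3 : ∑ m ∈ Finset.Ioc (u+1) v, ((w m - w (u+1) : ℝ) : ℂ) * z m = ∑ m ∈ Finset.Ioc u v, ((w m - w (u+1) : ℝ) : ℂ) * z m := by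
        apply Finset.sum_subset
        · intro m; simp; omega
        · intro m hm hm'
          have : m = u + 1 := by simp at hm hm'; omega
          subst this; simp
      rw [h3, Finset.mul_sum, ← Finset.sum_add_distrib]
      refine Finset.sum_congr rfl fun m _ => ?_
      push_cast; ring
    rw [h2]
    have h5 : 0 ≤ w (u+1) - w u := by linarith [hw (Nat.le_succ u)]
    calc _ ≤ (w v - w (u+1)) * B + (w (u+1) - w u) * B := by
          refine (norm_add_le _ _).trans (add_le_add h1 ?_)
          rw [norm_mul, Complex.norm_real, Real.norm_eq_abs, abs_of_nonneg h5]
          exact mul_le_mul_of_nonneg_left (hB u) h5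
      _ = _ := by ring

lemma abel_bound {w : ℕ → ℝ} (hw : Monotone w) {z : ℕ → ℂ} {B : ℝ} {u v : ℕ} (hu0 : 0 ≤ w u) (hv0 : 0 ≤ w v)
    (hB : ∀ u, ‖∑ m ∈ Finset.Ioc u v, z m‖ ≤ B) :
    ‖∑ m ∈ Finset.Ioc u v, (w m : ℂ) * z m‖ ≤ w v * B := by
  have hB0 : 0 ≤ B := (norm_nonneg _).trans (hB u)
  rcases le_or_gt u v with huv | huv
  · have h1 := abel_aux hw hB (v - u) u (by omega)
    have h2 : ∑ m ∈ Finset.Ioc u v, (w m : ℂ) * z m = ∑ m ∈ Finset.Ioc u v, ((w m - w u : ℝ) : ℂ) * z m + (w u : ℂ) * ∑ m ∈ Finset.Ioc u v, z m := by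
      rw [Finset.mul_sum, ← Finset.sum_add_distrib]
      refine Finset.sum_congr rfl fun m _ => ?_
      push_cast; ring
    rw [h2]
    calc _ ≤ (w v - w u) * B + w u * B := by
          refine (norm_add_le _ _).trans (add_le_add h1 ?_)
          rw [norm_mul, Complex.norm_real, Real.norm_eq_abs, abs_of_nonneg hu0]
          exact mul_le_mul_of_nonneg_left (hB u) hu0
      _ = _ := by ring
  · rw [Finset.Ioc_eq_empty (by omega)]
    simp; positivity

lemma log_monotone : Monotone fun n : ℕ => Real.log n := by
  intro a b hab
  rcases Nat.eq_zero_or_pos a with rfl | ha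
  · simp; exact Real.log_natCast_nonneg b
  · exact Real.log_le_log (by exact_mod_cast ha) (by exact_mod_cast hab)

/-- inner type I sum -/
lemma inner_sum_le (K M : ℕ) (x : ℝ) (hx : 0 < nd x) :
    ‖∑ m ∈ Finset.Ioc K M, (Real.log m : ℂ) * ee (m * x)‖ ≤ Real.log M * min (M : ℝ) (1 / nd x) := by
  have hlog : 0 ≤ Real.log M := Real.log_natCast_nonneg M
  rw [mul_min_of_nonneg _ _ hlog]
  apply le_min
  · calc _ ≤ ∑ m ∈ Finset.Ioc K M, Real.log M := by
          refine norm_sum_le_of_le _ fun m hm => ?_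
          rw [norm_mul, norm_ee, mul_one, Complex.norm_real, Real.norm_eq_abs, abs_of_nonneg (Real.log_natCast_nonneg m)]
          exact log_monotone (Finset.mem_Ioc.1 hm).2
      _ ≤ _ := by
          rw [Finset.sum_const, nsmul_eq_mul, mul_comm]
          gcongr; simp
  · have := abel_bound log_monotone (z := fun m => ee (m * x)) (v := M) (u := K) (Real.log_natCast_nonneg K) hlog (fun u => norm_geom_le hx u M)
    refine this.trans (mul_le_mul_of_nonneg_left ?_ hlog)
    apply one_div_le_one_div_of_le hx; linarith

end PNT

namespace PNT
open Filter Topology ArithmeticFunction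
open scoped ArithmeticFunction.Moebius

lemma card_dvd_le (X p : ℕ) : (((Finset.Ioc 0 X).filter (fun n => p ∣ n)).card : ℝ) = ((X / p : ℕ) : ℝ) := by
  rw [Nat.Ioc_filter_dvd_card_eq_div]

lemma mu_abs_le (n : ℕ) : |(μ n : ℝ)| ≤ 1 := by
  exact_mod_cast abs_moebius_le_one

lemma norm_mu_le (n : ℕ) : ‖((μ n : ℤ) : ℂ)‖ ≤ 1 := by
  have := mu_abs_le n
  rwa [← Complex.ofReal_intCast, Complex.norm_real, Real.norm_eq_abs]

noncomputable def om (P : Finset ℕ) (n : ℕ) : ℝ := ∑ p ∈ P, if p ∣ n then 1 else 0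

lemma turan_kubilius (P : Finset ℕ) (hP : ∀ p ∈ P, p.Prime) (X : ℕ) :
    ∑ n ∈ Finset.Ioc 0 X, (om P n - ∑ p ∈ P, (1:ℝ) / p) ^ 2 ≤ X * (∑ p ∈ P, (1:ℝ) / p) + 2 * (∑ p ∈ P, (1:ℝ) / p) * P.card := by
  set A := ∑ p ∈ P, (1:ℝ) / p with hA
  have hA0 : 0 ≤ A := Finset.sum_nonneg fun p _ => by positivity
  have h1 : ∑ n ∈ Finset.Ioc 0 X, om P n ≥ X * A - P.card := by
    unfold om
    rw [Finset.sum_comm]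
    have : ∀ p ∈ P, (X:ℝ) * (1 / p) - 1 ≤ ∑ n ∈ Finset.Ioc 0 X, (if p ∣ n then (1:ℝ) else 0) := by
      intro p hp
      rw [Finset.sum_boole, card_dvd_le]
      have h3 := Nat.lt_floor_add_one ((X:ℝ) / p)
      rw [Nat.floor_div_eq_div] at h3
      rw [mul_one_div]; linarith
    calc _ = ∑ p ∈ P, ((X:ℝ) * (1 / p) - 1) := by rw [Finset.sum_sub_distrib, ← Finset.mul_sum]; simp [hA]
      _ ≤ _ := Finset.sum_le_sum this
  have h2 : ∑ n ∈ Finset.Ioc 0 X, om P n ^ 2 ≤ X * A ^ 2 + X * A := by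
    have e1 : ∀ n, om P n ^ 2 = ∑ p ∈ P, ∑ p' ∈ P, (if p ∣ n ∧ p' ∣ n then (1:ℝ) else 0) := by
      intro n
      rw [sq, om, Finset.sum_mul_sum]
      refine Finset.sum_congr rfl fun p _ => Finset.sum_congr rfl fun p' _ => ?_
      by_cases h1 : p ∣ n <;> by_cases h2 : p' ∣ n <;> simp [h1, h2]
    simp only [e1]
    rw [Finset.sum_comm]
    have e2 : ∀ p ∈ P, ∀ p' ∈ P, ∑ n ∈ Finset.Ioc 0 X, (if p ∣ n ∧ p' ∣ n then (1:ℝ) else 0)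
        ≤ X * ((1 / p) * (1 / p')) + if p = p' then (X:ℝ) * (1 / p) else 0 := by
      intro p hp p' hp'
      have hp0 : (0:ℝ) < p := by exact_mod_cast (hP p hp).pos
      have hp0' : (0:ℝ) < p' := by exact_mod_cast (hP p' hp').pos
      rw [Finset.sum_boole]
      by_cases h : p = p'
      · subst h
        simp only [and_self, if_true]
        rw [card_dvd_le]
        have := Nat.cast_div_le (α := ℝ) (m := X) (n := p)
        have : 0 ≤ (X:ℝ) * ((1 / p) * (1 / p)) := by positivity
        have h7 : (X:ℝ) * (1 / p) = X / p := mul_one_div _ _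
        linarith
      · simp only [h, if_false, add_zero]
        have hc : Nat.Coprime p p' := (Nat.coprime_primes (hP p hp) (hP p' hp')).2 h
        have : (Finset.Ioc 0 X).filter (fun n => p ∣ n ∧ p' ∣ n) = (Finset.Ioc 0 X).filter (fun n => p * p' ∣ n) := by
          refine Finset.filter_congr fun n _ => ?_
          exact ⟨fun h => hc.mul_dvd_of_dvd_of_dvd h.1 h.2, fun h => ⟨(dvd_mul_right _ _).trans h, (dvd_mul_left _ _).trans h⟩⟩
        rw [this, card_dvd_le]
        refine Nat.cast_div_le.trans (le_of_eq ?_)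
        push_cast; field_simp
    calc _ = ∑ p ∈ P, ∑ p' ∈ P, ∑ n ∈ Finset.Ioc 0 X, (if p ∣ n ∧ p' ∣ n then (1:ℝ) else 0) := by
          refine Finset.sum_congr rfl fun p _ => Finset.sum_comm
      _ ≤ ∑ p ∈ P, ∑ p' ∈ P, (X * ((1 / p) * (1 / p')) + if p = p' then (X:ℝ) * (1 / p) else 0) :=
          Finset.sum_le_sum fun p hp => Finset.sum_le_sum fun p' hp' => e2 p hp p' hp'
      _ = X * A ^ 2 + X * A := by
          simp only [Finset.sum_add_distrib]
          congr 1
          · simp only [← Finset.mul_sum]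
            rw [← Finset.sum_mul]; ring
          · rw [hA, Finset.mul_sum]
            refine Finset.sum_congr rfl fun p hp => ?_
            simp [hp]
  have e3 : ∑ n ∈ Finset.Ioc 0 X, (om P n - A) ^ 2 = ∑ n ∈ Finset.Ioc 0 X, om P n ^ 2 - 2 * A * ∑ n ∈ Finset.Ioc 0 X, om P n + X * A ^ 2 := by
    rw [Finset.mul_sum, ← Finset.sum_sub_distrib]
    have : (X:ℝ) * A ^ 2 = ∑ n ∈ Finset.Ioc 0 X, A ^ 2 := by simp
    rw [this, ← Finset.sum_add_distrib]
    exact Finset.sum_congr rfl fun n _ => by ring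
  rw [e3]
  nlinarith

lemma sum_norm_le_sqrt {ι : Type*} (s : Finset ι) (f : ι → ℝ) {B : ℝ} (h : ∑ i ∈ s, f i ^ 2 ≤ B) :
    ∑ i ∈ s, |f i| ≤ √(s.card * B) := by
  apply Real.le_sqrt_of_sq_le
  have := Finset.sum_mul_sq_le_sq_mul_sq s (fun _ => (1:ℝ)) (fun i => |f i|)
  simp only [one_mul, one_pow, Finset.sum_const, nsmul_eq_mul, mul_one, sq_abs] at this
  exact this.trans (by gcongr)

lemma sum_dvd_reindex (X p : ℕ) (hp : 0 < p) (F : ℕ → ℂ) :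
    ∑ n ∈ (Finset.Ioc 0 X).filter (fun n => p ∣ n), F n = ∑ m ∈ (Finset.Ioc 0 X).filter (fun m => p * m ≤ X), F (p * m) := by
  symm
  apply Finset.sum_bij (fun m _ => p * m)
  · intro m hm
    simp only [Finset.mem_filter, Finset.mem_Ioc] at hm ⊢
    exact ⟨⟨Nat.mul_pos hp hm.1.1, hm.2⟩, dvd_mul_right _ _⟩
  · intro a _ b _ h
    exact Nat.eq_of_mul_eq_mul_left hp h
  · intro n hn
    simp only [Finset.mem_filter, Finset.mem_Ioc] at hn
    obtain ⟨⟨h1, h2⟩, m, rfl⟩ := hn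
    refine ⟨m, ?_, rfl⟩
    simp only [Finset.mem_filter, Finset.mem_Ioc]
    exact ⟨⟨Nat.pos_of_mul_pos_left h1, (Nat.le_mul_of_pos_left m hp).trans h2⟩, h2⟩
  · intros; rfl

noncomputable def GG (P : Finset ℕ) (θ : ℝ) (X m : ℕ) : ℂ := ∑ p ∈ P, if p * m ≤ X then ee ((p * m : ℕ) * θ) else 0

lemma GG_sq (P : Finset ℕ) (hP : ∀ p ∈ P, p.Prime) {θ : ℝ} (hθ : Irrational θ) :
    ∃ C : ℝ, 0 ≤ C ∧ ∀ X : ℕ, ∑ m ∈ Finset.Ioc 0 X, ‖GG P θ X m‖ ^ 2 ≤ X * (∑ p ∈ P, (1:ℝ) / p) + C := by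
  refine ⟨∑ p ∈ P, ∑ p' ∈ P, 1 / (2 * nd (((p:ℝ) - p') * θ)), Finset.sum_nonneg fun p _ => Finset.sum_nonneg fun p' _ => by have := nd_nonneg (((p:ℝ) - p') * θ); positivity, fun X => ?_⟩
  have e1 : ∀ m, ((‖GG P θ X m‖ ^ 2 : ℝ) : ℂ) = ∑ p ∈ P, ∑ p' ∈ P, if p * m ≤ X ∧ p' * m ≤ X then ee (m * (((p:ℝ) - p') * θ)) else 0 := by
    intro m
    rw [← Complex.normSq_eq_norm_sq, ← Complex.mul_conj, GG, map_sum, Finset.sum_mul_sum]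
    refine Finset.sum_congr rfl fun p _ => Finset.sum_congr rfl fun p' _ => ?_
    by_cases h1 : p * m ≤ X <;> by_cases h2 : p' * m ≤ X <;> simp only [h1, h2, if_true, if_false, and_self, and_true, and_false, _root_.map_zero, mul_zero, zero_mul]
    rw [← ee_neg, ← ee_add]; congr 1; push_cast; ring
  have e2 : ((∑ m ∈ Finset.Ioc 0 X, ‖GG P θ X m‖ ^ 2 : ℝ) : ℂ) = ∑ p ∈ P, ∑ p' ∈ P, ∑ m ∈ Finset.Ioc 0 X, if p * m ≤ X ∧ p' * m ≤ X then ee (m * (((p:ℝ) - p') * θ)) else 0 := by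
    rw [Complex.ofReal_sum, Finset.sum_congr rfl fun m _ => e1 m, Finset.sum_comm]
    exact Finset.sum_congr rfl fun p _ => Finset.sum_comm
  have e3 : ∑ m ∈ Finset.Ioc 0 X, ‖GG P θ X m‖ ^ 2 ≤ ‖((∑ m ∈ Finset.Ioc 0 X, ‖GG P θ X m‖ ^ 2 : ℝ) : ℂ)‖ := by
    rw [Complex.norm_real]; exact le_abs_self _
  refine e3.trans ?_
  rw [e2, Finset.mul_sum, ← Finset.sum_add_distrib]
  refine norm_sum_le_of_le _ fun p hp => ?_
  have hp0 := (hP p hp).pos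
  have e4 : ∀ p' ∈ P, ‖∑ m ∈ Finset.Ioc 0 X, (if p * m ≤ X ∧ p' * m ≤ X then ee (m * (((p:ℝ) - p') * θ)) else 0)‖
     ≤ (if p = p' then (X:ℝ) * (1 / p) else 0) + 1 / (2 * nd (((p:ℝ) - p') * θ)) := by
    intro p' hp'
    have hp0' := (hP p' hp').pos
    have hset : (Finset.Ioc 0 X).filter (fun m => p * m ≤ X ∧ p' * m ≤ X) = Finset.Ioc 0 (min (X / p) (X / p')) := by
      ext m
      simp only [Finset.mem_filter, Finset.mem_Ioc, le_min_iff, Nat.le_div_iff_mul_le hp0, Nat.le_div_iff_mul_le hp0', mul_comm m]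
      constructor
      · rintro ⟨⟨a, b⟩, c, d⟩; exact ⟨a, c, d⟩
      · rintro ⟨a, c, d⟩; exact ⟨⟨a, (Nat.le_mul_of_pos_left m hp0).trans c⟩, c, d⟩
    rw [← Finset.sum_filter, hset]
    by_cases h : p = p'
    · subst h
      simp only [if_true]
      have : 0 ≤ 1 / (2 * nd (((p:ℝ) - p) * θ)) := by have := nd_nonneg (((p:ℝ) - p) * θ); positivity
      have h5 : ‖∑ m ∈ Finset.Ioc 0 (min (X / p) (X / p)), ee (m * (((p:ℝ) - p) * θ))‖ ≤ ∑ m ∈ Finset.Ioc 0 (min (X / p) (X / p)), (1:ℝ) :=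
        norm_sum_le_of_le _ fun m _ => (norm_ee _).le
      simp only [min_self, Finset.sum_const, Nat.card_Ioc, nsmul_eq_mul, mul_one, tsub_zero] at h5 ⊢
      have := Nat.cast_div_le (α := ℝ) (m := X) (n := p)
      rw [mul_one_div]; linarith
    · simp only [h, if_false, zero_add]
      apply norm_geom_le
      apply nd_pos_of_irrational
      have : ((p:ℝ) - p') = (((p:ℤ) - p' : ℤ) : ℝ) := by push_cast; ring
      rw [this]
      apply hθ.intCast_mul
      intro h'
      apply h
      omega
  calc _ ≤ ∑ p' ∈ P, ((if p = p' then (X:ℝ) * (1 / p) else 0) + 1 / (2 * nd (((p:ℝ) - p') * θ))) := norm_sum_le_of_le _ e4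
    _ = _ := by rw [Finset.sum_add_distrib]; simp [hp]

lemma mu_mul_prime {p : ℕ} (hp : p.Prime) (m : ℕ) : ‖((μ (p * m) : ℤ) : ℂ) + (μ m : ℤ)‖ ≤ if p ∣ m then 1 else 0 := by
  split_ifs with h
  · have : μ (p * m) = 0 := by
      apply moebius_eq_zero_of_not_squarefree
      intro hs
      obtain ⟨k, rfl⟩ := h
      have := hs p ⟨k, by ring⟩
      exact hp.one_lt.ne' (Nat.isUnit_iff.1 this)
    rw [this]; simpa using norm_mu_le m
  · have : μ (p * m) = - μ m := by
      rw [isMultiplicative_moebius.map_mul_of_coprime ((Nat.Prime.coprime_iff_not_dvd hp).2 h), moebius_apply_prime hp]; ring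
    rw [this]; simp

lemma katai_bound (P : Finset ℕ) (hP : ∀ p ∈ P, p.Prime) {θ : ℝ} (hθ : Irrational θ) :
    ∃ C : ℝ, 0 ≤ C ∧ ∀ X : ℕ, (∑ p ∈ P, (1:ℝ) / p) * ‖∑ n ∈ Finset.Ioc 0 X, ((μ n : ℤ) : ℂ) * ee (n * θ)‖
      ≤ 2 * √(X * (X * (∑ p ∈ P, (1:ℝ) / p) + C)) + X * ∑ p ∈ P, (1:ℝ) / (p:ℝ) ^ 2 := by
  obtain ⟨C, hC0, hC⟩ := GG_sq P hP hθ
  set A := ∑ p ∈ P, (1:ℝ) / p with hA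
  have hA0 : 0 ≤ A := Finset.sum_nonneg fun p _ => by positivity
  refine ⟨C + 2 * A * P.card, by positivity, fun X => ?_⟩
  set f : ℕ → ℂ := fun n => ((μ n : ℤ) : ℂ) * ee (n * θ) with hf
  have hf1 : ∀ n, ‖f n‖ ≤ 1 := by
    intro n; simp only [hf]; rw [norm_mul, norm_ee, mul_one]; exact norm_mu_le n
  have s1 : ‖∑ n ∈ Finset.Ioc 0 X, ((A - om P n : ℝ) : ℂ) * f n‖ ≤ √(X * (X * A + (C + 2 * A * P.card))) := by
    have h1 := sum_norm_le_sqrt (Finset.Ioc 0 X) (fun n => om P n - A) (turan_kubilius P hP X)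
    rw [Nat.card_Ioc, tsub_zero] at h1
    calc _ ≤ ∑ n ∈ Finset.Ioc 0 X, |om P n - A| := by
          refine norm_sum_le_of_le _ fun n _ => ?_
          rw [norm_mul, Complex.norm_real, Real.norm_eq_abs, abs_sub_comm]
          exact mul_le_of_le_one_right (abs_nonneg _) (hf1 n)
      _ ≤ _ := h1
      _ ≤ _ := by
          apply Real.sqrt_le_sqrt
          gcongr
          linarith
  have s2 : ‖∑ m ∈ Finset.Ioc 0 X, ((μ m : ℤ) : ℂ) * GG P θ X m‖ ≤ √(X * (X * A + (C + 2 * A * P.card))) := by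
    have h1 := sum_norm_le_sqrt (Finset.Ioc 0 X) (fun m => ‖GG P θ X m‖) (hC X)
    rw [Nat.card_Ioc, tsub_zero] at h1
    calc _ ≤ ∑ n ∈ Finset.Ioc 0 X, |‖GG P θ X n‖| := by
          refine norm_sum_le_of_le _ fun n _ => ?_
          rw [norm_mul, abs_norm]
          exact mul_le_of_le_one_left (norm_nonneg _) (norm_mu_le n)
      _ ≤ _ := h1
      _ ≤ _ := by
          apply Real.sqrt_le_sqrt
          gcongr
          have : 0 ≤ 2 * A * P.card := by positivity
          linarith
  have s3 : ‖∑ n ∈ Finset.Ioc 0 X, ((om P n : ℝ) : ℂ) * f n + ∑ m ∈ Finset.Ioc 0 X, ((μ m : ℤ) : ℂ) * GG P θ X m‖ ≤ X * ∑ p ∈ P, (1:ℝ) / (p:ℝ) ^ 2 := by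
    have e1 : ∑ n ∈ Finset.Ioc 0 X, ((om P n : ℝ) : ℂ) * f n = ∑ p ∈ P, ∑ m ∈ (Finset.Ioc 0 X).filter (fun m => p * m ≤ X), f (p * m) := by
      have : ∀ n, ((om P n : ℝ) : ℂ) * f n = ∑ p ∈ P, if p ∣ n then f n else 0 := by
        intro n
        rw [om]; push_cast; rw [Finset.sum_mul]
        refine Finset.sum_congr rfl fun p _ => ?_
        split_ifs <;> simp
      rw [Finset.sum_congr rfl fun n _ => this n, Finset.sum_comm]
      refine Finset.sum_congr rfl fun p hp => ?_
      rw [← Finset.sum_filter, sum_dvd_reindex X p (hP p hp).pos f]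
    have e2 : ∑ m ∈ Finset.Ioc 0 X, ((μ m : ℤ) : ℂ) * GG P θ X m = ∑ p ∈ P, ∑ m ∈ (Finset.Ioc 0 X).filter (fun m => p * m ≤ X), ((μ m : ℤ) : ℂ) * ee ((p * m : ℕ) * θ) := by
      simp only [GG, Finset.mul_sum]
      rw [Finset.sum_comm]
      refine Finset.sum_congr rfl fun p hp => ?_
      rw [Finset.sum_filter]
      refine Finset.sum_congr rfl fun m _ => ?_
      split_ifs <;> simp
    rw [e1, e2, ← Finset.sum_add_distrib, Finset.mul_sum]
    refine norm_sum_le_of_le _ fun p hp => ?_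
    have hp0 := (hP p hp).pos
    rw [← Finset.sum_add_distrib]
    calc _ ≤ ∑ m ∈ (Finset.Ioc 0 X).filter (fun m => p * m ≤ X), (if p ∣ m then (1:ℝ) else 0) := by
          refine norm_sum_le_of_le _ fun m _ => ?_
          simp only [hf]
          rw [← add_mul, norm_mul, norm_ee, mul_one]
          exact mu_mul_prime (hP p hp) m
      _ = ((X / p / p : ℕ) : ℝ) := by
          have : (Finset.Ioc 0 X).filter (fun m => p * m ≤ X) = Finset.Ioc 0 (X / p) := by
            ext m
            simp only [Finset.mem_filter, Finset.mem_Ioc, Nat.le_div_iff_mul_le hp0, mul_comm m]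
            constructor
            · rintro ⟨⟨a, b⟩, c⟩; exact ⟨a, c⟩
            · rintro ⟨a, c⟩; exact ⟨⟨a, (Nat.le_mul_of_pos_left m hp0).trans c⟩, c⟩
          rw [this, Finset.sum_boole, card_dvd_le]
      _ ≤ _ := by
          rw [Nat.div_div_eq_div_mul]
          refine Nat.cast_div_le.trans (le_of_eq ?_)
          push_cast; field_simp
  have s4 : (A : ℂ) * ∑ n ∈ Finset.Ioc 0 X, f n = ∑ n ∈ Finset.Ioc 0 X, ((A - om P n : ℝ) : ℂ) * f n
      + (∑ n ∈ Finset.Ioc 0 X, ((om P n : ℝ) : ℂ) * f n + ∑ m ∈ Finset.Ioc 0 X, ((μ m : ℤ) : ℂ) * GG P θ X m)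
      - ∑ m ∈ Finset.Ioc 0 X, ((μ m : ℤ) : ℂ) * GG P θ X m := by
    rw [← add_assoc, add_sub_cancel_right, ← Finset.sum_add_distrib, Finset.mul_sum]
    refine Finset.sum_congr rfl fun n _ => ?_
    push_cast; ring
  have s5 : A * ‖∑ n ∈ Finset.Ioc 0 X, f n‖ = ‖(A : ℂ) * ∑ n ∈ Finset.Ioc 0 X, f n‖ := by
    rw [norm_mul, Complex.norm_real, Real.norm_eq_abs, abs_of_nonneg hA0]
  rw [s5, s4]
  refine (norm_sub_le _ _).trans ?_
  have := norm_add_le (∑ n ∈ Finset.Ioc 0 X, ((A - om P n : ℝ) : ℂ) * f n) (∑ n ∈ Finset.Ioc 0 X, ((om P n : ℝ) : ℂ) * f n + ∑ m ∈ Finset.Ioc 0 X, ((μ m : ℤ) : ℂ) * GG P θ X m)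
  linarith

theorem katai {θ : ℝ} (hθ : Irrational θ) :
    Tendsto (fun X : ℕ => ‖∑ n ∈ Finset.Ioc 0 X, ((μ n : ℤ) : ℂ) * ee (n * θ)‖ / X) atTop (𝓝 0) := by
  rw [Metric.tendsto_atTop]
  intro ε hε
  have hsum : Summable fun n : ℕ => (1:ℝ) / (n:ℝ) ^ 2 := Real.summable_one_div_nat_pow.2 one_lt_two
  set S := ∑' n : ℕ, (1:ℝ) / (n:ℝ) ^ 2 with hS
  have hS0 : 0 ≤ S := tsum_nonneg fun n => by positivity
  have hdiv := (not_summable_iff_tendsto_nat_atTop_of_nonneg (f := Set.indicator {p : ℕ | p.Prime} (fun n : ℕ => (1:ℝ) / n))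
    (fun n => Set.indicator_nonneg (fun n _ => by positivity) n)).1 not_summable_one_div_on_primes
  obtain ⟨k, hk⟩ := (hdiv.eventually_gt_atTop (((4 + S) / ε) ^ 2 + 1)).exists
  set P := (Finset.range k).filter Nat.Prime with hPdef
  have hP : ∀ p ∈ P, p.Prime := fun p hp => (Finset.mem_filter.1 hp).2
  have hkA : ((4 + S) / ε) ^ 2 + 1 < ∑ p ∈ P, (1:ℝ) / p := by
    rw [hPdef, Finset.sum_filter]
    convert! hk using 2 with i
    simp [Set.indicator_apply]
  obtain ⟨C, hC0, hC⟩ := katai_bound P hP hθ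
  set A := ∑ p ∈ P, (1:ℝ) / p with hA
  have hA1 : 1 ≤ A := by nlinarith [sq_nonneg ((4 + S) / ε)]
  have hP2 : ∑ p ∈ P, (1:ℝ) / (p:ℝ) ^ 2 ≤ S := hsum.sum_le_tsum P fun n _ => by positivity
  have hsA : (4 + S) / ε < √A := by
    apply Real.lt_sqrt_of_sq_lt; linarith
  refine ⟨⌈C⌉₊ + 1, fun X hX => ?_⟩
  have hX1 : (C:ℝ) ≤ X := (Nat.le_ceil C).trans (by exact_mod_cast (by omega))
  have hX0 : (0:ℝ) < X := by exact_mod_cast (by omega)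
  have h1 := hC X
  have hsA0 : 0 < √A := lt_of_le_of_lt (by positivity) hsA
  have h2 : √(X * (X * A + C)) ≤ X * (2 * √A) := by
    apply Real.sqrt_le_iff.2
    refine ⟨by positivity, ?_⟩
    have : (X * (2 * √A)) ^ 2 = X * (X * (4 * A)) := by
      rw [mul_pow, mul_pow, Real.sq_sqrt (by linarith)]; ring
    rw [this]
    gcongr
    nlinarith
  rw [Real.dist_eq, sub_zero, abs_of_nonneg (by positivity), div_lt_iff₀ hX0]
  have h3 : A * ‖∑ n ∈ Finset.Ioc 0 X, ((μ n : ℤ) : ℂ) * ee (n * θ)‖ ≤ X * (4 * √A + S) := by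
    have : (X:ℝ) * ∑ p ∈ P, (1:ℝ) / (p:ℝ) ^ 2 ≤ X * S := by gcongr
    linarith
  have h4 : A = √A * √A := (Real.mul_self_sqrt (by linarith)).symm
  have h5 : 1 ≤ √A := Real.one_le_sqrt.2 hA1
  rw [div_lt_iff₀ hε] at hsA
  have h6 : A * ‖∑ n ∈ Finset.Ioc 0 X, ((μ n : ℤ) : ℂ) * ee (n * θ)‖ < A * (ε * X) := by
    calc _ ≤ X * (4 * √A + S) := h3
      _ ≤ X * ((4 + S) * √A) := by gcongr; nlinarith
      _ < X * ((√A * ε) * √A) := by gcongr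
      _ = (√A * √A) * (ε * X) := by ring
      _ = A * (ε * X) := by rw [← h4]
  exact lt_of_mul_lt_mul_left h6 (by linarith)

end PNT

namespace PNT
open Filter Topology

lemma count_sep (I : Finset ℕ) (θ : ℕ → ℝ) {s δ : ℝ} (hs : 0 < s) (hδ : 0 ≤ δ)
    (hsep : ∀ d ∈ I, ∀ d' ∈ I, d ≠ d' → s ≤ nd (θ d - θ d')) :
    ((I.filter (fun d => nd (θ d) ≤ δ)).card : ℝ) ≤ 2 * δ / s + 2 := by
  have h1 : (I.filter (fun d => nd (θ d) ≤ δ)).card ≤ (Finset.Icc ⌊-δ / s⌋ ⌊δ / s⌋).card := by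
    apply Finset.card_le_card_of_injOn (fun d => ⌊(θ d - round (θ d)) / s⌋)
    · intro d hd
      simp only [Finset.coe_filter, Set.mem_ofPred_eq] at hd
      have := abs_le.1 hd.2
      simp only [Finset.coe_Icc, Set.mem_Icc]
      constructor
      · apply Int.floor_mono; gcongr; linarith
      · apply Int.floor_mono; gcongr; linarith
    · intro d hd d' hd' h
      simp only [Finset.coe_filter, Set.mem_ofPred_eq] at hd hd'
      by_contra hne
      have h2 := hsep d hd.1 d' hd'.1 hne
      have h3 := nd_le (θ d - θ d') (round (θ d) - round (θ d'))
      have h4 := Int.abs_sub_lt_one_of_floor_eq_floor h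
      rw [← sub_div, abs_div, abs_of_pos hs, div_lt_one hs] at h4
      have : θ d - θ d' - ((round (θ d) - round (θ d') : ℤ) : ℝ) = θ d - round (θ d) - (θ d' - round (θ d')) := by push_cast; ring
      rw [this] at h3
      linarith
  have h2 : ((Finset.Icc ⌊-δ / s⌋ ⌊δ / s⌋).card : ℝ) ≤ 2 * δ / s + 2 := by
    rw [Int.card_Icc]
    have hle : ⌊-δ / s⌋ ≤ ⌊δ / s⌋ := by
      apply Int.floor_mono; gcongr; linarith
    have : (((⌊δ / s⌋ + 1 - ⌊-δ / s⌋).toNat : ℤ) : ℝ) = ⌊δ / s⌋ + 1 - ⌊-δ / s⌋ := by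
      rw [Int.toNat_of_nonneg (by linarith)]; push_cast; ring
    rw [← Int.cast_natCast, this]
    have a1 := Int.floor_le (δ / s)
    have a2 := Int.lt_floor_add_one (-δ / s)
    have a3 : 2 * δ / s = δ / s - (-δ / s) := by ring
    linarith
  exact (by exact_mod_cast h1 : ((I.filter (fun d => nd (θ d) ≤ δ)).card : ℝ) ≤ ((Finset.Icc ⌊-δ / s⌋ ⌊δ / s⌋).card : ℝ)).trans h2

lemma sum_two_pow (k : ℕ) : ∑ i ∈ Finset.Icc 1 k, (2:ℝ) ^ i = 2 ^ (k + 1) - 2 := by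
  induction k with
  | zero => simp
  | succ k ih => rw [Finset.sum_Icc_succ_top (by omega), ih]; ring

lemma min_le_dyadic {t : ℝ} (ht : 0 ≤ t) (k : ℕ) :
    min ((2:ℝ) ^ k) (1 / t) ≤ 2 + ∑ i ∈ Finset.Icc 1 k, if t ≤ (1 / 2) ^ i then (2:ℝ) ^ i else 0 := by
  induction k with
  | zero => simp
  | succ k ih =>
    rw [Finset.sum_Icc_succ_top (by omega)]
    have h0 : 0 ≤ if t ≤ (1 / 2) ^ (k + 1) then (2:ℝ) ^ (k + 1) else 0 := by split_ifs <;> positivity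
    by_cases h : t ≤ (1 / 2) ^ k
    · have : ∑ i ∈ Finset.Icc 1 k, (if t ≤ (1 / 2) ^ i then (2:ℝ) ^ i else 0) = ∑ i ∈ Finset.Icc 1 k, (2:ℝ) ^ i := by
        refine Finset.sum_congr rfl fun i hi => ?_
        rw [if_pos]
        exact h.trans (pow_le_pow_of_le_one (by norm_num) (by norm_num) (Finset.mem_Icc.1 hi).2)
      rw [this, sum_two_pow]
      have := min_le_left ((2:ℝ) ^ (k + 1)) (1 / t)
      linarith
    · have h' : 1 / t ≤ 2 ^ k := by
        push Not at h
        have hp : (0:ℝ) < (1 / 2) ^ k := by positivity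
        calc 1 / t ≤ 1 / (1 / 2) ^ k := one_div_le_one_div_of_le hp h.le
          _ = 2 ^ k := by rw [one_div_pow, one_div_one_div]
      rw [min_eq_right h'] at ih
      have := min_le_right ((2:ℝ) ^ (k + 1)) (1 / t)
      linarith

lemma sep_sum (I : Finset ℕ) (θ : ℕ → ℝ) {s : ℝ} (hs : 0 < s) (k : ℕ)
    (hsep : ∀ d ∈ I, ∀ d' ∈ I, d ≠ d' → s ≤ nd (θ d - θ d')) :
    ∑ d ∈ I, min ((2:ℝ) ^ k) (1 / nd (θ d)) ≤ (2 + 2 * k) / s + 8 * 2 ^ k := by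
  have hcard : (I.card : ℝ) ≤ 1 / s + 2 := by
    have := count_sep I θ hs (show (0:ℝ) ≤ 1 / 2 by norm_num) hsep
    rw [Finset.filter_true_of_mem (fun d _ => nd_le_half _)] at this
    simpa using this
  calc _ ≤ ∑ d ∈ I, (2 + ∑ i ∈ Finset.Icc 1 k, if nd (θ d) ≤ (1 / 2) ^ i then (2:ℝ) ^ i else 0) :=
        Finset.sum_le_sum fun d _ => min_le_dyadic (nd_nonneg _) k
    _ = 2 * I.card + ∑ i ∈ Finset.Icc 1 k, (2:ℝ) ^ i * (I.filter (fun d => nd (θ d) ≤ (1 / 2) ^ i)).card := by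
        rw [Finset.sum_add_distrib, Finset.sum_const, nsmul_eq_mul, mul_comm, Finset.sum_comm]
        congr 1
        refine Finset.sum_congr rfl fun i _ => ?_
        rw [← Finset.sum_filter, Finset.sum_const, nsmul_eq_mul, mul_comm]
    _ ≤ 2 * (1 / s + 2) + ∑ i ∈ Finset.Icc 1 k, (2:ℝ) ^ i * (2 * (1 / 2) ^ i / s + 2) := by
        gcongr with i hi
        exact count_sep I θ hs (by positivity) hsep
    _ = 2 * (1 / s + 2) + ∑ i ∈ Finset.Icc 1 k, (2 / s + 2 * (2:ℝ) ^ i) := by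
        congr 1
        refine Finset.sum_congr rfl fun i _ => ?_
        have : (2:ℝ) ^ i * (1 / 2) ^ i = 1 := by rw [← mul_pow]; norm_num
        calc _ = 2 * ((2:ℝ) ^ i * (1 / 2) ^ i) / s + 2 * 2 ^ i := by ring
          _ = _ := by rw [this]; ring
    _ = 2 * (1 / s + 2) + k * (2 / s) + 2 * (2 ^ (k + 1) - 2) := by
        rw [Finset.sum_add_distrib, ← Finset.mul_sum, sum_two_pow, Finset.sum_const]; simp; ring
    _ ≤ _ := by
        have h1 : (1:ℝ) ≤ 2 ^ k := one_le_pow₀ (by norm_num)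
        have : 2 * (1 / s + 2) + k * (2 / s) + 2 * ((2:ℝ) ^ (k + 1) - 2) = (2 + 2 * k) / s + 4 * 2 ^ k := by ring
        rw [this]; linarith

lemma block_sum {f : ℕ → ℝ} (hf : ∀ n, 0 ≤ f n) {m : ℕ} (hm : 0 < m) {B : ℝ} 
    (h : ∀ u, ∑ d ∈ Finset.Ico u (u + m), f d ≤ B) (u n : ℕ) :
    ∑ d ∈ Finset.Ico u (u + n), f d ≤ ((n:ℝ) / m + 1) * B := by
  have hB : 0 ≤ B := (Finset.sum_nonneg fun d _ => hf d).trans (h 0)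
  have h1 : ∀ k : ℕ, ∑ d ∈ Finset.Ico u (u + k * m), f d ≤ k * B := by
    intro k
    induction k with
    | zero => simp
    | succ k ih =>
      rw [← Finset.sum_Ico_consecutive f (show u ≤ u + k * m by omega) (show u + k * m ≤ u + (k + 1) * m by rw [add_mul]; omega)]
      have := h (u + k * m)
      rw [show u + (k + 1) * m = u + k * m + m by ring]
      push_cast; linarith
  calc _ ≤ ∑ d ∈ Finset.Ico u (u + (n / m + 1) * m), f d := by
        apply Finset.sum_le_sum_of_subset_of_nonneg
        · apply Finset.Ico_subset_Ico le_rfl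
          have := Nat.lt_div_mul_add (a := n) hm
          rw [add_mul, one_mul]; omega
        · intros; exact hf _
    _ ≤ ((n / m + 1 : ℕ) : ℝ) * B := h1 _
    _ ≤ _ := by
        gcongr
        push_cast
        gcongr
        exact Nat.cast_div_le

lemma nd_rat {q : ℕ} (hq : 0 < q) {a : ℤ} {e : ℤ} (h : ¬ (q:ℤ) ∣ e * a) : 1 / (q:ℝ) ≤ nd (e * a / q) := by
  have hq' : (0:ℝ) < q := by exact_mod_cast hq
  unfold nd
  set z := round ((e:ℝ) * a / q)
  have : (e:ℝ) * a / q - z = ((e * a - z * q : ℤ) : ℝ) / q := by push_cast; field_simp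
  rw [this, abs_div, abs_of_pos hq']
  gcongr
  have h0 : e * a - z * q ≠ 0 := by
    intro h0; apply h; exact ⟨z, by linarith⟩
  exact_mod_cast Int.one_le_abs h0

section
variable {α : ℝ} {q : ℕ} {a : ℤ}

lemma not_dvd_mul (hco : IsCoprime (q:ℤ) a) {e : ℤ} (h : ¬ (q:ℤ) ∣ e) : ¬ (q:ℤ) ∣ e * a := 
  fun h' => h (hco.dvd_of_dvd_mul_right h')

lemma nd_alpha (hq : 0 < q) (hco : IsCoprime (q:ℤ) a) {e : ℤ} (h : ¬ (q:ℤ) ∣ e)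
    (he : |(e:ℝ)| * |q * α - a| ≤ 1 / 2) : nd (e * a / q) / 2 ≤ nd (e * α) := by
  have hq' : (0:ℝ) < q := by exact_mod_cast hq
  have h1 := nd_rat hq (not_dvd_mul hco h)
  have h2 := nd_add_le (e * α) (-(e * (q * α - a) / q))
  have h3 : e * α + (-(e * (q * α - a) / q)) = e * a / q := by field_simp; ring
  rw [h3, abs_neg, abs_div, abs_mul, abs_of_pos hq'] at h2
  have h4 : |(e:ℝ)| * |q * α - a| / q ≤ (1 / 2) / q := by gcongr
  have h5 : (1 / 2 : ℝ) / q = (1 / q) / 2 := by ring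
  linarith

/-- first kind of block -/
lemma block1 (hq : 0 < q) (hco : IsCoprime (q:ℤ) a) (k u n : ℕ) :
    ∑ d ∈ Finset.Ico u (u + n), (if ¬ q ∣ d ∧ (d:ℝ) * |q * α - a| ≤ 1 / 2 then min ((2:ℝ) ^ k) (1 / nd (d * α)) else 0)
      ≤ ((n:ℝ) + q) * (36 * (1 + k)) := by
  have hq' : (0:ℝ) < q := by exact_mod_cast hq
  have key := block_sum (f := fun d => if ¬ q ∣ d ∧ (d:ℝ) * |q * α - a| ≤ 1 / 2 then min ((2:ℝ) ^ k) (1 / nd (d * α)) else 0)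
    (fun d => by have := nd_nonneg (d * α); split_ifs <;> positivity) hq (B := 36 * (1 + k) * q) ?_ u n
  · refine key.trans (le_of_eq ?_)
    field_simp
  intro u
  have hpt : ∀ d ∈ Finset.Ico u (u + q), (if ¬ q ∣ d ∧ (d:ℝ) * |q * α - a| ≤ 1 / 2 then min ((2:ℝ) ^ k) (1 / nd (d * α)) else 0)
      ≤ 2 * min ((2:ℝ) ^ (min k (Nat.clog 2 q))) (1 / nd (d * a / q)) := by
    intro d _
    have hnn := nd_nonneg ((d:ℝ) * a / q)
    split_ifs with h
    · have hd : ¬ (q:ℤ) ∣ (d:ℤ) := by exact_mod_cast h.1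
      have h1 := nd_rat hq (not_dvd_mul hco hd)
      have h2 := nd_alpha (α := α) hq hco hd (by simpa using h.2)
      push_cast at h1 h2
      have hpos : 0 < nd ((d:ℝ) * a / q) := lt_of_lt_of_le (by positivity) h1
      have h3 : 1 / nd (d * α) ≤ 2 * (1 / nd (d * a / q)) := by
        calc _ ≤ 1 / (nd (d * a / q) / 2) := one_div_le_one_div_of_le (by positivity) h2
          _ = _ := by field_simp
      have h4 : 1 / nd ((d:ℝ) * a / q) ≤ 2 ^ (Nat.clog 2 q) := by
        calc _ ≤ 1 / (1 / (q:ℝ)) := one_div_le_one_div_of_le (by positivity) h1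
          _ = q := by simp
          _ ≤ _ := by exact_mod_cast Nat.le_pow_clog (by norm_num) q
      rcases le_total k (Nat.clog 2 q) with hk | hk
      · rw [min_eq_left hk, mul_min_of_nonneg _ _ (by norm_num : (0:ℝ) ≤ 2)]
        apply min_le_min _ h3
        have : (0:ℝ) < 2 ^ k := by positivity
        linarith
      · rw [min_eq_right hk, min_eq_right h4]
        exact (min_le_right _ _).trans h3
    · positivity
  have hsep : ∀ d ∈ Finset.Ico u (u + q), ∀ d' ∈ Finset.Ico u (u + q), d ≠ d' → 1 / (q:ℝ) ≤ nd ((fun d : ℕ => (d:ℝ) * a / q) d - (fun d : ℕ => (d:ℝ) * a / q) d') := by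
    intro d hd d' hd' hne
    simp only [Finset.mem_Ico] at hd hd'
    have := nd_rat (q := q) (a := a) (e := (d:ℤ) - d') hq (not_dvd_mul hco (by
      intro h
      have h1 := Int.eq_zero_of_abs_lt_dvd h (by rw [abs_lt]; constructor <;> omega)
      omega))
    push_cast at this
    convert this using 2
    ring
  calc _ ≤ ∑ d ∈ Finset.Ico u (u + q), 2 * min ((2:ℝ) ^ (min k (Nat.clog 2 q))) (1 / nd (d * a / q)) := Finset.sum_le_sum hpt
    _ ≤ 2 * ((2 + 2 * (min k (Nat.clog 2 q) : ℕ)) / (1 / (q:ℝ)) + 8 * 2 ^ (min k (Nat.clog 2 q))) := by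
        rw [← Finset.mul_sum]
        gcongr
        exact sep_sum _ _ (by positivity) _ hsep
    _ ≤ 2 * ((2 + 2 * k) / (1 / (q:ℝ)) + 8 * (2 * q)) := by
        gcongr
        · exact min_le_left _ _
        · have h1 : (2:ℝ) ^ (min k (Nat.clog 2 q)) ≤ 2 ^ (Nat.clog 2 q) := pow_le_pow_right₀ (by norm_num) (min_le_right _ _)
          refine h1.trans ?_
          rcases Nat.lt_or_ge 1 q with h2 | h2
          · have h3 := Nat.pow_pred_clog_lt_self (b := 2) (by norm_num) h2
            have h4 : 0 < Nat.clog 2 q := Nat.clog_pos (by norm_num) h2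
            have h5 : 2 ^ (Nat.clog 2 q) = 2 ^ (Nat.clog 2 q).pred * 2 := by
              rw [← pow_succ]; congr 1; exact (Nat.succ_pred_eq_of_pos h4).symm
            have : 2 ^ (Nat.clog 2 q) ≤ 2 * q := by omega
            exact_mod_cast this
          · have : q = 1 := by omega
            subst this; simp
    _ ≤ _ := by
        rw [div_div_eq_mul_div, div_one]
        nlinarith [(k.cast_nonneg : (0:ℝ) ≤ k)]

/-- second kind of block -/
lemma block2 (hq : 0 < q) (hco : IsCoprime (q:ℤ) a) (hb0 : 0 < |q * α - a|) (hb1 : |q * α - a| * q ≤ 1)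
    (hb2 : |q * α - a| ≤ 1 / 2) (k u n : ℕ) {Y : ℝ} (hn : n ≤ Y) (hY : (u + n : ℝ) ≤ Y + 1) :
    ∑ d ∈ Finset.Ico u (u + n), (if 1 / 2 < (d:ℝ) * |q * α - a| then min ((2:ℝ) ^ k) (1 / nd (d * α)) else 0)
      ≤ 24 * Y * (1 + k) + 24 * (Y * |q * α - a|) * 2 * 2 ^ k := by
  set b := |q * α - a| with hb
  have hY0 : 0 ≤ Y := le_trans n.cast_nonneg hn
  by_cases hbY : b * Y ≤ 1 / 2
  · rw [Finset.sum_eq_zero]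
    · positivity
    · intro d hd
      rw [if_neg]
      push Not
      rw [Finset.mem_Ico] at hd
      have : (d:ℝ) + 1 ≤ u + n := by exact_mod_cast hd.2
      have : (d:ℝ) ≤ Y := by linarith
      nlinarith
  push Not at hbY
  set m := ⌊1 / (2 * b)⌋₊ with hm
  have hD1 : 1 ≤ 1 / (2 * b) := by rw [le_div_iff₀ (by positivity)]; linarith
  have hm0 : 0 < m := Nat.floor_pos.2 hD1
  have hm1 : (m:ℝ) ≤ 1 / (2 * b) := Nat.floor_le (by positivity)
  have hm2 : 1 / (2 * b) ≤ 2 * m := by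
    have := Nat.lt_floor_add_one (1 / (2 * b))
    have h1 : (1:ℝ) ≤ m := by exact_mod_cast hm0
    rw [← hm] at this
    linarith
  have hsep : ∀ u, ∀ d ∈ Finset.Ico u (u + m), ∀ d' ∈ Finset.Ico u (u + m), d ≠ d' → b / 2 ≤ nd ((fun d : ℕ => (d:ℝ) * α) d - (fun d : ℕ => (d:ℝ) * α) d') := by
    intro u d hd d' hd' hne
    simp only [Finset.mem_Ico] at hd hd'
    set e : ℤ := (d:ℤ) - d' with he
    have he0 : e ≠ 0 := by omega
    have hem : |e| ≤ m := by rw [abs_le]; constructor <;> omega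
    have hem' : |(e:ℝ)| ≤ m := by exact_mod_cast hem
    have heq : (d:ℝ) * α - d' * α = e * α := by rw [he]; push_cast; ring
    show b / 2 ≤ nd ((d:ℝ) * α - d' * α)
    rw [heq]
    have heb : |(e:ℝ)| * b ≤ 1 / 2 := by
      calc |(e:ℝ)| * b ≤ 1 / (2 * b) * b := by gcongr; linarith
        _ = 1 / 2 := by field_simp
    have hq' : (0:ℝ) < q := by exact_mod_cast hq
    by_cases hdv : (q:ℤ) ∣ e
    · obtain ⟨j, hj⟩ := hdv
      have hj0 : j ≠ 0 := by rintro rfl; simp at hj; exact he0 hj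
      have hj1 : (1:ℝ) ≤ |(j:ℝ)| := by exact_mod_cast Int.one_le_abs hj0
      have hej : (e:ℝ) = q * j := by exact_mod_cast hj
      have h1 : |(j:ℝ)| * b ≤ 1 / 2 := by
        refine le_trans ?_ heb
        rw [hej, abs_mul, abs_of_pos hq']
        have : (1:ℝ) ≤ q := by exact_mod_cast hq
        gcongr
        nlinarith
      -- nd of e α
      have h2 : (e:ℝ) * α = j * (q * α - a) + ((j * a : ℤ) : ℝ) := by rw [hej]; push_cast; ring
      unfold nd
      rw [h2, round_add_intCast]
      have h3 : |(j:ℝ) * (q * α - a)| = |(j:ℝ)| * b := abs_mul _ _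
      set y := (j:ℝ) * (q * α - a)
      have h4 : y + ((j * a : ℤ) : ℝ) - ((round y + j * a : ℤ) : ℝ) = y - round y := by push_cast; ring
      rw [h4]
      by_cases hr : round y = 0
      · rw [hr, Int.cast_zero, sub_zero, h3]; nlinarith
      · have h5 : (1:ℝ) ≤ |(round y : ℝ)| := by exact_mod_cast Int.one_le_abs hr
        have h6 := abs_sub_abs_le_abs_sub (round y : ℝ) y
        rw [abs_sub_comm (round y : ℝ) y] at h6
        have : b / 2 ≤ 1 / 2 := by linarith
        linarith
    · have h1 := nd_alpha (α := α) hq hco hdv heb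
      have h2 := nd_rat hq (not_dvd_mul hco hdv)
      have h3 : b ≤ 1 / q := by rw [le_div_iff₀ hq']; exact hb1
      linarith
  have key := block_sum (f := fun d : ℕ => if 1 / 2 < (d:ℝ) * b then min ((2:ℝ) ^ k) (1 / nd (d * α)) else 0)
    (fun d => by have := nd_nonneg (d * α); split_ifs <;> positivity) hm0 (B := (2 + 2 * k) / (b / 2) + 8 * 2 ^ k) ?_ u n
  · refine key.trans ?_
    have h1 : (n:ℝ) / m + 1 ≤ 6 * (Y * b) := by
      have : (n:ℝ) / m ≤ Y * (4 * b) := by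
        rw [div_le_iff₀ (by exact_mod_cast hm0)]
        have h8 : 1 ≤ 4 * b * m := by
          have := mul_le_mul_of_nonneg_left hm2 (show (0:ℝ) ≤ 2 * b by positivity)
          rw [mul_one_div_cancel (by positivity)] at this
          linarith
        nlinarith
      nlinarith
    calc ((n:ℝ) / m + 1) * ((2 + 2 * k) / (b / 2) + 8 * 2 ^ k) ≤ (6 * (Y * b)) * ((2 + 2 * k) / (b / 2) + 8 * 2 ^ k) := by gcongr
      _ = 24 * Y * (1 + k) + 24 * (Y * b) * 2 * 2 ^ k := by field_simp; ring
  intro u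
  refine le_trans (Finset.sum_le_sum fun d _ => ?_) (sep_sum (Finset.Ico u (u + m)) (fun d : ℕ => (d:ℝ) * α) (by positivity) k (hsep u))
  have := nd_nonneg (d * α)
  split_ifs
  · rfl
  · positivity

end

end PNT

namespace PNT
open Filter Topology

variable {α : ℝ} {q : ℕ} {a : ℤ}

lemma Ti_bound (hq : 0 < q) (hco : IsCoprime (q:ℤ) a) (hb0 : 0 < |q * α - a|) (hb1 : |q * α - a| * q ≤ 1)
    (hb2 : |q * α - a| ≤ 1 / 2) (N i : ℕ) :
    ∑ d ∈ Finset.Ico (N / 2 ^ (i+1) + 1) (N / 2 ^ i + 1), (if ¬ q ∣ d then min ((2:ℝ) ^ (i+1)) (1 / nd (d * α)) else 0)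
      ≤ (i + 2) * (60 * (N / 2 ^ i)) + (i+2) * (36 * q) + 96 * (N * |q * α - a|) := by
  have hle : N / 2 ^ (i+1) ≤ N / 2 ^ i := Nat.div_le_div_left (Nat.pow_le_pow_right (by norm_num) (by omega)) (by positivity)
  obtain ⟨n, hn⟩ := Nat.exists_eq_add_of_le hle
  set u := N / 2 ^ (i+1) + 1 with hu
  have hun : N / 2 ^ i + 1 = u + n := by omega
  rw [hun]
  have hY : ((N / 2 ^ i : ℕ) : ℝ) ≤ (N:ℝ) / 2 ^ i := by
    have := @Nat.cast_div_le ℝ _ _ _ N (2 ^ i)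
    simpa using this
  have hnY : (n:ℝ) ≤ (N:ℝ) / 2 ^ i := by
    refine le_trans ?_ hY
    exact_mod_cast (by rw [hn]; exact Nat.le_add_left _ _ : n ≤ N / 2 ^ i)
  have huY : ((u:ℝ) + n) ≤ (N:ℝ) / 2 ^ i + 1 := by
    have : ((u:ℝ) + n) = ((N / 2 ^ i : ℕ) : ℝ) + 1 := by exact_mod_cast hun.symm
    rw [this]; linarith
  have b1 := block1 (α := α) hq hco (i+1) u n
  have b2 := block2 (α := α) hq hco hb0 hb1 hb2 (i+1) u n hnY huY
  have hpt : ∑ d ∈ Finset.Ico u (u+n), (if ¬ q ∣ d then min ((2:ℝ) ^ (i+1)) (1 / nd (d * α)) else 0)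
     ≤ ∑ d ∈ Finset.Ico u (u+n), ((if ¬ q ∣ d ∧ (d:ℝ) * |q * α - a| ≤ 1 / 2 then min ((2:ℝ) ^ (i+1)) (1 / nd (d * α)) else 0)
       + (if 1 / 2 < (d:ℝ) * |q * α - a| then min ((2:ℝ) ^ (i+1)) (1 / nd (d * α)) else 0)) := by
    apply Finset.sum_le_sum
    intro d _
    have h0 : (0:ℝ) ≤ min ((2:ℝ) ^ (i+1)) (1 / nd (d * α)) := by
      have := nd_nonneg (d * α); positivity
    by_cases h1 : q ∣ d
    · simp only [h1, not_true, if_false, false_and, zero_add]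
      split_ifs
      · exact h0
      · exact le_rfl
    · by_cases h2 : (d:ℝ) * |q * α - a| ≤ 1 / 2
      · rw [if_pos h1, if_pos ⟨h1, h2⟩, if_neg (not_lt.2 h2), add_zero]
      · rw [if_pos h1, if_neg (fun h => h2 h.2), if_pos (not_le.1 h2), zero_add]
  rw [Finset.sum_add_distrib] at hpt
  refine hpt.trans ((add_le_add b1 b2).trans ?_)
  have e : (24:ℝ) * (N / 2 ^ i * |q * α - a|) * 2 * 2 ^ (i+1) = 96 * (N * |q * α - a|) := by
    rw [pow_succ]; field_simp; ring
  rw [e]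
  push_cast
  have : ((n:ℝ) + q) * (36 * (1 + (i + 1))) ≤ ((N:ℝ) / 2 ^ i + q) * (36 * (1 + (i + 1))) := by gcongr
  nlinarith

lemma typeI (hα : Irrational α) (hq : 0 < q) (hco : IsCoprime (q:ℤ) a) (hb0 : 0 < |q * α - a|) (hb1 : |q * α - a| * q ≤ 1)
    (hb2 : |q * α - a| ≤ 1 / 2) (N i0 : ℕ) :
    ∑ d ∈ Finset.Ioc 0 N, (if ¬ q ∣ d then ‖∑ m ∈ Finset.Ioc (2 ^ i0) (N / d), (Real.log m : ℂ) * ee (m * (d * α))‖ else 0)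
      ≤ 60 * N * ∑ i ∈ Finset.Ico i0 (Nat.log 2 N + 1), ((i:ℝ) + 2) ^ 2 / 2 ^ i
        + (36 * q + 96 * (N * |q * α - a|)) * (Nat.log 2 N + 2) ^ 3 := by
  set L := Nat.log 2 N with hL
  have hpt : ∀ d ∈ Finset.Ioc 0 N, (if ¬ q ∣ d then ‖∑ m ∈ Finset.Ioc (2 ^ i0) (N / d), (Real.log m : ℂ) * ee (m * (d * α))‖ else 0)
      ≤ ∑ i ∈ Finset.Ico i0 (L+1), (if d ∈ Finset.Ico (N / 2 ^ (i+1) + 1) (N / 2 ^ i + 1) then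
          ((i:ℝ) + 1) * (if ¬ q ∣ d then min ((2:ℝ) ^ (i+1)) (1 / nd (d * α)) else 0) else 0) := by
    intro d hd
    have hd0 := Finset.mem_Ioc.1 hd
    have hnn : ∀ i : ℕ, 0 ≤ (if d ∈ Finset.Ico (N / 2 ^ (i+1) + 1) (N / 2 ^ i + 1) then
          ((i:ℝ) + 1) * (if ¬ q ∣ d then min ((2:ℝ) ^ (i+1)) (1 / nd (d * α)) else 0) else 0) := by
      intro i
      have := nd_nonneg (d * α)
      split_ifs <;> positivity
    by_cases h1 : q ∣ d
    · simp only [h1, not_true, if_false]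
      simp
    by_cases h2 : N / d ≤ 2 ^ i0
    · rw [Finset.Ioc_eq_empty (by omega)]
      simp only [Finset.sum_empty, norm_zero, ite_self]
      exact Finset.sum_nonneg (fun i _ => hnn i)
    · push Not at h2
      set i := Nat.log 2 (N / d) with hi
      have hM0 : N / d ≠ 0 := by have : 0 < 2 ^ i0 := by positivity
                                 omega
      have hlo : 2 ^ i ≤ N / d := Nat.pow_log_le_self 2 hM0
      have hhi : N / d < 2 ^ (i+1) := Nat.lt_pow_succ_log_self (by norm_num) _
      have hi1 : i0 ≤ i := (Nat.le_log_iff_pow_le (by norm_num) hM0).2 h2.le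
      have hi2 : i < L + 1 := by
        have : i ≤ L := Nat.log_mono_right (Nat.div_le_self N d)
        omega
      have hmem : d ∈ Finset.Ico (N / 2 ^ (i+1) + 1) (N / 2 ^ i + 1) := by
        rw [Finset.mem_Ico]
        constructor
        · rw [Nat.succ_le_iff, Nat.div_lt_iff_lt_mul (by positivity), mul_comm]
          exact (Nat.div_lt_iff_lt_mul hd0.1).1 hhi
        · rw [Nat.lt_succ_iff, Nat.le_div_iff_mul_le (by positivity), mul_comm]
          exact (Nat.le_div_iff_mul_le hd0.1).1 hlo
      refine le_trans ?_ (Finset.single_le_sum (fun i _ => hnn i) (Finset.mem_Ico.2 ⟨hi1, hi2⟩))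
      rw [if_pos h1, if_pos hmem, if_pos h1]
      have hnd : 0 < nd (d * α) := nd_pos_of_irrational (by
        exact hα.natCast_mul (by omega))
      refine (inner_sum_le _ _ _ hnd).trans ?_
      have hlog : Real.log ((N / d : ℕ) : ℝ) ≤ i + 1 := by
        have h3 : ((N / d : ℕ) : ℝ) ≤ 2 ^ (i+1) := by exact_mod_cast hhi.le
        have h4 := Real.log_le_log (by exact_mod_cast Nat.pos_of_ne_zero hM0) h3
        rw [Real.log_pow] at h4
        have h5 : Real.log 2 ≤ 1 := by have := Real.log_two_lt_d9; linarith
        push_cast at h4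
        nlinarith
      have h3 : ((N / d : ℕ) : ℝ) ≤ 2 ^ (i+1) := by exact_mod_cast hhi.le
      gcongr
  refine (Finset.sum_le_sum hpt).trans ?_
  rw [Finset.sum_comm]
  have hi : ∀ i ∈ Finset.Ico i0 (L+1), ∑ d ∈ Finset.Ioc 0 N, (if d ∈ Finset.Ico (N / 2 ^ (i+1) + 1) (N / 2 ^ i + 1) then
          ((i:ℝ) + 1) * (if ¬ q ∣ d then min ((2:ℝ) ^ (i+1)) (1 / nd (d * α)) else 0) else 0)
      ≤ 60 * N * (((i:ℝ) + 2) ^ 2 / 2 ^ i) + (36 * q + 96 * (N * |q * α - a|)) * (L+2)^2 := by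
    intro i hi
    have hiL : (i:ℝ) ≤ L := by exact_mod_cast Nat.lt_succ_iff.1 (Finset.mem_Ico.1 hi).2
    rw [← Finset.sum_filter]
    have hsub : (Finset.Ioc 0 N).filter (fun d => d ∈ Finset.Ico (N / 2 ^ (i+1) + 1) (N / 2 ^ i + 1)) ⊆ Finset.Ico (N / 2 ^ (i+1) + 1) (N / 2 ^ i + 1) := by
      intro d hd; exact (Finset.mem_filter.1 hd).2
    refine (Finset.sum_le_sum_of_subset_of_nonneg hsub (fun d _ _ => by
      have := nd_nonneg (d * α); split_ifs <;> positivity)).trans ?_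
    rw [← Finset.mul_sum]
    have h1 := mul_le_mul_of_nonneg_left (Ti_bound hq hco hb0 hb1 hb2 N i) (show (0:ℝ) ≤ i + 1 by positivity)
    refine h1.trans ?_
    set b := |q * α - a|
    have e1 : ((i:ℝ)+1) * ((i + 2) * (60 * (N / 2 ^ i))) ≤ 60 * N * (((i:ℝ) + 2) ^ 2 / 2 ^ i) := by
      have : 60 * N * (((i:ℝ) + 2) ^ 2 / 2 ^ i) = ((i:ℝ)+2) * ((i + 2) * (60 * (N / 2 ^ i))) := by ring
      rw [this]; gcongr; norm_num
    have e2 : ((i:ℝ)+1) * ((i+2) * (36 * q)) ≤ (L+2)^2 * (36 * q) := by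
      rw [← mul_assoc]; gcongr; nlinarith
    have e3 : ((i:ℝ)+1) * (96 * (N * b)) ≤ (L+2)^2 * (96 * (N * b)) := by
      gcongr; nlinarith
    linarith
  refine (Finset.sum_le_sum hi).trans ?_
  rw [Finset.sum_add_distrib, ← Finset.mul_sum, Finset.sum_const, nsmul_eq_mul]
  refine add_le_add le_rfl ?_
  have : ((Finset.Ico i0 (L+1)).card : ℝ) ≤ L + 2 := by
    rw [Nat.card_Ico]; exact_mod_cast (by omega : L + 1 - i0 ≤ L + 2)
  have h0 : 0 ≤ (36 * q + 96 * (N * |q * α - a|)) * ((L:ℝ)+2)^2 := by positivity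
  calc _ ≤ ((L:ℝ)+2) * ((36 * q + 96 * (N * |q * α - a|)) * ((L:ℝ)+2)^2) := by gcongr
    _ = _ := by ring

end PNT

namespace PNT
open Filter Topology ArithmeticFunction
open scoped ArithmeticFunction.Moebius ArithmeticFunction.zeta

lemma hyperbola (F : ℕ → ℕ → ℂ) (N : ℕ) :
    ∑ n ∈ Finset.Ioc 0 N, ∑ x ∈ n.divisorsAntidiagonal, F x.1 x.2
      = ∑ d ∈ Finset.Ioc 0 N, ∑ m ∈ Finset.Ioc 0 (N / d), F d m := by
  rw [Finset.sum_sigma', Finset.sum_sigma']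
  apply Finset.sum_bij' (fun x _ => (⟨x.2.1, x.2.2⟩ : (_ : ℕ) × ℕ)) (fun x _ => (⟨x.1 * x.2, (x.1, x.2)⟩ : (_ : ℕ) × (ℕ × ℕ)))
  · rintro ⟨n, d, m⟩ h
    simp only [Finset.mem_sigma, Finset.mem_Ioc, Nat.mem_divisorsAntidiagonal] at h ⊢
    obtain ⟨⟨h1, h2⟩, h3, h4⟩ := h
    subst h3
    have hd : 0 < d := Nat.pos_of_mul_pos_right h1
    have hm : 0 < m := Nat.pos_of_mul_pos_left h1
    refine ⟨⟨hd, (Nat.le_mul_of_pos_right d hm).trans h2⟩, hm, ?_⟩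
    rw [Nat.le_div_iff_mul_le hd, mul_comm]; exact h2
  · rintro ⟨d, m⟩ h
    simp only [Finset.mem_sigma, Finset.mem_Ioc, Nat.mem_divisorsAntidiagonal] at h ⊢
    obtain ⟨⟨h1, h2⟩, h3, h4⟩ := h
    have := Nat.mul_pos h1 h3
    refine ⟨⟨this, ?_⟩, trivial, this.ne'⟩
    rw [Nat.le_div_iff_mul_le h1, mul_comm] at h4; exact h4
  · rintro ⟨n, d, m⟩ h
    simp only [Finset.mem_sigma, Finset.mem_Ioc, Nat.mem_divisorsAntidiagonal] at h ⊢
    obtain ⟨⟨h1, h2⟩, h3, h4⟩ := h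
    subst h3; rfl
  · rintro ⟨d, m⟩ h; rfl
  · rintro ⟨n, d, m⟩ h; rfl

/-- Moebius restricted to integers coprime to q -/
noncomputable def cq (q : ℕ) : ArithmeticFunction ℝ := ⟨fun n => if n.Coprime q then (μ n : ℝ) else 0, by simp⟩
open Classical in
/-- indicator of integers all of whose prime factors divide q -/
noncomputable def sq (q : ℕ) : ArithmeticFunction ℝ := ⟨fun n => if n ∈ Nat.factoredNumbers q.primeFactors then 1 else 0, by simp [Nat.factoredNumbers]⟩

lemma cq_apply (q n : ℕ) : cq q n = if n.Coprime q then (μ n : ℝ) else 0 := rfl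
open Classical in
lemma sq_apply (q n : ℕ) : sq q n = if n ∈ Nat.factoredNumbers q.primeFactors then 1 else 0 := rfl

lemma cq_mult (q : ℕ) : (cq q).IsMultiplicative := by
  rw [IsMultiplicative.iff_ne_zero]
  refine ⟨by simp [cq_apply], ?_⟩
  intro m n hm hn hmn
  simp only [cq_apply, Nat.coprime_mul_iff_left]
  rw [isMultiplicative_moebius.map_mul_of_coprime hmn]
  split_ifs <;> simp_all

lemma sq_mult (q : ℕ) : (sq q).IsMultiplicative := by
  rw [IsMultiplicative.iff_ne_zero]
  refine ⟨by simp [sq_apply, Nat.factoredNumbers], ?_⟩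
  intro m n hm hn hmn
  have : m * n ∈ Nat.factoredNumbers q.primeFactors ↔ m ∈ Nat.factoredNumbers q.primeFactors ∧ n ∈ Nat.factoredNumbers q.primeFactors := by
    simp only [Nat.factoredNumbers, Set.mem_ofPred_eq, ne_eq, mul_eq_zero, hm, hn, or_self, not_false_eq_true, true_and]
    constructor
    · intro h
      exact ⟨fun p hp => h p ((Nat.mem_primeFactorsList_mul hm hn).2 (Or.inl hp)), fun p hp => h p ((Nat.mem_primeFactorsList_mul hm hn).2 (Or.inr hp))⟩
    · rintro ⟨h1, h2⟩ p hp
      rcases (Nat.mem_primeFactorsList_mul hm hn).1 hp with h | h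
      · exact h1 p h
      · exact h2 p h
  simp only [sq_apply, this]
  by_cases h1 : m ∈ Nat.factoredNumbers q.primeFactors <;> by_cases h2 : n ∈ Nat.factoredNumbers q.primeFactors <;> simp [h1, h2]

lemma cq_mul_zeta {q : ℕ} (hq : 0 < q) : cq q * (ζ : ArithmeticFunction ℝ) = sq q := by
  have hz : ((ζ : ArithmeticFunction ℕ) : ArithmeticFunction ℝ).IsMultiplicative := isMultiplicative_zeta.natCast
  rw [IsMultiplicative.eq_iff_eq_on_prime_powers _ ((cq_mult q).mul hz) _ (sq_mult q)]
  intro p k hp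
  rw [coe_mul_zeta_apply, Nat.sum_divisors_prime_pow hp]
  rcases k with _ | k
  · simp [cq_apply, sq_apply, Nat.factoredNumbers]
  have hs : sq q (p ^ (k+1)) = if p ∣ q then 1 else 0 := by
    have : p ^ (k+1) ∈ Nat.factoredNumbers q.primeFactors ↔ p ∣ q := by
      simp only [Nat.factoredNumbers, Set.mem_ofPred_eq]
      rw [hp.primeFactorsList_pow]
      simp [hp, hp.ne_zero, hq.ne']
    rw [sq_apply]; simp only [this]
  rw [hs, Finset.sum_range_succ', Finset.sum_range_succ']
  have h2 : ∑ j ∈ Finset.range k, cq q (p ^ (j + 1 + 1)) = 0 := by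
    apply Finset.sum_eq_zero
    intro j _
    have : μ (p ^ (j+1+1)) = 0 := by
      rw [moebius_apply_prime_pow hp (by omega)]; simp
    simp [cq_apply, this]
  rw [h2]
  simp only [zero_add, pow_one, pow_zero, cq_apply, moebius_apply_prime hp]
  by_cases h : p ∣ q
  · have : ¬ p.Coprime q := fun h' => (hp.coprime_iff_not_dvd.1 h') h
    simp [h, this]
  · have : p.Coprime q := hp.coprime_iff_not_dvd.2 h
    rw [if_pos this, if_neg h]; simp

lemma cq_mul_log {q : ℕ} (hq : 0 < q) : cq q * log = sq q * vonMangoldt := by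
  rw [← vonMangoldt_mul_zeta, ← cq_mul_zeta hq, mul_comm vonMangoldt, mul_assoc]

lemma sq_nonneg' (q n : ℕ) : 0 ≤ sq q n := by rw [sq_apply]; split_ifs <;> norm_num

lemma h_nonneg {q : ℕ} (hq : 0 < q) (n : ℕ) : 0 ≤ (cq q * log) n := by
  rw [cq_mul_log hq, mul_apply]
  exact Finset.sum_nonneg fun x _ => mul_nonneg (sq_nonneg' _ _) vonMangoldt_nonneg

lemma psi_nat_le (M : ℕ) : ∑ m ∈ Finset.Ioc 0 M, vonMangoldt m ≤ (Real.log 4 + 4) * M := by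
  have := Chebyshev.psi_le_const_mul_self (x := (M:ℝ)) (by positivity)
  simpa [Chebyshev.psi] using this

lemma sum_sq_le {q : ℕ} (hq : 0 < q) (Y : ℕ) : ∑ n ∈ Finset.Ioc 0 Y, sq q n * (1 / n) ≤ 2 * √q := by
  classical
  let f : ℕ →* ℝ := { toFun := fun n => if n = 0 then 0 else (1 / (n:ℝ)), map_one' := by simp, map_mul' := by
                        intro a b
                        by_cases ha : a = 0 <;> by_cases hb : b = 0 <;> simp [ha, hb, mul_comm] }
  have hfp : ∀ {p : ℕ}, p.Prime → f p = 1 / (p:ℝ) := by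
    intro p hp; simp [f, hp.ne_zero]
  have h := EulerProduct.summable_and_hasSum_factoredNumbers_prod_filter_prime_geometric (f := f)
    (fun {p} hp => by
      rw [hfp hp, Real.norm_of_nonneg (by positivity), div_lt_one (by exact_mod_cast hp.pos)]
      exact_mod_cast hp.one_lt) q.primeFactors
  have hle : ∑ n ∈ Finset.Ioc 0 Y, sq q n * (1 / n) ≤ ∏ p ∈ q.primeFactors with p.Prime, (1 - f p)⁻¹ := by
    have h2 := (hasSum_subtype_iff_indicator).1 h.2
    refine le_trans (le_of_eq ?_) (h2.summable.sum_le_tsum (Finset.Ioc 0 Y) ?_ |>.trans_eq h2.tsum_eq)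
    · apply Finset.sum_congr rfl
      intro n hn
      have : n ≠ 0 := (Finset.mem_Ioc.1 hn).1.ne'
      rw [sq_apply, Set.indicator_apply]
      split_ifs <;> simp [f, this]
    · intro n _
      apply Set.indicator_nonneg
      intro n _
      simp only [f, MonoidHom.coe_mk, OneHom.coe_mk]
      split_ifs <;> positivity
  refine hle.trans ?_
  have hfil : q.primeFactors.filter (fun p => p.Prime) = q.primeFactors := by
    apply Finset.filter_true_of_mem
    intro p hp; exact Nat.prime_of_mem_primeFactors hp
  rw [hfil]
  have h3 : ∏ p ∈ q.primeFactors, (1 - f p)⁻¹ ≤ ∏ p ∈ q.primeFactors, ((if p = 2 then 2 else 1) * √(p:ℝ)) := by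
    apply Finset.prod_le_prod
    · intro p hp
      have hp := Nat.prime_of_mem_primeFactors hp
      rw [hfp hp, inv_nonneg, sub_nonneg, div_le_one (by exact_mod_cast hp.pos)]
      exact_mod_cast hp.one_lt.le
    · intro p hp
      have hp := Nat.prime_of_mem_primeFactors hp
      rw [hfp hp]
      split_ifs with h2
      · subst h2
        have : (1:ℝ) ≤ √2 := by rw [Real.one_le_sqrt]; norm_num
        push_cast
        norm_num
      · rw [one_mul]
        have hp3 : (3:ℝ) ≤ p := by
          have := hp.two_le
          exact_mod_cast (by omega : 3 ≤ p)
        have hpos : (0:ℝ) < 1 - 1 / p := by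
          rw [sub_pos, div_lt_one (by linarith)]; linarith
        rw [inv_le_comm₀ hpos (by positivity)]
        have h4 : (√(p:ℝ))⁻¹ ≤ 1 - 1 / p := by
          have hs : √(p:ℝ) * √(p:ℝ) = p := Real.mul_self_sqrt (by positivity)
          have hs3 : (1.7:ℝ) ≤ √(p:ℝ) := by
            apply Real.le_sqrt_of_sq_le; norm_num; linarith
          have : 1 / (p:ℝ) = (√(p:ℝ))⁻¹ * (√(p:ℝ))⁻¹ := by
            rw [← mul_inv, hs, one_div]
          rw [this]
          have h5 : (√(p:ℝ))⁻¹ ≤ (1.7:ℝ)⁻¹ := by gcongr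
          have h6 : 0 ≤ (√(p:ℝ))⁻¹ := by positivity
          have h7 : (√(p:ℝ))⁻¹ ≤ 0.6 := h5.trans (by norm_num)
          nlinarith
        exact h4
  refine h3.trans ?_
  rw [Finset.prod_mul_distrib]
  have h4 : ∏ p ∈ q.primeFactors, (if p = 2 then (2:ℝ) else 1) ≤ 2 := by
    rw [Finset.prod_ite_eq']
    split_ifs <;> norm_num
  have h5 : ∏ p ∈ q.primeFactors, √(p:ℝ) ≤ √(q:ℝ) := by
    rw [← Real.sqrt_prod _ (fun p _ => by positivity)]
    apply Real.sqrt_le_sqrt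
    have := Nat.le_of_dvd hq (Nat.prod_primeFactors_dvd q)
    rw [← Nat.cast_prod]
    exact_mod_cast this
  have h6 : 0 ≤ ∏ p ∈ q.primeFactors, √(p:ℝ) := Finset.prod_nonneg fun p _ => by positivity
  gcongr

lemma h_sum_le {q : ℕ} (hq : 0 < q) (Y : ℕ) : ∑ n ∈ Finset.Ioc 0 Y, (cq q * log) n ≤ (Real.log 4 + 4) * Y * (2 * √q) := by
  rw [cq_mul_log hq, sum_Ioc_mul_eq_sum_sum]
  have hc : 0 ≤ Real.log 4 + 4 := by have := Real.log_nonneg (show (1:ℝ) ≤ 4 by norm_num); linarith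
  calc _ ≤ ∑ n ∈ Finset.Ioc 0 Y, sq q n * ((Real.log 4 + 4) * (Y / n)) := by
        apply Finset.sum_le_sum
        intro n _
        refine mul_le_mul_of_nonneg_left ((psi_nat_le _).trans ?_) (sq_nonneg' _ _)
        gcongr
        exact Nat.cast_div_le
    _ = (Real.log 4 + 4) * Y * ∑ n ∈ Finset.Ioc 0 Y, sq q n * (1 / n) := by
        rw [Finset.mul_sum]; apply Finset.sum_congr rfl; intro n _; ring
    _ ≤ _ := by gcongr; exact sum_sq_le hq Y

lemma mu_mul (q e : ℕ) : (μ (q * e) : ℝ) = μ q * cq q e := by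
  rw [cq_apply]
  split_ifs with h
  · rw [isMultiplicative_moebius.map_mul_of_coprime h.symm]; push_cast; rfl
  · rw [mul_zero]
    have : μ (q * e) = 0 := by
      apply moebius_eq_zero_of_not_squarefree
      intro hs
      exact h ((Nat.squarefree_mul_iff.1 hs).1.symm)
    rw [this]; simp

lemma qdiv {q : ℕ} (hq : 0 < q) (N : ℕ) (α : ℝ) :
    ‖∑ d ∈ Finset.Ioc 0 N, (if q ∣ d then ((μ d : ℤ) : ℂ) * ∑ m ∈ Finset.Ioc 0 (N / d), (Real.log m : ℂ) * ee (m * (d * α)) else 0)‖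
      ≤ (Real.log 4 + 4) * (N / q) * (2 * √q) := by
  have hq' : (0:ℝ) < q := by exact_mod_cast hq
  have hset : (Finset.Ioc 0 N).filter (fun m => q * m ≤ N) = Finset.Ioc 0 (N / q) := by
    ext m
    simp only [Finset.mem_filter, Finset.mem_Ioc, Nat.le_div_iff_mul_le hq]
    constructor
    · rintro ⟨⟨h1, h2⟩, h3⟩; exact ⟨h1, by rwa [mul_comm]⟩
    · rintro ⟨h1, h2⟩
      exact ⟨⟨h1, (Nat.le_mul_of_pos_right m hq).trans h2⟩, by rwa [mul_comm]⟩
  have e1 : ∑ d ∈ Finset.Ioc 0 N, (if q ∣ d then ((μ d : ℤ) : ℂ) * ∑ m ∈ Finset.Ioc 0 (N / d), (Real.log m : ℂ) * ee (m * (d * α)) else 0)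
      = ((μ q : ℝ) : ℂ) * ∑ k ∈ Finset.Ioc 0 (N / q), ((cq q * log) k : ℂ) * ee (k * (q * α)) := by
    rw [← Finset.sum_filter, sum_dvd_reindex N q hq, hset]
    have : ∀ k ∈ Finset.Ioc 0 (N / q), ((cq q * log) k : ℂ) * ee (k * (q * α))
        = ∑ x ∈ k.divisorsAntidiagonal, (cq q x.1 : ℂ) * ((Real.log x.2 : ℂ) * ee (x.2 * ((q * x.1 : ℕ) * α))) := by
      intro k _
      rw [mul_apply, Complex.ofReal_sum, Finset.sum_mul]
      apply Finset.sum_congr rfl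
      intro x hx
      have hk : (k:ℝ) = (x.1:ℝ) * (x.2:ℝ) := by
        have := (Nat.mem_divisorsAntidiagonal.1 hx).1
        rw [← this, Nat.cast_mul]
      have hk2 : (k:ℝ) * (q * α) = (x.2:ℝ) * (((q * x.1 : ℕ) : ℝ) * α) := by
        rw [hk, Nat.cast_mul]; ring
      rw [log_apply, Complex.ofReal_mul, mul_assoc, hk2]
    rw [Finset.sum_congr rfl this, hyperbola (fun d m => (cq q d : ℂ) * ((Real.log m : ℂ) * ee (m * ((q * d : ℕ) * α))))]
    rw [Finset.mul_sum]
    apply Finset.sum_congr rfl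
    intro e _
    rw [← Finset.mul_sum, ← mul_assoc, Nat.div_div_eq_div_mul]
    congr 1
    have := mu_mul q e
    exact_mod_cast congrArg (fun r : ℝ => (r : ℂ)) this
  rw [e1, norm_mul]
  have h1 : ‖((μ q : ℝ) : ℂ)‖ ≤ 1 := by rw [Complex.norm_real]; exact mu_abs_le q
  have h2 : ‖∑ k ∈ Finset.Ioc 0 (N / q), ((cq q * log) k : ℂ) * ee (k * (q * α))‖ ≤ ∑ k ∈ Finset.Ioc 0 (N / q), (cq q * log) k := by
    apply norm_sum_le_of_le
    intro k _
    rw [norm_mul, norm_ee, mul_one, Complex.norm_real, Real.norm_of_nonneg (h_nonneg hq k)]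
  have hc : 0 ≤ Real.log 4 + 4 := by have := Real.log_nonneg (show (1:ℝ) ≤ 4 by norm_num); linarith
  calc _ ≤ 1 * ((Real.log 4 + 4) * ((N / q : ℕ):ℝ) * (2 * √q)) := by
        refine mul_le_mul h1 (h2.trans (h_sum_le hq _)) (norm_nonneg _) (by norm_num)
    _ ≤ _ := by
        rw [one_mul]; gcongr; exact Nat.cast_div_le
end PNT

namespace PNT
open Filter Topology ArithmeticFunction
open scoped ArithmeticFunction.Moebius

lemma S_eq (α : ℝ) (N : ℕ) : ∑ k ∈ Finset.Icc 1 N, ((vonMangoldt k : ℝ) : ℂ) * ee α ^ k =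
    ∑ d ∈ Finset.Ioc 0 N, ((μ d : ℤ) : ℂ) * ∑ m ∈ Finset.Ioc 0 (N / d), (Real.log m : ℂ) * ee (m * (d * α)) := by
  have h0 : Finset.Icc 1 N = Finset.Ioc 0 N := by ext; simp [Nat.succ_le_iff]
  rw [h0]
  have : ∀ k ∈ Finset.Ioc 0 N, ((vonMangoldt k : ℝ) : ℂ) * ee α ^ k
      = ∑ x ∈ k.divisorsAntidiagonal, ((μ x.1 : ℤ) : ℂ) * ((Real.log x.2 : ℂ) * ee (x.2 * (x.1 * α))) := by
    intro k _
    rw [← moebius_mul_log_eq_vonMangoldt, mul_apply, Complex.ofReal_sum, Finset.sum_mul]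
    apply Finset.sum_congr rfl
    intro x hx
    have hk : (k:ℝ) = (x.1:ℝ) * (x.2:ℝ) := by
      have := (Nat.mem_divisorsAntidiagonal.1 hx).1
      rw [← this, Nat.cast_mul]
    have hk2 : (k:ℝ) * α = (x.2:ℝ) * (x.1 * α) := by rw [hk]; ring
    rw [log_apply, Complex.ofReal_mul, mul_assoc, ← ee_nat_mul, hk2, intCoe_apply]
    simp
  rw [Finset.sum_congr rfl this, hyperbola (fun d m => ((μ d : ℤ) : ℂ) * ((Real.log m : ℂ) * ee (m * (d * α))))]
  simp_rw [Finset.mul_sum]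

lemma small_m_swap (α : ℝ) (N K : ℕ) :
    ∑ d ∈ Finset.Ioc 0 N, ((μ d : ℤ) : ℂ) * ∑ m ∈ Finset.Ioc 0 (min K (N / d)), (Real.log m : ℂ) * ee (m * (d * α))
     = ∑ m ∈ Finset.Ioc 0 K, (Real.log m : ℂ) * ∑ d ∈ Finset.Ioc 0 (N / m), ((μ d : ℤ) : ℂ) * ee (d * (m * α)) := by
  simp_rw [Finset.mul_sum]
  rw [Finset.sum_comm' (t' := Finset.Ioc 0 K) (s' := fun m => Finset.Ioc 0 (N / m))]
  · apply Finset.sum_congr rfl; intro m _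
    apply Finset.sum_congr rfl; intro d _
    have : (m:ℝ) * (d * α) = d * (m * α) := by ring
    rw [this]; ring
  · intro d m
    simp only [Finset.mem_Ioc, le_min_iff]
    constructor
    · rintro ⟨⟨h1, h2⟩, h3, h4, h5⟩
      rw [Nat.le_div_iff_mul_le h1] at h5
      exact ⟨⟨h1, by rw [Nat.le_div_iff_mul_le h3, mul_comm]; exact h5⟩, h3, h4⟩
    · rintro ⟨⟨h1, h2⟩, h3, h4⟩
      rw [Nat.le_div_iff_mul_le h3] at h2
      exact ⟨⟨h1, (Nat.le_mul_of_pos_right d h3).trans h2⟩, h3, h4, by rw [Nat.le_div_iff_mul_le h1, mul_comm]; exact h2⟩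

/-- contribution of small m -/
noncomputable def E1 (α : ℝ) (K N : ℕ) : ℝ :=
  ‖∑ m ∈ Finset.Ioc 0 K, (Real.log m : ℂ) * ∑ d ∈ Finset.Ioc 0 (N / m), ((μ d : ℤ) : ℂ) * ee (d * (m * α))‖

lemma E1_tendsto {α : ℝ} (hα : Irrational α) (K : ℕ) : Tendsto (fun N : ℕ => E1 α K N / N) atTop (𝓝 0) := by
  have hb : Tendsto (fun N : ℕ => ∑ m ∈ Finset.Ioc 0 K, Real.log m *
      (‖∑ d ∈ Finset.Ioc 0 (N / m), ((μ d : ℤ) : ℂ) * ee (d * (m * α))‖ / ((N / m : ℕ) : ℝ))) atTop (𝓝 0) := by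
    have : (0:ℝ) = ∑ m ∈ Finset.Ioc 0 K, Real.log m * 0 := by simp
    rw [this]
    apply tendsto_finsetSum
    intro m hm
    have hm0 := (Finset.mem_Ioc.1 hm).1
    apply Tendsto.const_mul
    exact (katai (hα.natCast_mul hm0.ne')).comp (Nat.tendsto_div_const_atTop hm0.ne')
  refine squeeze_zero (fun N => by unfold E1; positivity) (fun N => ?_) hb
  rw [E1]
  refine (div_le_div_of_nonneg_right (norm_sum_le _ _) (by positivity)).trans ?_
  rw [Finset.sum_div]
  apply Finset.sum_le_sum
  intro m hm
  have hm0 := (Finset.mem_Ioc.1 hm).1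
  have hl : 0 ≤ Real.log m := Real.log_natCast_nonneg m
  rw [norm_mul, Complex.norm_real, Real.norm_of_nonneg hl, mul_div_assoc]
  apply mul_le_mul_of_nonneg_left _ hl
  rcases Nat.eq_zero_or_pos (N / m) with h | h
  · rw [h]; simp
  · apply div_le_div_of_nonneg_left (norm_nonneg _) (by exact_mod_cast h)
    exact_mod_cast Nat.div_le_self N m

lemma main_bound {α : ℝ} (hα : Irrational α) {q : ℕ} {a : ℤ} (hq : 0 < q) (hco : IsCoprime (q:ℤ) a)
    (hb0 : 0 < |q * α - a|) (hb1 : |q * α - a| * q ≤ 1) (hb2 : |q * α - a| ≤ 1 / 2) (N i0 : ℕ) :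
    ‖∑ k ∈ Finset.Icc 1 N, ((vonMangoldt k : ℝ) : ℂ) * ee α ^ k‖ ≤
      E1 α (2 ^ i0) N + (N / q) * (2 ^ i0 * 2 ^ i0)
      + (60 * N * ∑ i ∈ Finset.Ico i0 (Nat.log 2 N + 1), ((i:ℝ) + 2) ^ 2 / 2 ^ i
        + (36 * q + 96 * (N * |q * α - a|)) * (Nat.log 2 N + 2) ^ 3)
      + (Real.log 4 + 4) * (N / q) * (2 * √q) := by
  set K := 2 ^ i0 with hK
  let I : ℕ → ℂ := fun d => ∑ m ∈ Finset.Ioc 0 (N / d), (Real.log m : ℂ) * ee (m * (d * α))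
  let I1 : ℕ → ℂ := fun d => ∑ m ∈ Finset.Ioc 0 (min K (N / d)), (Real.log m : ℂ) * ee (m * (d * α))
  let I2 : ℕ → ℂ := fun d => ∑ m ∈ Finset.Ioc K (N / d), (Real.log m : ℂ) * ee (m * (d * α))
  have hI : ∀ d, I d = I1 d + I2 d := by
    intro d
    simp only [I, I1, I2]
    rcases le_total K (N / d) with h | h
    · rw [min_eq_left h, Finset.sum_Ioc_consecutive _ (Nat.zero_le _) h]
    · rw [min_eq_right h, Finset.Ioc_eq_empty (a := K) (by omega), Finset.sum_empty, add_zero]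
  have hdec : ∑ d ∈ Finset.Ioc 0 N, ((μ d : ℤ) : ℂ) * I d
      = ∑ d ∈ Finset.Ioc 0 N, ((μ d : ℤ) : ℂ) * I1 d
        - ∑ d ∈ Finset.Ioc 0 N, (if q ∣ d then ((μ d : ℤ) : ℂ) * I1 d else 0)
        + ∑ d ∈ Finset.Ioc 0 N, (if ¬ q ∣ d then ((μ d : ℤ) : ℂ) * I2 d else 0)
        + ∑ d ∈ Finset.Ioc 0 N, (if q ∣ d then ((μ d : ℤ) : ℂ) * I d else 0) := by
    rw [← Finset.sum_sub_distrib, ← Finset.sum_add_distrib, ← Finset.sum_add_distrib]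
    apply Finset.sum_congr rfl
    intro d _
    by_cases h : q ∣ d
    · simp [h]
    · simp only [h, if_false, not_false_eq_true, if_true, hI d]; ring
  rw [S_eq, hdec]
  refine (norm_add_le _ _).trans (add_le_add ((norm_add_le _ _).trans (add_le_add ((norm_sub_le _ _).trans (add_le_add ?_ ?_)) ?_)) ?_)
  · rw [E1, ← small_m_swap]
  · rw [← Finset.sum_filter]
    have : ∀ d ∈ (Finset.Ioc 0 N).filter (fun d => q ∣ d), ‖((μ d : ℤ) : ℂ) * I1 d‖ ≤ (K:ℝ) * K := by
      intro d _
      rw [norm_mul]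
      have h1 : ‖I1 d‖ ≤ K * K := by
        have : ∀ m ∈ Finset.Ioc 0 (min K (N / d)), ‖(Real.log m : ℂ) * ee (m * (d * α))‖ ≤ K := by
          intro m hm
          rw [norm_mul, norm_ee, mul_one, Complex.norm_real, Real.norm_of_nonneg (Real.log_natCast_nonneg m)]
          have h2 : (m:ℝ) ≤ K := by
            exact_mod_cast (Finset.mem_Ioc.1 hm).2.trans (min_le_left _ _)
          exact (Real.log_le_self (by positivity)).trans h2
        refine (norm_sum_le_of_le _ this).trans ?_
        rw [Finset.sum_const, nsmul_eq_mul]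
        gcongr
        simp
      have := norm_mu_le d
      calc _ ≤ 1 * ((K:ℝ) * K) := mul_le_mul this h1 (norm_nonneg _) (by norm_num)
        _ = _ := one_mul _
    refine (norm_sum_le_of_le _ this).trans ?_
    rw [Finset.sum_const, nsmul_eq_mul, card_dvd_le]
    have : ((N / q : ℕ):ℝ) ≤ N / q := Nat.cast_div_le
    have hKr : (2:ℝ) ^ i0 = K := by rw [hK]; push_cast; rfl
    rw [hKr]
    gcongr
  · refine (norm_sum_le _ _).trans (le_trans (Finset.sum_le_sum ?_) (typeI hα hq hco hb0 hb1 hb2 N i0))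
    intro d _
    split_ifs
    · simp
    · rw [norm_mul]
      calc _ ≤ 1 * ‖I2 d‖ := mul_le_mul_of_nonneg_right (norm_mu_le d) (norm_nonneg _)
        _ = _ := one_mul _
  · exact qdiv hq N α

lemma exists_approx {α : ℝ} (hα : Irrational α) {N : ℕ} (hN : 0 < N) : ∃ (q : ℕ) (a : ℤ), 0 < q ∧ IsCoprime (q:ℤ) a ∧
    0 < |q * α - a| ∧ |q * α - a| * q ≤ 1 ∧ |q * α - a| ≤ 1 / 2 ∧ q ≤ Nat.sqrt N ∧ |q * α - a| ≤ 1 / (Nat.sqrt N + 1) := by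
  have hR : 0 < Nat.sqrt N := Nat.sqrt_pos.2 hN
  obtain ⟨r, h1, h2⟩ := Real.exists_rat_abs_sub_le_and_den_le α hR
  have hq : (0:ℝ) < r.den := by exact_mod_cast r.den_pos
  have hR1 : (1:ℝ) ≤ Nat.sqrt N := by exact_mod_cast hR
  have e : |(r.den:ℝ) * α - r.num| = r.den * |α - r| := by
    have : (r.den:ℝ) * α - r.num = r.den * (α - r) := by
      have h3 : (r.num:ℝ) = r.den * r := by
        have := Rat.mul_den_eq_num r
        have h4 : ((r * r.den : ℚ):ℝ) = ((r.num:ℚ):ℝ) := by rw [this]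
        push_cast at h4
        linarith
      rw [h3]; ring
    rw [this, abs_mul, abs_of_pos hq]
  have hb : |(r.den:ℝ) * α - r.num| ≤ 1 / (Nat.sqrt N + 1) := by
    rw [e]
    calc _ ≤ (r.den:ℝ) * (1 / (((Nat.sqrt N:ℝ) + 1) * r.den)) := by gcongr
      _ = _ := by field_simp
  refine ⟨r.den, r.num, r.den_pos, ?_, ?_, ?_, ?_, h2, hb⟩
  · rw [Int.isCoprime_iff_gcd_eq_one, Int.gcd_comm]
    exact r.reduced
  · rw [abs_pos]
    have := (hα.natCast_mul r.den_pos.ne').sub_intCast r.num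
    exact this.ne_zero
  · calc _ ≤ 1 / ((Nat.sqrt N:ℝ) + 1) * r.den := by gcongr
      _ ≤ 1 / ((Nat.sqrt N:ℝ) + 1) * ((Nat.sqrt N:ℝ) + 1) := by
          gcongr
          have : (r.den:ℝ) ≤ Nat.sqrt N := by exact_mod_cast h2
          linarith
      _ = 1 := by field_simp
  · refine hb.trans ?_
    gcongr
    linarith

lemma q_tendsto {α : ℝ} (hα : Irrational α) (q : ℕ → ℕ) (a : ℕ → ℤ)
    (hq0 : ∀ᶠ N in atTop, 0 < q N)
    (h : ∀ᶠ N in atTop, |q N * α - a N| ≤ 1 / (Nat.sqrt N + 1)) : Tendsto q atTop atTop := by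
  rw [tendsto_atTop]
  intro Q
  have hpos : ∃ δ > 0, ∀ j ∈ Finset.Ioc 0 Q, δ ≤ nd (j * α) := by
    rcases (Finset.Ioc 0 Q).eq_empty_or_nonempty with h | h
    · exact ⟨1, one_pos, by simp [h]⟩
    · obtain ⟨j, hj, hm⟩ := Finset.exists_min_image _ (fun j : ℕ => nd (j * α)) h
      exact ⟨nd (j * α), nd_pos_of_irrational (hα.natCast_mul (Finset.mem_Ioc.1 hj).1.ne'), hm⟩
  obtain ⟨δ, hδ, hd⟩ := hpos
  have hs : Tendsto Nat.sqrt atTop atTop := tendsto_atTop.2 fun b => by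
    filter_upwards [eventually_ge_atTop (b * b)] with n hn
    exact Nat.le_sqrt.2 hn
  have hlim : Tendsto (fun N : ℕ => 1 / ((Nat.sqrt N : ℝ) + 1)) atTop (𝓝 0) :=
    tendsto_one_div_add_atTop_nhds_zero_nat.comp hs
  filter_upwards [h, hq0, hlim.eventually_lt_const hδ] with N h1 h2 h3
  by_contra hlt
  have h4 := hd (q N) (Finset.mem_Ioc.2 ⟨h2, by omega⟩)
  have h5 : nd (q N * α) ≤ |q N * α - a N| := nd_le _ _
  linarith

lemma tail_summable : Summable (fun i : ℕ => ((i:ℝ) + 2) ^ 2 / 2 ^ i) := by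
  have h := (summable_pow_mul_geometric_of_norm_lt_one 2 (r := (1/2:ℝ)) (by norm_num))
  have h2 := ((summable_nat_add_iff 2).2 h).mul_left 4
  refine h2.congr fun i => ?_
  push_cast
  rw [pow_add, one_div, inv_pow, div_eq_mul_inv]; ring

lemma log_cube_tendsto : Tendsto (fun N : ℕ => ((Nat.log 2 N : ℝ) + 2) ^ 3 / √(N:ℝ)) atTop (𝓝 0) := by
  have h1 : (1:ℝ) < √2 := by rw [Real.lt_sqrt] <;> norm_num
  have h := tendsto_pow_const_div_const_pow_of_one_lt 3 h1
  have hL : Tendsto (fun N => Nat.log 2 N + 2) atTop atTop := by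
    rw [tendsto_atTop]
    intro b
    filter_upwards [eventually_ge_atTop (2 ^ b)] with n hn
    have := Nat.log_mono_right (b := 2) hn
    rw [Nat.log_pow (by norm_num)] at this
    omega
  have h2 := ((h.comp hL).const_mul 2)
  rw [mul_zero] at h2
  refine squeeze_zero' (Eventually.of_forall fun N => by positivity) ?_ h2
  filter_upwards [eventually_gt_atTop 0] with N hN
  have hp : (2:ℝ) ^ Nat.log 2 N ≤ N := by exact_mod_cast Nat.pow_log_le_self 2 hN.ne'
  have h3 : √2 ^ Nat.log 2 N ≤ √(N:ℝ) := by
    apply Real.le_sqrt_of_sq_le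
    rw [← pow_mul, mul_comm, pow_mul, Real.sq_sqrt (by norm_num)]; exact hp
  simp only [Function.comp]
  have h4 : √(2:ℝ) ^ (Nat.log 2 N + 2) = √2 ^ (Nat.log 2 N) * 2 := by
    rw [pow_add, Real.sq_sqrt (by norm_num)]
  rw [h4]
  calc _ ≤ ((Nat.log 2 N : ℝ) + 2) ^ 3 / √2 ^ (Nat.log 2 N) := by gcongr
    _ = _ := by push_cast; field_simp

theorem vinogradov {α : ℝ} (hα : Irrational α) :
    Tendsto (fun N : ℕ => (N:ℂ)⁻¹ * ∑ k ∈ Finset.Icc 1 N, ((vonMangoldt k : ℝ) : ℂ) * ee α ^ k) atTop (𝓝 0) := by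
  have hch : ∀ N : ℕ, ∃ (q : ℕ) (a : ℤ), 0 < N → (0 < q ∧ IsCoprime (q:ℤ) a ∧
    0 < |q * α - a| ∧ |q * α - a| * q ≤ 1 ∧ |q * α - a| ≤ 1 / 2 ∧ q ≤ Nat.sqrt N ∧ |q * α - a| ≤ 1 / (Nat.sqrt N + 1)) := by
    intro N
    by_cases hN : 0 < N
    · obtain ⟨q, a, h⟩ := exists_approx hα hN
      exact ⟨q, a, fun _ => h⟩
    · exact ⟨0, 0, fun h => absurd h hN⟩
  choose q a hqa using hch
  have hqt : Tendsto q atTop atTop := by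
    apply q_tendsto hα q a
    · filter_upwards [eventually_gt_atTop 0] with N hN using (hqa N hN).1
    · filter_upwards [eventually_gt_atTop 0] with N hN using (hqa N hN).2.2.2.2.2.2
  have hqr : Tendsto (fun N => (q N : ℝ)) atTop atTop := tendsto_natCast_atTop_atTop.comp hqt
  set C := Real.log 4 + 4 with hC
  -- bound for each i0
  have hbound : ∀ i0 : ℕ, ∀ᶠ N : ℕ in atTop,
      ‖(N:ℂ)⁻¹ * ∑ k ∈ Finset.Icc 1 N, ((vonMangoldt k : ℝ) : ℂ) * ee α ^ k‖ ≤
       60 * (∑' i : ℕ, (((i + i0 : ℕ):ℝ) + 2) ^ 2 / 2 ^ (i + i0)) +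
        (E1 α (2 ^ i0) N / N + (2 ^ i0 * 2 ^ i0) / (q N) + 264 * (((Nat.log 2 N : ℝ) + 2) ^ 3 / √(N:ℝ)) + C * 2 * (1 / √(q N))) := by
    intro i0
    filter_upwards [eventually_gt_atTop 0] with N hN
    obtain ⟨h1, h2, h3, h4, h5, h6, h7⟩ := hqa N hN
    have hNr : (0:ℝ) < N := by exact_mod_cast hN
    have hqr : (0:ℝ) < q N := by exact_mod_cast h1
    have hmb := main_bound hα h1 h2 h3 h4 h5 N i0
    rw [norm_mul, norm_inv, Complex.norm_natCast]
    have htail : ∑ i ∈ Finset.Ico i0 (Nat.log 2 N + 1), ((i:ℝ) + 2) ^ 2 / 2 ^ i ≤ ∑' i : ℕ, (((i + i0 : ℕ):ℝ) + 2) ^ 2 / 2 ^ (i + i0) := by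
      rw [Finset.sum_Ico_eq_sum_range]
      have hs := (summable_nat_add_iff i0).2 tail_summable
      refine le_trans (le_of_eq ?_) (hs.sum_le_tsum (Finset.range (Nat.log 2 N + 1 - i0)) (fun i _ => by positivity))
      apply Finset.sum_congr rfl
      intro i _
      rw [add_comm i0 i]
    have hR : √(N:ℝ) ≤ Nat.sqrt N + 1 := by
      apply Real.sqrt_le_left (by positivity) |>.mpr ?_
      have := Nat.lt_succ_sqrt N
      have h8 : (N:ℝ) < (Nat.sqrt N + 1) * (Nat.sqrt N + 1) := by exact_mod_cast this
      nlinarith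
    have hsq : 0 < √(N:ℝ) := Real.sqrt_pos.2 hNr
    have hb : |q N * α - a N| ≤ 1 / √(N:ℝ) := h7.trans (by gcongr)
    have hqs : (q N : ℝ) ≤ √(N:ℝ) := by
      apply Real.le_sqrt_of_sq_le
      have : q N * q N ≤ N := Nat.le_sqrt.1 h6
      have h8 : (q N:ℝ) * q N ≤ N := by exact_mod_cast this
      nlinarith
    have hss : √(N:ℝ) * √(N:ℝ) = N := Real.mul_self_sqrt hNr.le
    have hE3 : (36 * (q N:ℝ) + 96 * (N * |q N * α - a N|)) ≤ 264 * √(N:ℝ) := by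
      have : N * |q N * α - a N| ≤ √(N:ℝ) := by
        calc _ ≤ N * (1 / √(N:ℝ)) := by gcongr
          _ = √(N:ℝ) := by field_simp; rw [pow_two]; exact hss.symm
      linarith
    have hc0 : 0 ≤ C := by have := Real.log_nonneg (show (1:ℝ) ≤ 4 by norm_num); linarith
    set t := ∑' i : ℕ, (((i + i0 : ℕ):ℝ) + 2) ^ 2 / 2 ^ (i + i0)
    calc _ ≤ (N:ℝ)⁻¹ * (E1 α (2 ^ i0) N + (N / q N) * (2 ^ i0 * 2 ^ i0)
          + (60 * N * t + (264 * √(N:ℝ)) * (Nat.log 2 N + 2) ^ 3) + C * (N / q N) * (2 * √(q N))) := by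
          refine mul_le_mul_of_nonneg_left (hmb.trans ?_) (by positivity)
          gcongr
      _ = _ := by
          have e1 : √(q N : ℝ) / q N = 1 / √(q N : ℝ) := by rw [Real.sqrt_div_self]; simp
          have e2 : √(N : ℝ) / N = 1 / √(N : ℝ) := by rw [Real.sqrt_div_self]; simp
          have : (N:ℝ)⁻¹ * (E1 α (2 ^ i0) N + (N / q N) * (2 ^ i0 * 2 ^ i0)
            + (60 * N * t + (264 * √(N:ℝ)) * (Nat.log 2 N + 2) ^ 3) + C * (N / q N) * (2 * √(q N)))
             = 60 * t * (N * (N:ℝ)⁻¹) + (E1 α (2 ^ i0) N / N + (2 ^ i0 * 2 ^ i0) / (q N) * (N * (N:ℝ)⁻¹) + 264 * (((Nat.log 2 N : ℝ) + 2) ^ 3 * (√(N:ℝ) / N)) + C * 2 * (√(q N : ℝ) / q N) * (N * (N:ℝ)⁻¹)) := by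
            ring
          rw [this, e1, e2, mul_inv_cancel₀ hNr.ne']; ring
  have hw : ∀ i0 : ℕ, Tendsto (fun N : ℕ => E1 α (2 ^ i0) N / N + (2 ^ i0 * 2 ^ i0) / (q N : ℝ) + 264 * (((Nat.log 2 N : ℝ) + 2) ^ 3 / √(N:ℝ)) + C * 2 * (1 / √(q N : ℝ))) atTop (𝓝 0) := by
    intro i0
    have a1 := E1_tendsto hα (2 ^ i0)
    have a2 : Tendsto (fun N : ℕ => ((2:ℝ) ^ i0 * 2 ^ i0) / (q N : ℝ)) atTop (𝓝 0) := tendsto_const_nhds.div_atTop hqr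
    have a3 := log_cube_tendsto.const_mul 264
    have a4 : Tendsto (fun N : ℕ => C * 2 * (1 / √(q N : ℝ))) atTop (𝓝 (C * 2 * 0)) :=
      (tendsto_const_nhds.div_atTop (Real.tendsto_sqrt_atTop.comp hqr)).const_mul _
    simpa using ((a1.add a2).add a3).add a4
  rw [tendsto_zero_iff_norm_tendsto_zero]
  rw [Metric.tendsto_atTop']
  intro ε hε
  have ht := tendsto_sum_nat_add (fun i : ℕ => ((i:ℝ) + 2) ^ 2 / 2 ^ i)
  obtain ⟨i0, hi0⟩ := (ht.eventually_lt_const (show (0:ℝ) < ε / 120 by positivity)).exists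
  have hev := (hbound i0).and ((hw i0).eventually_lt_const (show (0:ℝ) < ε / 2 by positivity))
  obtain ⟨M, hM⟩ := eventually_atTop.1 hev
  refine ⟨M, fun N hN => ?_⟩
  obtain ⟨b1, b2⟩ := hM N hN.le
  rw [Real.dist_eq, sub_zero, abs_of_nonneg (norm_nonneg _)]
  linarith

end PNT

namespace PNT
open Filter Topology MeasureTheory ComplexConjugate

noncomputable instance instMeasCircle : MeasurableSpace Circle := borel Circle
instance instBorelCircle : BorelSpace Circle := ⟨rfl⟩

section
variable {H : Type*} [NormedAddCommGroup H] [InnerProductSpace ℂ H]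

/-- Toeplitz matrix of moments -/
noncomputable def tt (T : H →L[ℂ] H) (x : H) (i j : ℕ) : ℂ :=
  if j ≤ i then inner ℂ x ((T ^ (i - j)) x) else inner ℂ ((T ^ (j - i)) x) x

lemma tt_succ (T : H →L[ℂ] H) (x : H) (i j : ℕ) : tt T x (i+1) (j+1) = tt T x i j := by
  simp [tt]

/-- Toeplitz form -/
noncomputable def QQ (T : H →L[ℂ] H) (x : H) (N : ℕ) (c : ℕ → ℂ) : ℂ :=
  ∑ i ∈ Finset.range N, ∑ j ∈ Finset.range N, c i * conj (c j) * tt T x i j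

lemma QQ_bound (T : H →L[ℂ] H) (hT : ‖T‖ ≤ 1) (x : H) (N : ℕ) : ∀ c : ℕ → ℂ,
    ∃ r : ℝ, QQ T x N c = r ∧ ‖∑ i ∈ Finset.range N, c i • (T ^ i) x‖ ^ 2 ≤ r := by
  induction N with
  | zero => intro c; exact ⟨0, by simp [QQ], by simp⟩
  | succ N ih =>
    intro c
    obtain ⟨r, hr1, hr2⟩ := ih (fun i => c (i+1))
    set v := ∑ i ∈ Finset.range N, c (i+1) • (T ^ i) x with hv
    refine ⟨‖c 0 • x‖ ^ 2 + 2 * RCLike.re (inner ℂ (c 0 • x) (T v)) + r, ?_, ?_⟩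
    · have hTv : T v = ∑ i ∈ Finset.range N, c (i+1) • (T ^ (i+1)) x := by
        rw [hv, map_sum]
        apply Finset.sum_congr rfl
        intro i _
        rw [map_smul, pow_succ']; rfl
      have hQ : QQ T x (N+1) c = c 0 * conj (c 0) * tt T x 0 0 + inner ℂ (c 0 • x) (T v) + inner ℂ (T v) (c 0 • x)
          + QQ T x N (fun i => c (i+1)) := by
        have e1 : inner ℂ (c 0 • x) (T v) = ∑ i ∈ Finset.range N, c (i+1) * conj (c 0) * tt T x (i+1) 0 := by
          rw [hTv, inner_sum]
          apply Finset.sum_congr rfl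
          intro i _
          rw [inner_smul_left, inner_smul_right, tt, if_pos (Nat.zero_le _), Nat.sub_zero]; ring
        have e2 : inner ℂ (T v) (c 0 • x) = ∑ j ∈ Finset.range N, c 0 * conj (c (j+1)) * tt T x 0 (j+1) := by
          rw [hTv, sum_inner]
          apply Finset.sum_congr rfl
          intro i _
          rw [inner_smul_left, inner_smul_right, tt, if_neg (by omega), Nat.sub_zero]; ring
        rw [e1, e2, QQ, QQ, Finset.sum_range_succ']
        simp_rw [Finset.sum_range_succ' _ N, tt_succ]
        rw [Finset.sum_add_distrib]
        ring
      rw [hQ, hr1]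
      have h1 : c 0 * conj (c 0) * tt T x 0 0 = ((‖c 0 • x‖ ^ 2 : ℝ) : ℂ) := by
        rw [tt, if_pos le_rfl, Complex.mul_conj']
        simp [norm_smul, mul_pow]
      have h2 : inner ℂ (c 0 • x) (T v) + inner ℂ (T v) (c 0 • x) = ((2 * RCLike.re (inner ℂ (c 0 • x) (T v)) : ℝ) : ℂ) := by
        rw [← inner_conj_symm (T v) (c 0 • x), RCLike.add_conj]
        simp
      rw [h1, add_assoc _ (inner ℂ (c 0 • x) (T v)), h2]
      push_cast; ring
    · have hs : ∑ i ∈ Finset.range (N+1), c i • (T ^ i) x = c 0 • x + T v := by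
        rw [Finset.sum_range_succ', hv, map_sum, add_comm]
        congr 1
        apply Finset.sum_congr rfl
        intro i _
        rw [map_smul, pow_succ']; rfl
      rw [hs, @norm_add_sq ℂ]
      have : ‖T v‖ ≤ ‖v‖ := by
        calc ‖T v‖ ≤ ‖T‖ * ‖v‖ := T.le_opNorm v
          _ ≤ 1 * ‖v‖ := by gcongr
          _ = ‖v‖ := one_mul _
      have : ‖T v‖ ^ 2 ≤ ‖v‖ ^ 2 := by gcongr
      linarith

end

lemma roots_orth {M : ℕ} (hM : M ≠ 0) {m : ℤ} (hm : |m| < M) :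
    ∑ l ∈ Finset.range M, ((Complex.exp (2 * Real.pi * Complex.I / M)) ^ l) ^ m = if m = 0 then (M:ℂ) else 0 := by
  have hp := Complex.isPrimitiveRoot_exp M hM
  set ζ := Complex.exp (2 * Real.pi * Complex.I / M)
  split_ifs with h
  · simp [h]
  · have h1 : ζ ^ m ≠ 1 := by
      intro h1
      rw [hp.zpow_eq_one_iff_dvd] at h1
      exact h (Int.eq_zero_of_abs_lt_dvd h1 hm)
    have h2 : ∀ l ∈ Finset.range M, (ζ ^ l) ^ m = (ζ ^ m) ^ l := by
      intro l _
      rw [← zpow_natCast, ← zpow_natCast, ← zpow_mul, ← zpow_mul, mul_comm]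
    rw [Finset.sum_congr rfl h2, geom_sum_eq h1]
    have : (ζ ^ m) ^ M = 1 := by
      rw [← zpow_natCast, ← zpow_mul, mul_comm, zpow_mul, zpow_natCast, hp.pow_eq_one, one_zpow]
    rw [this]; simp

section
variable {H : Type*} [NormedAddCommGroup H] [InnerProductSpace ℂ H]

lemma fejer_moment (T : H →L[ℂ] H) (x : H) {N k : ℕ} (hk : k < N) :
    ∑ l ∈ Finset.range (2 * N), ((Complex.exp (2 * Real.pi * Complex.I / (2 * N : ℕ))) ^ l) ^ k *
      QQ T x N (fun i => (((Complex.exp (2 * Real.pi * Complex.I / (2 * N : ℕ))) ^ l)⁻¹) ^ i) = 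
     (2 * N : ℕ) * ((N - k : ℕ) * inner ℂ x ((T ^ k) x)) := by
  have hM : 2 * N ≠ 0 := by omega
  set ζ := Complex.exp (2 * Real.pi * Complex.I / (2 * N : ℕ)) with hζ
  have hn : ‖ζ‖ = 1 := (Complex.isPrimitiveRoot_exp (2 * N) hM).norm'_eq_one hM
  have h0 : ζ ≠ 0 := Complex.exp_ne_zero _
  have e1 : ∀ l : ℕ, (ζ ^ l) ^ k * QQ T x N (fun i => ((ζ ^ l)⁻¹) ^ i) =
      ∑ i ∈ Finset.range N, ∑ j ∈ Finset.range N, (ζ ^ l) ^ ((k:ℤ) + j - i) * tt T x i j := by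
    intro l
    have hw : ζ ^ l ≠ 0 := pow_ne_zero _ h0
    have hnl : ‖ζ ^ l‖ = 1 := by rw [norm_pow, hn, one_pow]
    have hc : conj (ζ ^ l)⁻¹ = ζ ^ l := by
      rw [Complex.inv_eq_conj hnl]; simp
    rw [QQ, Finset.mul_sum]
    apply Finset.sum_congr rfl; intro i _
    rw [Finset.mul_sum]
    apply Finset.sum_congr rfl; intro j _
    rw [map_pow, hc, zpow_sub₀ hw, zpow_add₀ hw, zpow_natCast, zpow_natCast, zpow_natCast]
    rw [inv_pow]; field_simp
  simp_rw [e1]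
  rw [Finset.sum_comm]
  have e2 : ∀ i ∈ Finset.range N, ∑ l ∈ Finset.range (2*N), ∑ j ∈ Finset.range N, (ζ ^ l) ^ ((k:ℤ) + j - i) * tt T x i j
      = if k ≤ i then ((2 * N : ℕ):ℂ) * inner ℂ x ((T ^ k) x) else 0 := by
    intro i hi
    have hi' := Finset.mem_range.1 hi
    rw [Finset.sum_comm]
    have : ∀ j ∈ Finset.range N, ∑ l ∈ Finset.range (2*N), (ζ ^ l) ^ ((k:ℤ) + j - i) * tt T x i j
        = if (k:ℤ) + j - i = 0 then ((2 * N : ℕ):ℂ) * inner ℂ x ((T ^ k) x) else 0 := by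
      intro j hj
      have hj' := Finset.mem_range.1 hj
      rw [← Finset.sum_mul, roots_orth hM (by rw [abs_lt]; push_cast; constructor <;> omega)]
      split_ifs with h
      · rw [tt, if_pos (by omega), show i - j = k by omega]
      · simp
    rw [Finset.sum_congr rfl this]
    split_ifs with hki
    · rw [Finset.sum_eq_single (i - k)]
      · rw [if_pos (by omega)]
      · intro j _ hne; rw [if_neg (by omega)]
      · intro h; exfalso; apply h; rw [Finset.mem_range]; omega
    · apply Finset.sum_eq_zero
      intro j _; rw [if_neg (by omega)]
  rw [Finset.sum_congr rfl e2, ← Finset.sum_filter, Finset.sum_const, nsmul_eq_mul]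
  have hcard : ((Finset.range N).filter (fun i => k ≤ i)).card = N - k := by
    have : (Finset.range N).filter (fun i => k ≤ i) = Finset.Ico k N := by
      ext; simp [and_comm]
    rw [this, Nat.card_Ico]
  rw [hcard]; ring

/-- approximate spectral measure -/
lemma exists_approx_measure (T : H →L[ℂ] H) (hT : ‖T‖ ≤ 1) (x : H) (N : ℕ) (hN : 0 < N) :
    ∃ μ : FiniteMeasure Circle, ∀ k < N, ∫ z : Circle, (z:ℂ) ^ k ∂(μ : Measure Circle) = (1 - (k:ℂ) / N) * inner ℂ x ((T ^ k) x) := by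
  have hM : 2 * N ≠ 0 := by omega
  set ζ := Complex.exp (2 * Real.pi * Complex.I / (2 * N : ℕ)) with hζ
  have hn : ‖ζ‖ = 1 := (Complex.isPrimitiveRoot_exp (2 * N) hM).norm'_eq_one hM
  let z : ℕ → Circle := fun l => ⟨ζ ^ l, by simp [Submonoid.unitSphere, hn]⟩
  have hz : ∀ l, (z l : ℂ) = ζ ^ l := fun l => rfl
  choose r hr1 hr2 using fun l : ℕ => QQ_bound T hT x N (fun i => ((ζ ^ l)⁻¹) ^ i)
  have hr0 : ∀ l, 0 ≤ r l := fun l => (sq_nonneg _).trans (hr2 l)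
  let w : ℕ → ℝ := fun l => r l / ((2 * N : ℕ) * N)
  have hw0 : ∀ l, 0 ≤ w l := fun l => div_nonneg (hr0 l) (by positivity)
  let μ : Measure Circle := ∑ l ∈ Finset.range (2 * N), ENNReal.ofReal (w l) • Measure.dirac (z l)
  have hfin : IsFiniteMeasure μ := by
    constructor
    simp only [μ, Measure.coe_finsetSum, Finset.sum_apply, Measure.smul_apply, smul_eq_mul, measure_univ, mul_one]
    exact ENNReal.sum_lt_top.2 fun _ _ => ENNReal.ofReal_lt_top
  refine ⟨⟨μ, hfin⟩, ?_⟩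
  intro k hk
  show ∫ z : Circle, (z:ℂ) ^ k ∂μ = _
  rw [integral_finsetSum_measure]
  · have : ∀ l ∈ Finset.range (2*N), ∫ y : Circle, (y:ℂ) ^ k ∂(ENNReal.ofReal (w l) • Measure.dirac (z l)) =
        (((2 * N : ℕ) * N : ℂ))⁻¹ * ((ζ ^ l) ^ k * QQ T x N (fun i => ((ζ ^ l)⁻¹) ^ i)) := by
      intro l _
      rw [integral_smul_measure, integral_dirac, ENNReal.toReal_ofReal (hw0 l), hz, hr1 l, Complex.real_smul]
      simp only [w]
      push_cast; ring
    rw [Finset.sum_congr rfl this, ← Finset.mul_sum, fejer_moment T x hk]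
    have hNc : (N:ℂ) ≠ 0 := by exact_mod_cast hN.ne'
    rw [Nat.cast_sub hk.le]
    push_cast
    field_simp
  · intro l _
    apply Integrable.smul_measure _ ENNReal.ofReal_ne_top
    exact integrable_dirac (by simp)

theorem exists_spectral_measure (T : H →L[ℂ] H) (hT : ‖T‖ ≤ 1) (x : H) :
    ∃ μ : Measure Circle, IsFiniteMeasure μ ∧ ∀ k : ℕ, ∫ z : Circle, (z:ℂ) ^ k ∂μ = inner ℂ x ((T ^ k) x) := by
  choose! μ hμ using exists_approx_measure T hT x
  let C : NNReal := ⟨‖x‖ ^ 2, by positivity⟩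
  have hmass : ∀ N, 0 < N → (μ N).mass = C := by
    intro N hN
    have h := hμ N hN 0 hN
    simp only [pow_zero, integral_const, CharP.cast_eq_zero, zero_div, sub_zero, one_mul] at h
    have h2 : ((μ N : Measure Circle).real Set.univ : ℂ) = ((‖x‖ ^ 2 : ℝ) : ℂ) := by
      rw [Complex.real_smul, mul_one] at h
      rw [h]; simp
    have h3 : (μ N : Measure Circle).real Set.univ = ‖x‖ ^ 2 := by exact_mod_cast h2
    apply NNReal.coe_injective
    exact h3
  have hcomp := isCompact_setOfPred_finiteMeasure_le_of_compactSpace Circle C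
  have hle : Tendsto μ atTop (𝓟 {μ : FiniteMeasure Circle | μ.mass ≤ C}) := by
    rw [tendsto_principal]
    filter_upwards [eventually_gt_atTop 0] with N hN
    exact (hmass N hN).le
  let U : Ultrafilter ℕ := Ultrafilter.of atTop
  have hU : (U : Filter ℕ) ≤ atTop := Ultrafilter.of_le atTop
  obtain ⟨ν, _, hν⟩ := hcomp.ultrafilter_le_nhds (U.map μ) ((Filter.map_mono hU).trans hle)
  have hν' : Tendsto μ U (𝓝 ν) := hν
  rw [FiniteMeasure.tendsto_iff_forall_integral_rclike_tendsto ℂ] at hν'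
  refine ⟨ν, inferInstance, fun k => ?_⟩
  let f : BoundedContinuousFunction Circle ℂ := BoundedContinuousFunction.mkOfCompact ⟨fun z => (z:ℂ) ^ k, by fun_prop⟩
  have h1 := hν' f
  have h2 : Tendsto (fun N : ℕ => (1 - (k:ℂ) / N) * inner ℂ x ((T ^ k) x)) atTop (𝓝 ((1 - 0) * inner ℂ x ((T ^ k) x))) := by
    apply Tendsto.mul_const
    apply Tendsto.const_sub
    exact tendsto_const_div_atTop_nhds_zero_nat (k:ℂ)
  have h3 : Tendsto (fun N => ∫ z, f z ∂(μ N : Measure Circle)) U (𝓝 ((1 - 0) * inner ℂ x ((T ^ k) x))) := by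
    refine (h2.congr' ?_).mono_left hU
    filter_upwards [eventually_gt_atTop k] with N hN
    exact (hμ N (by omega) k hN).symm
  have := tendsto_nhds_unique h1 h3
  rw [sub_zero, one_mul] at this
  exact this

end
end PNT

namespace PNT
open Filter Topology MeasureTheory ComplexConjugate ArithmeticFunction

section
variable {H : Type*} [NormedAddCommGroup H] [InnerProductSpace ℂ H]

lemma circle_moment (T : H →L[ℂ] H) (x : H) (μ : Measure Circle)
    (hμ : ∀ k : ℕ, ∫ z : Circle, (z:ℂ) ^ k ∂μ = inner ℂ x ((T ^ k) x)) (i j : ℕ) :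
    ∫ z : Circle, (z:ℂ) ^ i * conj ((z:ℂ) ^ j) ∂μ = tt T x i j := by
  have hz : ∀ z : Circle, (z:ℂ) * conj (z:ℂ) = 1 := by
    intro z
    rw [Complex.mul_conj, Complex.normSq_eq_norm_sq, Circle.norm_coe]; simp
  unfold tt
  split_ifs with h
  · rw [← hμ]
    congr 1; ext z
    obtain ⟨d, rfl⟩ := Nat.exists_eq_add_of_le h
    rw [pow_add, map_pow, mul_right_comm, ← mul_pow, hz]; simp
  · rw [← inner_conj_symm, ← hμ, ← integral_conj]
    congr 1; ext z
    obtain ⟨d, rfl⟩ := Nat.exists_eq_add_of_le (not_le.1 h).le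
    rw [pow_add, map_mul, map_pow, ← mul_assoc, ← mul_pow, hz]; simp

lemma sp_bound (T : H →L[ℂ] H) (hT : ‖T‖ ≤ 1) (x : H) (μ : Measure Circle) [IsFiniteMeasure μ]
    (hμ : ∀ k : ℕ, ∫ z : Circle, (z:ℂ) ^ k ∂μ = inner ℂ x ((T ^ k) x)) (N : ℕ) (c : ℕ → ℂ) :
    ‖∑ i ∈ Finset.range N, c i • (T ^ i) x‖ ^ 2 ≤
      ∫ z : Circle, ‖∑ i ∈ Finset.range N, c i * (z:ℂ) ^ i‖ ^ 2 ∂μ := by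
  obtain ⟨r, hr1, hr2⟩ := QQ_bound T hT x N c
  refine hr2.trans (le_of_eq ?_)
  apply Complex.ofReal_injective
  rw [← hr1, ← integral_complex_ofReal]
  have : ∀ z : Circle, ((‖∑ i ∈ Finset.range N, c i * (z:ℂ) ^ i‖ ^ 2 : ℝ) : ℂ) =
      ∑ i ∈ Finset.range N, ∑ j ∈ Finset.range N, c i * conj (c j) * ((z:ℂ) ^ i * conj ((z:ℂ) ^ j)) := by
    intro z
    rw [← Complex.normSq_eq_norm_sq, ← Complex.mul_conj, map_sum, Finset.sum_mul_sum]
    refine Finset.sum_congr rfl fun i _ => Finset.sum_congr rfl fun j _ => ?_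
    rw [map_mul]; ring
  simp_rw [this]
  have hintg : ∀ i j, Integrable (fun z : Circle => c i * conj (c j) * ((z:ℂ) ^ i * conj ((z:ℂ) ^ j))) μ := by
    intro i j
    apply Continuous.integrable_of_hasCompactSupport
    · fun_prop
    · exact HasCompactSupport.of_compactSpace _
  rw [integral_finsetSum _ (fun i _ => integrable_finsetSum _ fun j _ => hintg i j)]
  unfold QQ
  refine Finset.sum_congr rfl fun i _ => ?_
  rw [integral_finsetSum _ (fun j _ => hintg i j)]
  refine Finset.sum_congr rfl fun j _ => ?_
  rw [integral_const_mul, circle_moment T x μ hμ]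

noncomputable def AA (N : ℕ) (z : ℂ) : ℂ := (N:ℂ)⁻¹ * ∑ k ∈ Finset.Icc 1 N, ((vonMangoldt k:ℝ):ℂ) * z^k
noncomputable def VV (T : H →L[ℂ] H) (x : H) (N : ℕ) : H :=
  (N:ℂ)⁻¹ • ∑ k ∈ Finset.Icc 1 N, ((vonMangoldt k:ℝ):ℂ) • (T^k) x
noncomputable def cf (N i : ℕ) : ℂ := if i ≤ N then (N:ℂ)⁻¹ * ((vonMangoldt i:ℝ):ℂ) else 0

lemma sum_cf {M : Type*} [AddCommGroup M] [Module ℂ M] (f : ℕ → M) {N K : ℕ} (h : N < K) :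
    ∑ i ∈ Finset.range K, cf N i • f i = (N:ℂ)⁻¹ • ∑ k ∈ Finset.Icc 1 N, ((vonMangoldt k:ℝ):ℂ) • f k := by
  rw [Finset.smul_sum]
  symm
  have h1 : ∀ i ∈ Finset.Icc 1 N, (N:ℂ)⁻¹ • ((vonMangoldt i:ℝ):ℂ) • f i = cf N i • f i := by
    intro i hi
    rw [cf, if_pos (Finset.mem_Icc.1 hi).2, mul_smul]
  rw [Finset.sum_congr rfl h1]
  apply Finset.sum_subset
  · intro i hi; simp at hi ⊢; omega
  · intro i hi hi2
    simp only [Finset.mem_Icc, not_and, not_le] at hi2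
    rcases Nat.eq_zero_or_pos i with rfl | h0
    · simp [cf]
    · rw [cf, if_neg (by have := hi2 h0; omega), zero_smul]

lemma VV_bound (T : H →L[ℂ] H) (hT : ‖T‖ ≤ 1) (x : H) (μ : Measure Circle) [IsFiniteMeasure μ]
    (hμ : ∀ k : ℕ, ∫ z : Circle, (z:ℂ) ^ k ∂μ = inner ℂ x ((T ^ k) x)) (N : ℕ) :
    ‖VV T x N‖ ^ 2 ≤ ∫ z : Circle, ‖AA N z‖ ^ 2 ∂μ := by
  have := sp_bound T hT x μ hμ (N+1) (cf N)
  simp_rw [← smul_eq_mul (a := cf N _)] at this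
  simp_rw [sum_cf _ (Nat.lt_succ_self N)] at this
  exact this

lemma VV_sub_bound (T : H →L[ℂ] H) (hT : ‖T‖ ≤ 1) (x : H) (μ : Measure Circle) [IsFiniteMeasure μ]
    (hμ : ∀ k : ℕ, ∫ z : Circle, (z:ℂ) ^ k ∂μ = inner ℂ x ((T ^ k) x)) (M N : ℕ) :
    ‖VV T x M - VV T x N‖ ^ 2 ≤ ∫ z : Circle, ‖AA M z - AA N z‖ ^ 2 ∂μ := by
  have := sp_bound T hT x μ hμ (M+N+1) (fun i => cf M i - cf N i)
  simp_rw [← smul_eq_mul (a := cf M _ - cf N _), sub_smul, Finset.sum_sub_distrib] at this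
  simp_rw [sum_cf _ (show N < M + N + 1 by omega), sum_cf _ (show M < M + N + 1 by omega)] at this
  exact this

lemma AA_bound (N : ℕ) (z : Circle) : ‖AA N z‖ ≤ Real.log 4 + 4 := by
  rcases Nat.eq_zero_or_pos N with rfl | hN
  · simp [AA]; positivity
  have h1 : ‖∑ k ∈ Finset.Icc 1 N, ((vonMangoldt k:ℝ):ℂ) * (z:ℂ)^k‖ ≤ (Real.log 4 + 4) * N := by
    refine (norm_sum_le _ _).trans (le_trans (le_of_eq ?_) (psi_nat_le N))
    have : Finset.Icc 1 N = Finset.Ioc 0 N := by ext; simp [Finset.mem_Icc, Finset.mem_Ioc]; omega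
    rw [this]
    refine Finset.sum_congr rfl fun k _ => ?_
    rw [norm_mul, norm_pow, Circle.norm_coe, one_pow, mul_one, Complex.norm_real, Real.norm_of_nonneg vonMangoldt_nonneg]
  rw [AA, norm_mul, norm_inv, Complex.norm_natCast, inv_mul_le_iff₀ (by exact_mod_cast hN)]
  linarith

lemma AA_conv (z : Circle) : ∃ L : ℂ, Tendsto (fun N => AA N z) atTop (𝓝 L) ∧
    ((¬ ∃ q : ℕ, q ≠ 0 ∧ z ^ q = 1) → L = 0) := by
  by_cases h : ∃ q : ℕ, q ≠ 0 ∧ z ^ q = 1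
  · obtain ⟨q, hq, hz⟩ := h
    have hz' : (z:ℂ) ^ q = 1 := by rw [← Circle.coe_pow, hz, Circle.coe_one]
    obtain ⟨L, hL⟩ := root_conv hq hz'
    exact ⟨L, hL, fun h => (h ⟨q, hq, hz⟩).elim⟩
  · refine ⟨0, ?_, fun _ => rfl⟩
    set α : ℝ := Complex.arg z / (2 * Real.pi) with hα
    have hzα : ee α = (z:ℂ) := by
      have hpi : (Real.pi:ℂ) ≠ 0 := by exact_mod_cast Real.pi_ne_zero
      have := Complex.norm_mul_exp_arg_mul_I (z:ℂ)
      rw [Circle.norm_coe, Complex.ofReal_one, one_mul] at this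
      rw [ee, ← this, hα]
      congr 1
      push_cast
      field_simp
    have hirr : Irrational α := by
      rintro ⟨a, ha⟩
      apply h
      refine ⟨a.den, a.den_nz, ?_⟩
      apply Circle.ext
      rw [Circle.coe_pow, ← hzα, Circle.coe_one, ee, ← Complex.exp_nat_mul, ← ha, Complex.exp_eq_one_iff]
      refine ⟨a.num, ?_⟩
      have : (a.den : ℂ) * ((a:ℝ):ℂ) = a.num := by
        have := Rat.den_mul_eq_num a
        exact_mod_cast this
      push_cast at this ⊢
      linear_combination (2 * Real.pi * Complex.I) * this
    have := vinogradov hirr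
    rw [hzα] at this
    exact this

lemma AA_cont (N : ℕ) : Continuous (fun z : Circle => AA N z) := by
  unfold AA; fun_prop

theorem VV_conv [CompleteSpace H] (T : H →L[ℂ] H) (hT : ‖T‖ ≤ 1) (x : H) :
    ∃ y, Tendsto (VV T x) atTop (𝓝 y) := by
  obtain ⟨μ, hfin, hμ⟩ := exists_spectral_measure T hT x
  apply cauchySeq_tendsto_of_complete
  rw [cauchySeq_iff_tendsto_dist_atTop_0]
  have h0 : Tendsto (fun n : ℕ × ℕ => ∫ z : Circle, ‖AA n.1 z - AA n.2 z‖ ^ 2 ∂μ) atTop (𝓝 (∫ z : Circle, (0:ℝ) ∂μ)) := by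
    apply tendsto_integral_filter_of_dominated_convergence (fun _ => (2 * (Real.log 4 + 4)) ^ 2)
    · exact Eventually.of_forall fun n => (((AA_cont n.1).sub (AA_cont n.2)).norm.pow 2).aestronglyMeasurable
    · refine Eventually.of_forall fun n => Eventually.of_forall fun z => ?_
      rw [Real.norm_of_nonneg (by positivity)]
      apply pow_le_pow_left₀ (norm_nonneg _)
      have := norm_sub_le (AA n.1 z) (AA n.2 z)
      linarith [AA_bound n.1 z, AA_bound n.2 z]
    · exact integrable_const _
    · refine Eventually.of_forall fun z => ?_
      obtain ⟨L, hL, -⟩ := AA_conv z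
      rw [← prod_atTop_atTop_eq]
      have := ((hL.comp tendsto_fst).sub (hL.comp (tendsto_snd (f := atTop)))).norm.pow 2
      simpa using this
  rw [integral_zero] at h0
  have h1 := h0.sqrt
  rw [Real.sqrt_zero] at h1
  refine squeeze_zero (fun _ => dist_nonneg) (fun n => ?_) h1
  rw [dist_eq_norm]
  exact Real.le_sqrt_of_sq_le (VV_sub_bound T hT x μ hμ n.1 n.2)

lemma VV_zero (T : H →L[ℂ] H) (hT : ‖T‖ ≤ 1) (x : H) (μ : Measure Circle) [IsFiniteMeasure μ]
    (hμ : ∀ k : ℕ, ∫ z : Circle, (z:ℂ) ^ k ∂μ = inner ℂ x ((T ^ k) x))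
    (hroot : ∀ z : Circle, (∃ q : ℕ, q ≠ 0 ∧ z ^ q = 1) → μ {z} = 0) :
    Tendsto (VV T x) atTop (𝓝 0) := by
  have hae : ∀ᵐ z ∂μ, ¬ ∃ q : ℕ, q ≠ 0 ∧ z ^ q = 1 := by
    have hc : ({z : Circle | ∃ q : ℕ, q ≠ 0 ∧ z ^ q = 1}).Countable := by
      have : {z : Circle | ∃ q : ℕ, q ≠ 0 ∧ z ^ q = 1} = ⋃ q : ℕ, {z : Circle | q ≠ 0 ∧ z ^ q = 1} := by
        ext z; simp
      rw [this]
      apply Set.countable_iUnion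
      intro q
      apply Set.Finite.countable
      rcases eq_or_ne q 0 with rfl | hq
      · simp
      · apply Set.Finite.of_finite_image (f := fun z : Circle => (z:ℂ)) _ (Circle.coe_injective.injOn)
        apply (Polynomial.nthRoots q (1:ℂ)).toFinset.finite_toSet.subset
        rintro _ ⟨z, ⟨_, hz⟩, rfl⟩
        simp only [Finset.mem_coe, Multiset.mem_toFinset]
        rw [Polynomial.mem_nthRoots (Nat.pos_of_ne_zero hq), ← Circle.coe_pow, hz, Circle.coe_one]
    rw [ae_iff]
    simp only [not_not]
    rw [← Set.biUnion_of_singleton {z : Circle | ∃ q : ℕ, q ≠ 0 ∧ z ^ q = 1}]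
    rw [measure_biUnion_null_iff hc]
    exact hroot
  have h0 : Tendsto (fun n : ℕ => ∫ z : Circle, ‖AA n z‖ ^ 2 ∂μ) atTop (𝓝 (∫ z : Circle, (0:ℝ) ∂μ)) := by
    apply tendsto_integral_filter_of_dominated_convergence (fun _ => (Real.log 4 + 4) ^ 2)
    · exact Eventually.of_forall fun n => ((AA_cont n).norm.pow 2).aestronglyMeasurable
    · refine Eventually.of_forall fun n => Eventually.of_forall fun z => ?_
      rw [Real.norm_of_nonneg (by positivity)]
      exact pow_le_pow_left₀ (norm_nonneg _) (AA_bound n z) 2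
    · exact integrable_const _
    · filter_upwards [hae] with z hz
      obtain ⟨L, hL, hL0⟩ := AA_conv z
      rw [hL0 hz] at hL
      simpa using hL.norm.pow 2
  rw [integral_zero] at h0
  have h1 := h0.sqrt
  rw [Real.sqrt_zero] at h1
  rw [tendsto_zero_iff_norm_tendsto_zero]
  refine squeeze_zero (fun _ => norm_nonneg _) (fun n => ?_) h1
  exact Real.le_sqrt_of_sq_le (VV_bound T hT x μ hμ n)

end
end PNT

namespace PNT
open Filter Topology MeasureTheory ComplexConjugate ArithmeticFunction

section
variable {H : Type*} [NormedAddCommGroup H] [InnerProductSpace ℂ H] [CompleteSpace H]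

lemma inner_fix (f : H →L[ℂ] H) (hf : ‖f‖ ≤ 1) (e : H) (he : f e = e) (v : H) :
    inner ℂ (f v) e = inner ℂ v e := by
  have h : (ContinuousLinearMap.adjoint f) e = e := by
    have h1 : ‖(ContinuousLinearMap.adjoint f) e - e‖ ^ 2 ≤ 0 := by
      rw [norm_sub_sq (𝕜 := ℂ), ContinuousLinearMap.adjoint_inner_left, he, inner_self_eq_norm_sq]
      have h2 : ‖(ContinuousLinearMap.adjoint f) e‖ ≤ ‖e‖ := by
        refine (ContinuousLinearMap.le_opNorm _ _).trans ?_
        rw [LinearIsometryEquiv.norm_map]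
        exact mul_le_of_le_one_left (norm_nonneg _) hf
      have := pow_le_pow_left₀ (norm_nonneg _) h2 2
      linarith
    have h3 : ‖(ContinuousLinearMap.adjoint f) e - e‖ = 0 := by
      have := sq_nonneg ‖(ContinuousLinearMap.adjoint f) e - e‖
      exact pow_eq_zero_iff (two_ne_zero) |>.1 (le_antisymm h1 this)
    exact sub_eq_zero.1 (norm_eq_zero.1 h3)
  rw [← ContinuousLinearMap.adjoint_inner_right, h]

lemma inner_fix_pow (f : H →L[ℂ] H) (hf : ‖f‖ ≤ 1) (e : H) (he : f e = e) (v : H) (n : ℕ) :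
    inner ℂ ((f ^ n) v) e = inner ℂ v e := by
  induction n with
  | zero => simp
  | succ n ih => rw [pow_succ', mul_apply_eq_comp, inner_fix f hf e he, ih]

lemma geom_avg (w ω : Circle) : Tendsto (fun N : ℕ => (N:ℂ)⁻¹ * ∑ k ∈ Finset.range N, (conj (ω:ℂ) * (w:ℂ)) ^ k)
    atTop (𝓝 (Set.indicator {ω} (fun _ => (1:ℂ)) w)) := by
  have hω : conj (ω:ℂ) * ω = 1 := by
    rw [mul_comm, Complex.mul_conj, Complex.normSq_eq_norm_sq, Circle.norm_coe]; simp
  by_cases h : w = ω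
  · subst h
    rw [Set.indicator_of_mem (Set.mem_singleton _), hω]
    refine tendsto_const_nhds.congr' ?_
    filter_upwards [eventually_gt_atTop 0] with N hN
    have : (N:ℂ) ≠ 0 := by exact_mod_cast hN.ne'
    simp [this]
  · rw [Set.indicator_of_notMem (by simpa using h)]
    set u := conj (ω:ℂ) * (w:ℂ) with hu
    have hu1 : u ≠ 1 := by
      intro h1
      apply h
      apply Circle.ext
      have : (ω:ℂ) * u = w := by
        rw [hu]; linear_combination (w:ℂ) * hω
      rw [← this, h1, mul_one]
    have hun : ‖u‖ = 1 := by rw [hu, norm_mul, RCLike.norm_conj, Circle.norm_coe, Circle.norm_coe, one_mul]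
    have hlim : Tendsto (fun N : ℕ => (2 / ‖u - 1‖) / (N:ℝ)) atTop (𝓝 0) := tendsto_const_div_atTop_nhds_zero_nat _
    refine squeeze_zero_norm (fun N => ?_) hlim
    rw [geom_sum_eq hu1, norm_mul, norm_inv, Complex.norm_natCast, norm_div, div_eq_inv_mul _ (N:ℝ)]
    have : ‖u ^ N - 1‖ ≤ 2 := by
      refine (norm_sub_le _ _).trans ?_
      rw [norm_pow, hun]; norm_num
    gcongr

lemma mass_zero (T : H →L[ℂ] H) (hT : ‖T‖ ≤ 1) (x : H) (μ : Measure Circle) [IsFiniteMeasure μ]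
    (hμ : ∀ k : ℕ, ∫ z : Circle, (z:ℂ) ^ k ∂μ = inner ℂ x ((T ^ k) x))
    (n : ℕ → ℕ)
    (hn : ∀ z : H, Tendsto (fun j : ℕ => (inner ℂ ((T ^ n j) x) z : ℂ)) atTop (𝓝 0)) (ω : Circle) :
    μ {ω} = 0 := by
  let f : H →L[ℂ] H := (conj (ω:ℂ)) • T
  have hf : ‖f‖ ≤ 1 := by
    refine (norm_smul_le _ _).trans ?_
    rw [RCLike.norm_conj, Circle.norm_coe, one_mul]; exact hT
  have hpow : ∀ k, f ^ k = (conj (ω:ℂ)) ^ k • T ^ k := fun k => smul_pow _ _ _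
  have hB := f.tendsto_birkhoffAverage_orthogonalProjection hf x
  set e := (f.eqLocus (1 : H →L[ℂ] H)).orthogonalProjectionOnto x with hedef
  have he : f e = e := by
    have := e.2
    simpa using this
  have hxe : inner ℂ x (e:H) = (0:ℂ) := by
    have h1 := (hn e).norm
    have h2 : ∀ j, ‖(inner ℂ ((T ^ n j) x) (e:H) : ℂ)‖ = ‖(inner ℂ x (e:H) : ℂ)‖ := by
      intro j
      rw [← inner_fix_pow f hf e he x (n j), hpow, _root_.smul_apply, inner_smul_left, norm_mul, RCLike.norm_conj,
        norm_pow, RCLike.norm_conj, Circle.norm_coe, one_pow, one_mul]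
    simp_rw [h2] at h1
    have := tendsto_nhds_unique h1 tendsto_const_nhds
    simpa using this.symm
  have hcoe : ∀ (k : ℕ) (v : H), f^[k] v = (f ^ k) v := by
    intro k
    induction k with
    | zero => intro v; simp
    | succ k ih => intro v; rw [Function.iterate_succ_apply, ih, pow_succ, mul_apply_eq_comp]
  have h3 : ∀ N : ℕ, ∫ z : Circle, (N:ℂ)⁻¹ * ∑ k ∈ Finset.range N, (conj (ω:ℂ) * (z:ℂ)) ^ k ∂μ
      = inner ℂ x (birkhoffAverage ℂ f _root_.id N x) := by
    intro N
    rw [integral_const_mul, integral_finsetSum]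
    · rw [birkhoffAverage, birkhoffSum, inner_smul_right, inner_sum]
      congr 1
      refine Finset.sum_congr rfl fun k _ => ?_
      simp_rw [mul_pow]
      rw [integral_const_mul, hμ, id, hcoe, hpow, _root_.smul_apply, inner_smul_right]
    · intro k _
      apply Continuous.integrable_of_hasCompactSupport
      · fun_prop
      · exact HasCompactSupport.of_compactSpace _
  have h4 : Tendsto (fun N : ℕ => ∫ z : Circle, (N:ℂ)⁻¹ * ∑ k ∈ Finset.range N, (conj (ω:ℂ) * (z:ℂ)) ^ k ∂μ)
      atTop (𝓝 0) := by
    simp_rw [h3]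
    rw [← hxe]
    exact tendsto_const_nhds.inner hB
  have h5 : Tendsto (fun N : ℕ => ∫ z : Circle, (N:ℂ)⁻¹ * ∑ k ∈ Finset.range N, (conj (ω:ℂ) * (z:ℂ)) ^ k ∂μ)
      atTop (𝓝 (∫ z : Circle, Set.indicator {ω} (fun _ => (1:ℂ)) z ∂μ)) := by
    apply tendsto_integral_of_dominated_convergence (fun _ => (1:ℝ))
    · intro N
      exact Continuous.aestronglyMeasurable (by fun_prop)
    · exact integrable_const _
    · refine fun N => Eventually.of_forall fun z => ?_
      rcases Nat.eq_zero_or_pos N with rfl | hN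
      · simp
      rw [norm_mul, norm_inv, Complex.norm_natCast, inv_mul_le_iff₀ (by exact_mod_cast hN)]
      refine (norm_sum_le _ _).trans ?_
      simp_rw [norm_pow, norm_mul, RCLike.norm_conj, Circle.norm_coe]
      simp
    · exact Eventually.of_forall fun z => geom_avg z ω
  have h6 := tendsto_nhds_unique h5 h4
  rw [integral_indicator (measurableSet_singleton _), integral_const] at h6
  simp only [Complex.real_smul, mul_one, Complex.ofReal_eq_zero] at h6
  rw [measureReal_restrict_apply_univ, measureReal_eq_zero_iff] at h6
  exact h6

theorem VV_flight (T : H →L[ℂ] H) (hT : ‖T‖ ≤ 1) (x : H) (n : ℕ → ℕ)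
    (hn : ∀ z : H, Tendsto (fun j : ℕ => (inner ℂ ((T ^ n j) x) z : ℂ)) atTop (𝓝 0)) :
    Tendsto (VV T x) atTop (𝓝 0) := by
  obtain ⟨μ, hfin, hμ⟩ := exists_spectral_measure T hT x
  exact VV_zero T hT x μ hμ fun z _ => mass_zero T hT x μ hμ n hn z

end
end PNT

namespace PNT
open Filter Topology ArithmeticFunction

lemma sum_nth_prime {M : Type*} [AddCommMonoid M] (f : ℕ → M) (N : ℕ) :
    ∑ j ∈ Finset.range (Nat.primeCounting N), f (Nat.nth Nat.Prime j) = ∑ p ∈ Nat.primesLE N, f p := by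
  have h : ∀ K, ∑ j ∈ Finset.range (Nat.count Nat.Prime K), f (Nat.nth Nat.Prime j)
      = ∑ p ∈ Finset.range K with p.Prime, f p := by
    intro K
    induction K with
    | zero => simp
    | succ K ih =>
      rw [Finset.sum_filter, Finset.sum_range_succ, ← Finset.sum_filter, ← ih, Nat.count_succ]
      split_ifs with hK
      · rw [Finset.sum_range_succ, Nat.nth_count hK]
      · simp
  have h2 : Nat.primesLE N = {p ∈ Finset.range (N+1) | p.Prime} := by
    ext p; simp [Nat.mem_primesLE, Nat.lt_succ_iff]
  rw [h2, ← h (N+1)]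
  rfl

lemma sqrt_div_tendsto : Tendsto (fun N : ℕ => √(N:ℝ) / N) atTop (𝓝 0) := by
  have : ∀ N : ℕ, √(N:ℝ) / N = (√(N:ℝ))⁻¹ := fun N => by rw [Real.sqrt_div_self', one_div]
  simp_rw [this]
  exact tendsto_inv_atTop_zero.comp (Real.tendsto_sqrt_atTop.comp tendsto_natCast_atTop_atTop)

lemma psi_theta_div : Tendsto (fun N : ℕ => (Chebyshev.psi N - Chebyshev.theta N) / N) atTop (𝓝 0) := by
  obtain ⟨C, hC⟩ := Chebyshev.psi_sub_theta_le_mul_sqrt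
  have h := sqrt_div_tendsto.const_mul C
  rw [mul_zero] at h
  refine squeeze_zero (fun N => ?_) (fun N => ?_) h
  · exact div_nonneg (sub_nonneg.2 (Chebyshev.theta_le_psi _)) (Nat.cast_nonneg _)
  · rw [← mul_div_assoc]
    exact div_le_div_of_nonneg_right (hC N) (Nat.cast_nonneg _)

lemma theta_div : Tendsto (fun N : ℕ => Chebyshev.theta N / N) atTop (𝓝 1) := by
  have h := PNT_psi.sub psi_theta_div
  rw [sub_zero] at h
  refine h.congr fun N => ?_
  have : Chebyshev.psi N = ∑ k ∈ Finset.Icc 1 N, vonMangoldt k := by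
    rw [Chebyshev.psi, Nat.floor_natCast]
    rfl
  rw [← this]; ring

section
variable {H : Type*} [NormedAddCommGroup H] [NormedSpace ℂ H]

lemma transfer_log (u : ℕ → H) (B : ℝ) (hu : ∀ k, ‖u k‖ ≤ B) (y : H)
    (h : Tendsto (fun N : ℕ => (N:ℂ)⁻¹ • ∑ k ∈ Finset.Icc 1 N, ((vonMangoldt k:ℝ):ℂ) • u k) atTop (𝓝 y)) :
    Tendsto (fun N : ℕ => (N:ℂ)⁻¹ • ∑ p ∈ Nat.primesLE N, ((Real.log p:ℝ):ℂ) • u p) atTop (𝓝 y) := by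
  have hd : Tendsto (fun N : ℕ => (N:ℂ)⁻¹ • ∑ k ∈ Finset.Ioc 0 N with ¬ k.Prime, ((vonMangoldt k:ℝ):ℂ) • u k) atTop (𝓝 0) := by
    have h0 := psi_theta_div.mul_const B
    rw [zero_mul] at h0
    refine squeeze_zero_norm (fun N => ?_) h0
    rw [norm_smul, norm_inv, Complex.norm_natCast, Chebyshev.psi_sub_theta_eq_sum_not_prime, Nat.floor_natCast,
      div_mul_eq_mul_div, div_eq_inv_mul, Finset.sum_mul]
    refine mul_le_mul_of_nonneg_left ?_ (by positivity)
    refine (norm_sum_le _ _).trans (Finset.sum_le_sum fun k _ => ?_)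
    rw [norm_smul, Complex.norm_real, Real.norm_of_nonneg vonMangoldt_nonneg]
    exact mul_le_mul_of_nonneg_left (hu k) vonMangoldt_nonneg
  have h1 := h.sub hd
  rw [sub_zero] at h1
  refine h1.congr fun N => ?_
  rw [← smul_sub]
  congr 1
  have hI : Finset.Icc 1 N = Finset.Ioc 0 N := rfl
  rw [hI, ← Finset.sum_filter_add_sum_filter_not (Finset.Ioc 0 N) Nat.Prime, add_sub_cancel_right]
  have h2 : Nat.primesLE N = {p ∈ Finset.Ioc 0 N | p.Prime} := by
    ext p
    simp only [Nat.mem_primesLE, Finset.mem_filter, Finset.mem_Ioc]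
    exact ⟨fun h => ⟨⟨h.2.pos, h.1⟩, h.2⟩, fun h => ⟨h.1.2, h.2⟩⟩
  rw [h2]
  refine Finset.sum_congr rfl fun p hp => ?_
  rw [vonMangoldt_apply_prime (Finset.mem_filter.1 hp).2]

lemma pi_err : Tendsto (fun N : ℕ => (Nat.primeCounting N - Chebyshev.theta N / Real.log N) * (Real.log N / N)) atTop (𝓝 0) := by
  obtain ⟨C, hC⟩ := (Chebyshev.primeCounting_sub_theta_div_log_isBigO.comp_tendsto tendsto_natCast_atTop_atTop).bound
  have hl : Tendsto (fun N : ℕ => Real.log N) atTop atTop := Real.tendsto_log_atTop.comp tendsto_natCast_atTop_atTop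
  have h0 := (tendsto_inv_atTop_zero.comp hl).const_mul C
  rw [mul_zero] at h0
  refine squeeze_zero_norm' ?_ h0
  filter_upwards [hC, eventually_gt_atTop 1] with N h1 h2
  simp only [Function.comp, Nat.floor_natCast] at h1 ⊢
  have hN : (1:ℝ) < N := by exact_mod_cast h2
  have hL : 0 < Real.log N := Real.log_pos hN
  rw [Real.norm_of_nonneg (by positivity : (0:ℝ) ≤ N / Real.log N ^ 2)] at h1
  rw [norm_mul, Real.norm_of_nonneg (by positivity : (0:ℝ) ≤ Real.log N / N)]
  refine (mul_le_mul_of_nonneg_right h1 (by positivity)).trans (le_of_eq ?_)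
  field_simp

lemma transfer_pi (u : ℕ → H) (B : ℝ) (hu : ∀ k, ‖u k‖ ≤ B) (y : H)
    (h : Tendsto (fun N : ℕ => (N:ℂ)⁻¹ • ∑ p ∈ Nat.primesLE N, ((Real.log p:ℝ):ℂ) • u p) atTop (𝓝 y)) :
    Tendsto (fun N : ℕ => ((Nat.primeCounting N : ℕ):ℂ)⁻¹ • ∑ p ∈ Nat.primesLE N, u p) atTop (𝓝 y) := by
  have hth : Tendsto (fun N : ℕ => ((Chebyshev.theta N / N : ℝ):ℂ) • y) atTop (𝓝 y) := by
    have := ((Complex.continuous_ofReal.tendsto 1).comp theta_div).smul_const y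
    simpa using this
  have hE1 := (h.sub hth).norm
  rw [sub_self, norm_zero] at hE1
  have hE := (hE1.const_mul 2).add (pi_err.const_mul (2 * (B + ‖y‖)))
  rw [mul_zero, mul_zero, add_zero] at hE
  rw [tendsto_iff_norm_sub_tendsto_zero]
  refine squeeze_zero' (Eventually.of_forall fun _ => norm_nonneg _) ?_ hE
  have hhalf : ∀ᶠ N : ℕ in atTop, (1/2:ℝ) < Chebyshev.theta N / N :=
    theta_div.eventually_const_lt (by norm_num)
  filter_upwards [hhalf, eventually_gt_atTop 1] with N h1 h2
  have hN : (1:ℝ) < N := by exact_mod_cast h2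
  have hL : 0 < Real.log N := Real.log_pos hN
  set P : ℝ := (Nat.primeCounting N : ℝ) with hP
  set Θ := Chebyshev.theta N with hΘ
  set S := ∑ p ∈ Nat.primesLE N, ((Real.log p:ℝ):ℂ) • u p with hS
  set G := ∑ p ∈ Nat.primesLE N, u p with hG
  have hΘP : Θ ≤ P * Real.log N := Chebyshev.theta_le_pi_mul_log N
  have hΘN : N / 2 ≤ Θ := by
    rw [lt_div_iff₀ (by linarith)] at h1; linarith
  have hPpos : 0 < P := by
    by_contra hc
    have : P * Real.log N ≤ 0 := mul_nonpos_of_nonpos_of_nonneg (not_lt.1 hc) hL.le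
    linarith
  have hPinv : P⁻¹ ≤ 2 * (Real.log N / N) := by
    rw [inv_le_iff_one_le_mul₀ hPpos, mul_assoc, div_mul_eq_mul_div, ← mul_div_assoc, le_div_iff₀ (by linarith)]
    linarith
  have hcard : (Nat.primesLE N).card = Nat.primeCounting N := Nat.primesLE_card_eq_primeCounting N
  have hΘs : Θ = ∑ p ∈ Nat.primesLE N, Real.log p := Chebyshev.theta_eq_sum_primesLE_log N
  have hid : G - (P:ℂ) • y = (((Real.log N)⁻¹ : ℝ) : ℂ) • (S - (Θ:ℂ) • y) +
      ∑ p ∈ Nat.primesLE N, ((1 - Real.log p / Real.log N : ℝ):ℂ) • (u p - y) := by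
    have e1 : S - (Θ:ℂ) • y = ∑ p ∈ Nat.primesLE N, ((Real.log p:ℝ):ℂ) • (u p - y) := by
      simp_rw [smul_sub, Finset.sum_sub_distrib, ← Finset.sum_smul]
      rw [hΘs, Complex.ofReal_sum]
    have e2 : G - (P:ℂ) • y = ∑ p ∈ Nat.primesLE N, (u p - y) := by
      rw [Finset.sum_sub_distrib, Finset.sum_const, hcard, hP, Complex.ofReal_natCast, Nat.cast_smul_eq_nsmul]
    rw [e1, e2, Finset.smul_sum, ← Finset.sum_add_distrib]
    refine Finset.sum_congr rfl fun p _ => ?_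
    rw [smul_smul, ← add_smul, ← Complex.ofReal_mul, ← Complex.ofReal_add]
    have : (Real.log N)⁻¹ * Real.log p + (1 - Real.log p / Real.log N) = 1 := by
      rw [div_eq_inv_mul]; ring
    rw [this, Complex.ofReal_one, one_smul]
  have hsec : ‖∑ p ∈ Nat.primesLE N, ((1 - Real.log p / Real.log N : ℝ):ℂ) • (u p - y)‖ ≤
      (P - Θ / Real.log N) * (B + ‖y‖) := by
    have : P - Θ / Real.log N = ∑ p ∈ Nat.primesLE N, (1 - Real.log p / Real.log N) := by
      rw [Finset.sum_sub_distrib, ← Finset.sum_div, ← hΘs, Finset.sum_const, hcard]; simp [hP]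
    rw [this, Finset.sum_mul]
    refine (norm_sum_le _ _).trans (Finset.sum_le_sum fun p hp => ?_)
    have hp' := Nat.mem_primesLE.1 hp
    have h3 : 0 ≤ 1 - Real.log p / Real.log N := by
      rw [sub_nonneg, div_le_one hL]
      exact Real.log_le_log (by exact_mod_cast hp'.2.pos) (by exact_mod_cast hp'.1)
    rw [norm_smul, Complex.norm_real, Real.norm_of_nonneg h3]
    refine mul_le_mul_of_nonneg_left ?_ h3
    exact (norm_sub_le _ _).trans (by linarith [hu p])
  have hSN : ‖S - (Θ:ℂ) • y‖ = N * ‖(N:ℂ)⁻¹ • S - ((Θ / N : ℝ):ℂ) • y‖ := by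
    have hNc : (N:ℂ) ≠ 0 := by exact_mod_cast (by omega : N ≠ 0)
    have : S - (Θ:ℂ) • y = (N:ℂ) • ((N:ℂ)⁻¹ • S - ((Θ / N : ℝ):ℂ) • y) := by
      rw [smul_sub, smul_smul, smul_smul, mul_inv_cancel₀ hNc, one_smul]
      congr 2
      rw [Complex.ofReal_div, Complex.ofReal_natCast]
      field_simp
    conv_lhs => rw [this, norm_smul, Complex.norm_natCast]
  have hBn : 0 ≤ B + ‖y‖ := add_nonneg ((norm_nonneg _).trans (hu 0)) (norm_nonneg _)
  have hfin : ((Nat.primeCounting N : ℕ):ℂ)⁻¹ • G - y = ((P:ℂ))⁻¹ • (G - (P:ℂ) • y) := by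
    have hPc : (P:ℂ) ≠ 0 := by exact_mod_cast hPpos.ne'
    rw [smul_sub, smul_smul, inv_mul_cancel₀ hPc, one_smul, hP, Complex.ofReal_natCast]
  rw [hfin, norm_smul, norm_inv, Complex.norm_real, Real.norm_of_nonneg hPpos.le]
  have hbd : ‖G - (P:ℂ) • y‖ ≤ (Real.log N)⁻¹ * (N * ‖(N:ℂ)⁻¹ • S - ((Θ / N : ℝ):ℂ) • y‖) +
      (P - Θ / Real.log N) * (B + ‖y‖) := by
    rw [hid]
    refine (norm_add_le _ _).trans (add_le_add ?_ hsec)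
    rw [norm_smul, hSN, Complex.norm_real, Real.norm_of_nonneg (inv_nonneg.2 hL.le)]
  calc P⁻¹ * ‖G - (P:ℂ) • y‖ ≤ (2 * (Real.log N / N)) * ((Real.log N)⁻¹ * (N * ‖(N:ℂ)⁻¹ • S - ((Θ / N : ℝ):ℂ) • y‖) +
      (P - Θ / Real.log N) * (B + ‖y‖)) := by
        apply mul_le_mul hPinv hbd (norm_nonneg _) (by positivity)
    _ = _ := by
        have hN0 : (N:ℝ) ≠ 0 := by linarith
        have : (2 * (Real.log N / N)) * ((Real.log N)⁻¹ * (N * ‖(N:ℂ)⁻¹ • S - ((Θ / N : ℝ):ℂ) • y‖))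
          = 2 * ‖(N:ℂ)⁻¹ • S - ((Θ / N : ℝ):ℂ) • y‖ := by field_simp
        rw [mul_add, this]; ring

lemma transfer_nth (u : ℕ → H) (B : ℝ) (hu : ∀ k, ‖u k‖ ≤ B) (y : H)
    (h : Tendsto (fun N : ℕ => (N:ℂ)⁻¹ • ∑ p ∈ Nat.primesLE N, ((Real.log p:ℝ):ℂ) • u p) atTop (𝓝 y)) :
    Tendsto (fun n : ℕ => (n:ℂ)⁻¹ • ∑ j ∈ Finset.range n, u (Nat.nth Nat.Prime j)) atTop (𝓝 y) := by
  have h1 := transfer_pi u B hu y h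
  rw [← tendsto_add_atTop_iff_nat 1]
  have h2 := h1.comp (Nat.nth_strictMono Nat.infinite_setOfPred_prime).tendsto_atTop
  refine h2.congr fun n => ?_
  have h3 : Nat.primeCounting (Nat.nth Nat.Prime n) = n + 1 := by
    rw [Nat.primeCounting, Nat.primeCounting', Nat.count_nth_succ_of_infinite Nat.infinite_setOfPred_prime]
  simp only [Function.comp]
  rw [← sum_nth_prime, h3]
end
end PNT


open Filter Finset

/-- Let `T` be a contraction on a complex Hilbert space `H`. Then for every
`x ∈ H` the averages along the primes `(1/n) ∑_{j=1}^n T^{p_j} x` converge in norm; the limit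
equals `lim_N (1/N) ∑_{j=1}^{π(N)} (log p_j) T^{p_j} x = lim_N (1/N) ∑_{k=1}^N Λ(k) T^k x`,
and it is `0` whenever `x` is a flight vector of `T` (i.e. `T^{n_j} x → 0` weakly along some
strictly increasing `(n_j)`). -/
theorem stmt13 {H : Type*} [NormedAddCommGroup H] [InnerProductSpace ℂ H] [CompleteSpace H]
    (T : H →L[ℂ] H) (hT : ‖T‖ ≤ 1) (x : H) :
    ∃ y : H,
      Tendsto (fun n : ℕ =>
          (n : ℂ)⁻¹ • ∑ j ∈ range n, (T ^ (Nat.nth Nat.Prime j)) x) atTop (nhds y) ∧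
      Tendsto (fun N : ℕ =>
          (N : ℂ)⁻¹ • ∑ j ∈ range (Nat.primeCounting N),
            ((Real.log (Nat.nth Nat.Prime j) : ℝ) : ℂ) • (T ^ (Nat.nth Nat.Prime j)) x)
        atTop (nhds y) ∧
      Tendsto (fun N : ℕ =>
          (N : ℂ)⁻¹ • ∑ k ∈ Icc 1 N, ((ArithmeticFunction.vonMangoldt k : ℝ) : ℂ) • (T ^ k) x)
        atTop (nhds y) ∧
      ((∃ n : ℕ → ℕ, StrictMono n ∧
          ∀ z : H, Tendsto (fun j : ℕ => (inner ℂ ((T ^ n j) x) z : ℂ)) atTop (nhds 0)) →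
        y = 0) := by
  have hpow : ∀ k : ℕ, ‖(T ^ k) x‖ ≤ ‖x‖ := by
    intro k
    induction k with
    | zero => simp
    | succ k ih =>
      rw [pow_succ', mul_apply_eq_comp]
      refine (T.le_opNorm _).trans ?_
      exact (mul_le_of_le_one_left (norm_nonneg _) hT).trans ih
  obtain ⟨y, hy⟩ := PNT.VV_conv T hT x
  have h2 := PNT.transfer_log (fun k => (T ^ k) x) ‖x‖ hpow y hy
  refine ⟨y, PNT.transfer_nth (fun k => (T ^ k) x) ‖x‖ hpow y h2, ?_, hy, ?_⟩
  · refine h2.congr fun N => ?_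
    rw [← PNT.sum_nth_prime (fun p => ((Real.log p : ℝ) : ℂ) • (T ^ p) x)]
  · rintro ⟨n, -, hn⟩
    exact tendsto_nhds_unique hy (PNT.VV_flight T hT x n hn)
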